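/- Let n ≥ 2, N ≥ 2, T > 0, m_1,…,m_N > 0, and let V(t, x_1,…,x_N) = (1/2) Σ_{1≤i≠j≤N} V_{ij}(t, x_i − x_j) where each V_{ij} : ℝ × (ℝ^n \ {0}) → ℝ is twice continuously differentiable and satisfies: (V3) V_{ij}(t, ξ) → −∞ uniformly in t as |ξ| → 0; (V4) V_{ij}(t, ξ) ≤ 0 for all t and ξ ≠ 0; (V5) V_{ij} satisfies Gordon's strong force condition uniformly in t: there exist r₀ > 0 and a C¹ function U on {ξ : 0 < |ξ| < r₀} with U(ξ) → −∞ as ξ → 0 and −V_{ij}(t,ξ) ≥ |∇U(ξ)|² for all t and 0 < |ξ| < r₀. Suppose there is a linear isometry g of ℝ^n and an integer s ≥ 1 with g^s = identity, g v ≠ v for every v ≠ 0, and V(t + T/s, g x_1,…,g x_N) = V(t, x_1,…,x_N) for all t and all non-collision configurations. Then the system m_i ẍ_i(t) + ∇_{x_i} V(t, x_1(t),…,x_N(t)) = 0 (i = 1,…,N) has infinitely many pairwise distinct T-periodic non-collision solutions x = (x_1,…,x_N) satisfying the symmetry x_i(t + T/s) = g x_i(t) for all i and t. -/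

import Mathlib

open Finset

/-!
In mass-weighted coordinates the symmetric solutions are the critical points of the action on the
paths `x` over one twisted period `P = T / s` with `x P = g (x 0)`. Since `g` has no nonzero fixed
vector, such a path is determined by its velocity, so the action is a functional of the velocity
whose gradient is a compact perturbation of the identity. By the strong force condition the paths of
bounded action stay in a compact set of non-collision configurations, and the action satisfies the
Palais–Smale condition.

If the critical values were bounded above, finitely many steps of gradient descent would deform
every compact family of paths into paths whose action, and hence whose length, obeys a bound that
does not depend on the family. But for every `k` there is a torus of paths of collinear
configurations such that, by a mod 2 degree argument resting on Kuhn's parity lemma, every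
collision-free deformation of it contains a path on which the relative position of two particles
alternates `k` times between opposite rays. The length of such a path grows linearly in `k`. So
there are solutions of arbitrarily large action, and their number is infinite.
-/

namespace ZhangZhou

/-! ### Kuhn's parity lemma -/

section Kuhn

variable {M L : ℕ}

/-- The mod 2 indicator that the labels `l 0, …, l M` are pairwise distinct, written as a
determinant so that the facets of a labelled simplex can be counted by Laplace expansion. -/
def labelDet (l : Fin (M + 1) → Fin (M + 1)) : ZMod 2 :=
  (Matrix.of fun j a => if l j = a then (1 : ZMod 2) else 0).det

lemma surjective_of_labelDet_ne_zero {l : Fin (M + 1) → Fin (M + 1)} (h : labelDet l ≠ 0) :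
    Function.Surjective l := by
  intro a
  by_contra! hl
  exact h (Matrix.det_eq_zero_of_column_eq_zero a fun j => by simp [hl j])

lemma labelDet_id : labelDet (id : Fin (M + 1) → Fin (M + 1)) = 1 := by
  unfold labelDet
  convert Matrix.det_one (n := Fin (M + 1)) (R := ZMod 2)
  ext i j
  simp [Matrix.one_apply]

lemma sum_labelDet_succAbove (l : Fin (M + 2) → Fin (M + 1)) :
    ∑ j : Fin (M + 2), labelDet (fun i => l (j.succAbove i)) = 0 := by
  -- border the label matrix by a column of ones, which is the sum of the other columns
  let B : Matrix (Fin (M + 2)) (Fin (M + 2)) (ZMod 2) :=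
    Matrix.of fun j a => Fin.cases 1 (fun a' => if l j = a' then (1 : ZMod 2) else 0) a
  have hB : B.det = 0 := by
    rw [← Matrix.exists_mulVec_eq_zero_iff]
    refine ⟨fun _ => 1, fun h => by simpa using congrFun h 0, ?_⟩
    ext j
    simp only [Matrix.mulVec, dotProduct, B]
    rw [Fin.sum_univ_succ]
    simp only [Matrix.of_apply, Fin.cases_zero, Fin.cases_succ, mul_one, sum_ite_eq,
      mem_univ, if_true, Pi.zero_apply]
    decide
  rw [Matrix.det_succ_column_zero] at hB
  rw [← hB]
  refine sum_congr rfl fun j _ => ?_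
  rw [show (-1 : ZMod 2) = 1 by decide, one_pow]
  simp only [B, Matrix.of_apply, Fin.cases_zero, one_mul, labelDet]
  congr 1

/-- The `j`-th vertex of the Kuhn simplex with lowest vertex `v` and direction order `π`: it is
reached from `v` by unit steps in the directions `π 0, …, π (j - 1)`. -/
def kuhnVertex (v : Fin (M + 1) → ℕ) (π : Equiv.Perm (Fin (M + 1))) (j : Fin (M + 2)) :
    Fin (M + 1) → ℕ :=
  fun a => v a + if (π.symm a).val < j.val then 1 else 0

/-- The mod 2 indicator that the facet opposite to the top vertex of a Kuhn simplex carries all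
labels. -/
def lowerFacetDet (lab : (Fin (M + 1) → ℕ) → Fin (M + 1)) (v : Fin (M + 1) → ℕ)
    (π : Equiv.Perm (Fin (M + 1))) : ZMod 2 :=
  labelDet fun i : Fin (M + 1) => lab (kuhnVertex v π i.castSucc)

lemma kuhnVertex_mul_swap {p q : Fin (M + 1)} {j r : Fin (M + 2)} (hp : p.val + 1 = j.val)
    (hq : q.val = j.val) (hr : r ≠ j) (v : Fin (M + 1) → ℕ) (π : Equiv.Perm (Fin (M + 1))) :
    kuhnVertex v (π * Equiv.swap p q) r = kuhnVertex v π r := by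
  have hr : r.val ≠ j.val := fun h => hr (Fin.ext h)
  funext a
  have hsymm : (π * Equiv.swap p q).symm a = Equiv.swap p q (π.symm a) := by
    rw [Equiv.symm_apply_eq]; simp
  simp only [kuhnVertex, hsymm, Equiv.swap_apply_def]
  split_ifs <;> simp_all <;> omega

/-- Facets opposite to an intermediate vertex cancel in pairs, by transposing two consecutive
directions. -/
lemma sum_labelDet_intermediate_facet (lab : (Fin (M + 1) → ℕ) → Fin (M + 1))
    (v : Fin (M + 1) → ℕ) {j : Fin (M + 2)} (h0 : j ≠ 0) (hlast : j ≠ Fin.last _) :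
    ∑ π : Equiv.Perm (Fin (M + 1)), labelDet (fun i => lab (kuhnVertex v π (j.succAbove i)))
      = 0 := by
  have h0' : 0 < j.val := Nat.pos_of_ne_zero fun h => h0 (Fin.ext h)
  have hlast' : j.val < M + 1 := Fin.val_lt_last hlast
  let p : Fin (M + 1) := ⟨j.val - 1, by omega⟩
  let q : Fin (M + 1) := ⟨j.val, hlast'⟩
  have hpq : p ≠ q := fun h => by
    have := congrArg Fin.val h
    simp only [p, q] at this
    omega
  have hswap : ∀ (π : Equiv.Perm (Fin (M + 1))) (i : Fin (M + 1)),
      kuhnVertex v (π * Equiv.swap p q) (j.succAbove i) = kuhnVertex v π (j.succAbove i) :=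
    fun π i => kuhnVertex_mul_swap (Nat.sub_add_cancel h0') rfl (Fin.succAbove_ne j i) v π
  refine sum_involution (fun π _ => π * Equiv.swap p q) (fun π _ => ?_) (fun π _ _ h => ?_)
    (fun π _ => mem_univ _) (fun π _ => by simp [mul_assoc])
  · simp only [hswap]
    exact CharTwo.add_self_eq_zero _
  · exact hpq (Equiv.swap_eq_one_iff.1 (by simpa using h))

/-- The facet opposite to the lowest vertex is the facet opposite to the top vertex of the
adjacent simplex. -/
lemma kuhnVertex_succ (v : Fin (M + 1) → ℕ) (π : Equiv.Perm (Fin (M + 1))) (i : Fin (M + 1)) :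
    kuhnVertex v π i.succ
      = kuhnVertex (v + Pi.single (π 0) 1) (π * finRotate (M + 1)) i.castSucc := by
  funext a
  obtain ⟨x, rfl⟩ := π.surjective a
  obtain ⟨y, rfl⟩ := (finRotate (M + 1)).surjective x
  have hsymm : (π * finRotate (M + 1)).symm (π (finRotate (M + 1) y)) = y := by
    rw [Equiv.symm_apply_eq]; simp
  simp only [kuhnVertex, Pi.add_apply, hsymm, Equiv.symm_apply_apply, Pi.single_apply,
    EmbeddingLike.apply_eq_iff_eq]
  induction y using Fin.lastCases with
  | last =>
    rw [finRotate_last]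
    simp
    omega
  | cast y =>
    have hrotate : finRotate (M + 1) y.castSucc = y.succ := by
      ext
      rw [coe_finRotate_of_ne_last (Fin.castSucc_lt_last y).ne]
      simp
    rw [hrotate]
    simp [Fin.succ_ne_zero]

/-- The grid point with coordinate `q` in direction `a` and coordinates `R` in the other
directions. -/
def gridPoint (a : Fin (M + 1)) (q : ℕ) (R : Fin M → Fin L) : Fin (M + 1) → ℕ :=
  a.insertNth (α := fun _ => ℕ) q fun b => R b

@[simp] lemma gridPoint_apply_same (a : Fin (M + 1)) (q : ℕ) (R : Fin M → Fin L) :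
    gridPoint a q R a = q := by simp [gridPoint]

@[simp] lemma gridPoint_apply_succAbove (a : Fin (M + 1)) (q : ℕ) (R : Fin M → Fin L)
    (b : Fin M) : gridPoint a q R (a.succAbove b) = R b := by simp [gridPoint]

lemma sum_grid_sub {G : Type*} [AddCommGroup G] (h : (Fin (M + 1) → ℕ) → G) (a : Fin (M + 1)) :
    ∑ v : Fin (M + 1) → Fin L, (h ((fun b => (v b : ℕ)) + Pi.single a 1) - h (fun b => (v b : ℕ)))
      = ∑ R : Fin M → Fin L, (h (gridPoint a L R) - h (gridPoint a 0 R)) := by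
  rw [← (Fin.insertNthEquiv (fun _ => Fin L) a).sum_comp, Fintype.sum_prod_type, sum_comm]
  refine sum_congr rfl fun R _ => ?_
  have hpoint : ∀ q : Fin L,
      (fun b => ((Fin.insertNthEquiv (fun _ => Fin L) a (q, R)) b : ℕ)) = gridPoint a q R := by
    intro q
    funext b
    induction b using Fin.succAboveCases a <;> simp
  have hnext : ∀ q : ℕ, gridPoint a q R + Pi.single a 1 = gridPoint a (q + 1) R := by
    intro q
    funext b
    induction b using Fin.succAboveCases a <;> simp
  simp only [hpoint, hnext]
  rw [Fin.sum_univ_eq_sum_range (fun q => h (gridPoint a (q + 1) R) - h (gridPoint a q R)) L,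
    sum_range_sub fun q => h (gridPoint a q R)]

lemma sum_labelDet_facets (lab : (Fin (M + 1) → ℕ) → Fin (M + 1)) (v : Fin (M + 1) → ℕ) :
    ∑ π : Equiv.Perm (Fin (M + 1)), ∑ j : Fin (M + 2),
        labelDet (fun i => lab (kuhnVertex v π (j.succAbove i)))
      = ∑ π : Equiv.Perm (Fin (M + 1)),
        (lowerFacetDet lab (v + Pi.single (π (Fin.last M)) 1) π - lowerFacetDet lab v π) := by
  have hmid : ∀ j : Fin M, j.castSucc.succ ≠ Fin.last (M + 1) := fun j h => by
    rw [← Fin.succ_last, Fin.succ_inj] at h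
    exact (Fin.castSucc_lt_last j).ne h
  rw [sum_comm, Fin.sum_univ_succ, Fin.sum_univ_castSucc,
    sum_eq_zero fun j _ => sum_labelDet_intermediate_facet lab v (Fin.succ_ne_zero _) (hmid j),
    zero_add]
  simp only [CharTwo.sub_eq_add, sum_add_distrib]
  congr 1
  · refine Eq.trans ?_ (Equiv.sum_comp (Equiv.mulRight (finRotate (M + 1)))
      fun π => lowerFacetDet lab (v + Pi.single (π (Fin.last M)) 1) π)
    refine sum_congr rfl fun π _ => ?_
    simp only [Fin.zero_succAbove, kuhnVertex_succ, lowerFacetDet]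
    simp
  · simp only [lowerFacetDet, Fin.succ_last, Fin.succAbove_last]

/-- In the Kuhn triangulation of a grid, the number of fully labelled boundary facets is even. -/
theorem kuhn_parity (lab : (Fin (M + 1) → ℕ) → Fin (M + 1)) :
    ∑ π : Equiv.Perm (Fin (M + 1)), ∑ R : Fin M → Fin L,
      (lowerFacetDet lab (gridPoint (π (Fin.last M)) L R) π
        - lowerFacetDet lab (gridPoint (π (Fin.last M)) 0 R) π) = 0 :=
  calc
    _ = ∑ π : Equiv.Perm (Fin (M + 1)), ∑ v : Fin (M + 1) → Fin L,
        (lowerFacetDet lab ((fun b => (v b : ℕ)) + Pi.single (π (Fin.last M)) 1) π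
          - lowerFacetDet lab (fun b => (v b : ℕ)) π) :=
      sum_congr rfl fun π _ => (sum_grid_sub (fun v => lowerFacetDet lab v π) _).symm
    _ = ∑ v : Fin (M + 1) → Fin L, ∑ π : Equiv.Perm (Fin (M + 1)), ∑ j : Fin (M + 2),
        labelDet (fun i => lab (kuhnVertex (fun b => (v b : ℕ)) π (j.succAbove i))) := by
      rw [sum_comm]
      exact sum_congr rfl fun v _ => (sum_labelDet_facets lab fun b => (v b : ℕ)).symm
    _ = 0 := sum_eq_zero fun v _ => sum_eq_zero fun π _ =>
      sum_labelDet_succAbove fun j => lab (kuhnVertex (fun b => (v b : ℕ)) π j)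

end Kuhn

/-! ### A mod 2 degree argument -/

section Degree

variable {M L : ℕ}

/-- The first index at which `s` holds, or `Fin.last M` if there is none. The label of a point
`x : Fin M → ℝ` is `firstIndex fun a => x a < 0`. -/
noncomputable def firstIndex (s : Fin M → Prop) : Fin (M + 1) :=
  sInf {l | ∀ a, l = a.castSucc → s a}

lemma of_firstIndex_eq {s : Fin M → Prop} {a : Fin M} (h : firstIndex s = a.castSucc) : s a :=
  have hmem : firstIndex s ∈ {l | ∀ a, l = a.castSucc → s a} :=
    csInf_mem ⟨Fin.last M, fun a ha => absurd ha (Fin.castSucc_lt_last a).ne'⟩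
  hmem a h

lemma not_of_lt_firstIndex {s : Fin M → Prop} {a : Fin M} (h : a.castSucc < firstIndex s) :
    ¬ s a := fun ha =>
  notMem_of_lt_csInf h (OrderBot.bddBelow _) fun _ hb => Fin.castSucc_injective _ hb ▸ ha

lemma firstIndex_mono {s s' : Fin M → Prop} (h : ∀ a, s' a → s a) :
    firstIndex s ≤ firstIndex s' :=
  csInf_le_csInf (OrderBot.bddBelow _)
    ⟨Fin.last M, fun a ha => absurd ha (Fin.castSucc_lt_last a).ne'⟩ fun _ hl a ha => h a (hl a ha)

lemma firstIndex_not_val_lt (i : Fin (M + 1)) :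
    firstIndex (fun b : Fin M => ¬ b.val < i.val) = i := by
  refine le_antisymm (csInf_le (OrderBot.bddBelow _) ?_) (not_lt.1 fun h => ?_)
  · rintro a rfl
    simp
  · obtain ⟨j, hj⟩ := Fin.exists_castSucc_eq.2 (h.trans_le (Fin.le_last i)).ne
    rw [← hj] at h
    exact of_firstIndex_eq hj.symm h

lemma norm_lt_of_labelDet_ne_zero {z : Fin (M + 1) → Fin M → ℝ} {ε : ℝ} (hε : 0 < ε)
    (hdist : ∀ i j, dist (z i) (z j) < ε)
    (hdet : labelDet (fun i => firstIndex fun a => z i a < 0) ≠ 0) (i : Fin (M + 1)) :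
    ‖z i‖ < ε := by
  have hsurj := surjective_of_labelDet_ne_zero hdet
  rw [pi_norm_lt_iff hε]
  intro a
  obtain ⟨j, hj⟩ := hsurj a.castSucc
  obtain ⟨k, hk⟩ := hsurj (Fin.last M)
  have hneg : z j a < 0 := of_firstIndex_eq hj
  have hnonneg : 0 ≤ z k a := not_lt.1
    (not_of_lt_firstIndex (s := fun a => z k a < 0) ((Fin.castSucc_lt_last a).trans_eq hk.symm))
  have hij := (dist_le_pi_dist (z i) (z j) a).trans_lt (hdist i j)
  have hik := (dist_le_pi_dist (z i) (z k) a).trans_lt (hdist i k)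
  rw [Real.dist_eq, abs_lt] at hij hik
  rw [Real.norm_eq_abs, abs_lt]
  constructor <;> linarith

/-- The `i`-th vertex of the facet which is orthogonal to the direction `π (Fin.last M)`, at height
`q` in this direction. -/
def facetVertex (π : Equiv.Perm (Fin (M + 1))) (q : ℕ) (R : Fin M → Fin L) (i : Fin (M + 1)) :
    Fin (M + 1) → ℕ :=
  kuhnVertex (gridPoint (π (Fin.last M)) q R) π i.castSucc

lemma facetVertex_apply_last (π : Equiv.Perm (Fin (M + 1))) (q : ℕ) (R : Fin M → Fin L)
    (i : Fin (M + 1)) : facetVertex π q R i (π (Fin.last M)) = q := by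
  simp [facetVertex, kuhnVertex]
  omega

lemma facetVertex_apply_succAbove (π : Equiv.Perm (Fin (M + 1))) (q : ℕ) (R : Fin M → Fin L)
    (i : Fin (M + 1)) (b : Fin M) :
    facetVertex π q R i ((π (Fin.last M)).succAbove b)
      = R b + if (π.symm ((π (Fin.last M)).succAbove b)).val < i.val then 1 else 0 := by
  simp [facetVertex, kuhnVertex]

lemma facetVertex_apply_castSucc {π : Equiv.Perm (Fin (M + 1))}
    (hπ : π (Fin.last M) = Fin.last M) (q : ℕ) (R : Fin M → Fin L) (i : Fin (M + 1)) (b : Fin M) :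
    facetVertex π q R i b.castSucc
      = R b + if (π.symm b.castSucc).val < i.val then 1 else 0 := by
  have h := facetVertex_apply_succAbove π q R i b
  simpa only [hπ, Fin.succAbove_last] using h

lemma facetVertex_le (π : Equiv.Perm (Fin (M + 1))) {q : ℕ} (hq : q ≤ L) (R : Fin M → Fin L)
    (i a : Fin (M + 1)) : facetVertex π q R i a ≤ L := by
  induction a using Fin.succAboveCases (π (Fin.last M)) with
  | x => exact (facetVertex_apply_last π q R i).trans_le hq
  | p b =>
    rw [facetVertex_apply_succAbove]
    have := (R b).is_lt
    split_ifs <;> omega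

lemma dist_facetVertex_le (π : Equiv.Perm (Fin (M + 1))) (q : ℕ) (R : Fin M → Fin L)
    (i j a : Fin (M + 1)) :
    dist ((facetVertex π q R i a : ℝ) / L) ((facetVertex π q R j a : ℝ) / L) ≤ 1 / L := by
  rw [Real.dist_eq, ← sub_div, abs_div, Nat.abs_cast]
  gcongr
  simp only [facetVertex, kuhnVertex]
  push_cast
  split_ifs <;> simp

/-- The labels `firstIndex (w · < k ·)` distinguish exactly one facet in direction `Fin.last M`:
the one whose vertices cross the thresholds `k` one coordinate after the other. -/
lemma labelDet_threshold {π : Equiv.Perm (Fin (M + 1))} (hπ : π (Fin.last M) = Fin.last M) (q : ℕ)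
    (R : Fin M → Fin L) (k : Fin M → ℕ) :
    labelDet (fun i => firstIndex fun b => facetVertex π q R i b.castSucc < k b)
      = if π = 1 ∧ ∀ b, R b + 1 = k b then 1 else 0 := by
  simp only [facetVertex_apply_castSucc hπ]
  split_ifs with h
  · obtain ⟨rfl, hk⟩ := h
    rw [← labelDet_id]
    congr 1
    funext i
    refine Eq.trans (congrArg firstIndex (funext fun b => propext ?_)) (firstIndex_not_val_lt i)
    have hb : ((1 : Equiv.Perm (Fin (M + 1))).symm b.castSucc).val = b.val := rfl
    rw [← hk, hb]
    split_ifs <;> omega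
  by_contra hdet
  set lab : Fin (M + 1) → Fin (M + 1) := fun i =>
    firstIndex fun b => (R b + if (π.symm b.castSucc).val < i.val then 1 else 0) < k b
  have hsurj : Function.Surjective lab := surjective_of_labelDet_ne_zero hdet
  have hmono : Monotone lab := fun i j hij => firstIndex_mono fun b hb => by
    have : i.val ≤ j.val := hij
    split_ifs at hb ⊢ <;> omega
  have hlab : ∀ i, lab i = i := congrFun <|
    (StrictMono.range_inj (hmono.strictMono_of_injective
      (Finite.injective_iff_surjective.2 hsurj)) strictMono_id).1 (by simp [hsurj.range_eq])
  have hcross : ∀ b : Fin M, (π.symm b.castSucc).val = b.val ∧ R b + 1 = k b := fun b => by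
    have hlow := of_firstIndex_eq (hlab b.castSucc)
    have hhigh := not_of_lt_firstIndex (Fin.castSucc_lt_succ.trans_eq (hlab b.succ).symm)
    simp only [Fin.val_castSucc, Fin.val_succ] at hlow hhigh
    split_ifs at hlow hhigh <;> omega
  refine h ⟨?_, fun b => (hcross b).2⟩
  ext b
  rcases Fin.eq_castSucc_or_eq_last b with ⟨j, rfl⟩ | rfl
  · rw [← (Equiv.symm_apply_eq π).1 (Fin.ext (hcross j).1 : π.symm j.castSucc = j.castSucc)]
    rfl
  · rw [hπ]; rfl

/-- The value of the homotopy `F` at the grid point `v / L`, whose last coordinate is the time. -/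
noncomputable def gridValue (F : ℝ → (Fin M → ℝ) → Fin M → ℝ) (L : ℕ) (v : Fin (M + 1) → ℕ) :
    Fin M → ℝ :=
  F (v (Fin.last M) / L) fun a => v a.castSucc / L

lemma natCast_div_mem_unitInterval (hL : 0 < L) {a : ℕ} (ha : a ≤ L) :
    (a : ℝ) / L ∈ Set.Icc (0 : ℝ) 1 :=
  ⟨by positivity, (div_le_one (by exact_mod_cast hL)).2 (by exact_mod_cast ha)⟩

lemma natCast_div_mem_cube (hL : 0 < L) {v : Fin (M + 1) → ℕ} (hv : ∀ a, v a ≤ L) :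
    (fun a : Fin M => (v a.castSucc : ℝ) / L) ∈ Set.Icc (0 : Fin M → ℝ) 1 :=
  ⟨fun a => (natCast_div_mem_unitInterval hL (hv a.castSucc)).1,
    fun a => (natCast_div_mem_unitInterval hL (hv a.castSucc)).2⟩

variable {F : ℝ → (Fin M → ℝ) → Fin M → ℝ}

lemma labelDet_gridValue_eq_zero_of_le_norm (hL : 0 < L) {ε : ℝ} (hε : 0 < ε)
    (hosc : ∀ p ∈ Set.Icc (0 : ℝ) 1 ×ˢ Set.Icc (0 : Fin M → ℝ) 1,
      ∀ p' ∈ Set.Icc (0 : ℝ) 1 ×ˢ Set.Icc (0 : Fin M → ℝ) 1,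
        dist p p' ≤ 1 / L → dist (F p.1 p.2) (F p'.1 p'.2) < ε)
    (π : Equiv.Perm (Fin (M + 1))) {q : ℕ} (hq : q ≤ L) (R : Fin M → Fin L) {i : Fin (M + 1)}
    (hi : ε ≤ ‖gridValue F L (facetVertex π q R i)‖) :
    labelDet (fun i => firstIndex fun a => gridValue F L (facetVertex π q R i) a < 0) = 0 := by
  by_contra hdet
  refine absurd (norm_lt_of_labelDet_ne_zero hε (fun i j => ?_) hdet i) (not_lt.2 hi)
  have hmem := fun i => facetVertex_le π hq R i
  refine hosc (_, _)
    ⟨natCast_div_mem_unitInterval hL (hmem i _), natCast_div_mem_cube hL (hmem i)⟩ (_, _)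
    ⟨natCast_div_mem_unitInterval hL (hmem j _), natCast_div_mem_cube hL (hmem j)⟩ ?_
  rw [Prod.dist_eq]
  exact max_le (dist_facetVertex_le π q R i j _)
    ((dist_pi_le_iff (by positivity)).2 fun b => dist_facetVertex_le π q R i j _)

lemma gridValue_facetVertex_of_periodic (hL : 0 < L) {a : Fin M}
    (hper : ∀ τ x, F τ (Function.update x a 1) = F τ (Function.update x a 0))
    {π : Equiv.Perm (Fin (M + 1))} (hπ : π (Fin.last M) = a.castSucc) (R : Fin M → Fin L)
    (i : Fin (M + 1)) :
    gridValue F L (facetVertex π L R i) = gridValue F L (facetVertex π 0 R i) := by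
  have hother : ∀ b ≠ a.castSucc, facetVertex π L R i b = facetVertex π 0 R i b := by
    intro b hb
    obtain ⟨b', rfl⟩ := Fin.exists_succAbove_eq (hπ ▸ hb)
    simp only [facetVertex_apply_succAbove]
  have hself := fun q => facetVertex_apply_last π q R i
  simp only [hπ] at hself
  set x : Fin M → ℝ := fun b => facetVertex π 0 R i b.castSucc / L
  have hxL : (fun b : Fin M => (facetVertex π L R i b.castSucc : ℝ) / L)
      = Function.update x a 1 := by
    funext b
    rcases eq_or_ne b a with rfl | hb
    · rw [Function.update_self, hself, div_self (by positivity)]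
    · rw [Function.update_of_ne hb, hother _ (by simpa using hb)]
  have hx0 : x = Function.update x a 0 := by
    rw [eq_comm, Function.update_eq_self_iff]
    simp [x, hself]
  simp only [gridValue]
  rw [hxL, hother _ (Fin.castSucc_lt_last a).ne', hper, ← hx0]

/-- The part of the cylinder over the unit cube where the homotopy of `exists_zero_of_homotopy` has
to be free of zeros: the sides that are not periodic, the top, and the bottom without the ball
around the zeros of the initial map. -/
def zeroFreeSet (per : Fin M → Prop) (c : Fin M → ℝ) (r : ℝ) : Set (ℝ × (Fin M → ℝ)) :=
  {p ∈ Set.Icc (0 : ℝ) 1 ×ˢ Set.Icc (0 : Fin M → ℝ) 1 |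
    (∃ a, ¬ per a ∧ (p.2 a = 0 ∨ p.2 a = 1)) ∨ p.1 = 1 ∨ (p.1 = 0 ∧ r ≤ dist p.2 c)}

lemma isCompact_zeroFreeSet (per : Fin M → Prop) (c : Fin M → ℝ) (r : ℝ) :
    IsCompact (zeroFreeSet per c r) := by
  refine (isCompact_Icc.prod isCompact_Icc).inter_right ?_
  have hsides : IsClosed {p : ℝ × (Fin M → ℝ) | ∃ a, ¬ per a ∧ (p.2 a = 0 ∨ p.2 a = 1)} := by
    rw [Set.ofPred_exists]
    exact isClosed_iUnion_of_finite fun a => isClosed_const.inter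
      ((isClosed_eq (by fun_prop) continuous_const).union
        (isClosed_eq (by fun_prop) continuous_const))
  have htop : IsClosed {p : ℝ × (Fin M → ℝ) | p.1 = 1} := isClosed_eq (by fun_prop) continuous_const
  have hbottom : IsClosed {p : ℝ × (Fin M → ℝ) | p.1 = 0 ∧ r ≤ dist p.2 c} :=
    (isClosed_eq continuous_fst continuous_const).inter
      (isClosed_le continuous_const (continuous_snd.dist continuous_const))
  exact hsides.union (htop.union hbottom)

section Facets

variable {per : Fin M → Prop} {c : Fin M → ℝ} {r ε : ℝ}

lemma labelDet_gridValue_side (hL : 0 < L) (hε : 0 < ε)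
    (hosc : ∀ p ∈ Set.Icc (0 : ℝ) 1 ×ˢ Set.Icc (0 : Fin M → ℝ) 1,
      ∀ p' ∈ Set.Icc (0 : ℝ) 1 ×ˢ Set.Icc (0 : Fin M → ℝ) 1,
        dist p p' ≤ 1 / L → dist (F p.1 p.2) (F p'.1 p'.2) < ε)
    (hper : ∀ τ x a, per a → F τ (Function.update x a 1) = F τ (Function.update x a 0))
    (hfree : ∀ p ∈ zeroFreeSet per c r, ε ≤ ‖F p.1 p.2‖)
    {π : Equiv.Perm (Fin (M + 1))} {a : Fin M} (hπ : π (Fin.last M) = a.castSucc)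
    (R : Fin M → Fin L) :
    labelDet (fun i => firstIndex fun a => gridValue F L (facetVertex π L R i) a < 0)
      = labelDet (fun i => firstIndex fun a => gridValue F L (facetVertex π 0 R i) a < 0) := by
  by_cases ha : per a
  · simp only [gridValue_facetVertex_of_periodic hL (fun τ x => hper τ x a ha) hπ]
  have hzero : ∀ q : ℕ, q = 0 ∨ q = L →
      labelDet (fun i => firstIndex fun a => gridValue F L (facetVertex π q R i) a < 0) = 0 := by
    intro q hq
    have hqL : q ≤ L := by omega
    have hmem := facetVertex_le π hqL R 0
    refine labelDet_gridValue_eq_zero_of_le_norm hL hε hosc π hqL R (i := 0) (hfree (_, _)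
      ⟨⟨natCast_div_mem_unitInterval hL (hmem _), natCast_div_mem_cube hL hmem⟩,
        Or.inl ⟨a, ha, ?_⟩⟩)
    have hself := facetVertex_apply_last π q R 0
    rw [hπ] at hself
    rcases hq with rfl | rfl
    · left; simp [hself]
    · right; simp only [hself]; exact div_self (by positivity)
  rw [hzero L (Or.inr rfl), hzero 0 (Or.inl rfl)]

lemma labelDet_gridValue_top (hL : 0 < L) (hε : 0 < ε)
    (hosc : ∀ p ∈ Set.Icc (0 : ℝ) 1 ×ˢ Set.Icc (0 : Fin M → ℝ) 1,
      ∀ p' ∈ Set.Icc (0 : ℝ) 1 ×ˢ Set.Icc (0 : Fin M → ℝ) 1,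
        dist p p' ≤ 1 / L → dist (F p.1 p.2) (F p'.1 p'.2) < ε)
    (hfree : ∀ p ∈ zeroFreeSet per c r, ε ≤ ‖F p.1 p.2‖)
    {π : Equiv.Perm (Fin (M + 1))} (hπ : π (Fin.last M) = Fin.last M) (R : Fin M → Fin L) :
    labelDet (fun i => firstIndex fun a => gridValue F L (facetVertex π L R i) a < 0) = 0 := by
  have hmem := facetVertex_le π le_rfl R 0
  refine labelDet_gridValue_eq_zero_of_le_norm hL hε hosc π le_rfl R (i := 0) (hfree (_, _)
    ⟨⟨natCast_div_mem_unitInterval hL (hmem _), natCast_div_mem_cube hL hmem⟩,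
      Or.inr (Or.inl ?_)⟩)
  have hself := facetVertex_apply_last π L R 0
  rw [hπ] at hself
  simp only [hself]
  exact div_self (by positivity)

lemma dist_facetVertex_lt (hL : 0 < L) (hLr : 1 / L < r)
    {π : Equiv.Perm (Fin (M + 1))} (hπ : π (Fin.last M) = Fin.last M) (q : ℕ) {R : Fin M → Fin L}
    (hR : ∀ b, R b + 1 = ⌈c b * L⌉₊) (i : Fin (M + 1)) :
    dist (fun a : Fin M => (facetVertex π q R i a.castSucc : ℝ) / L) c < r := by
  have hL' : (0 : ℝ) < L := by exact_mod_cast hL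
  rw [dist_pi_lt_iff (lt_trans (by positivity) hLr)]
  intro b
  have hlow : (R b : ℝ) < c b * L := Nat.lt_ceil.1 (by rw [← hR b]; exact Nat.lt_succ_self _)
  have hhigh : c b * L ≤ R b + 1 := (Nat.le_ceil _).trans_eq (by rw [← hR b]; push_cast; rfl)
  refine lt_of_le_of_lt ?_ hLr
  rw [facetVertex_apply_castSucc hπ, Real.dist_eq, ← mul_div_cancel_right₀ (c b) hL'.ne', ← sub_div,
    abs_div, abs_of_pos hL']
  gcongr
  push_cast
  rw [abs_le]
  split_ifs <;> constructor <;> linarith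

lemma labelDet_gridValue_bottom (hL : 0 < L) (hε : 0 < ε)
    (hosc : ∀ p ∈ Set.Icc (0 : ℝ) 1 ×ˢ Set.Icc (0 : Fin M → ℝ) 1,
      ∀ p' ∈ Set.Icc (0 : ℝ) 1 ×ˢ Set.Icc (0 : Fin M → ℝ) 1,
        dist p p' ≤ 1 / L → dist (F p.1 p.2) (F p'.1 p'.2) < ε)
    (hfree : ∀ p ∈ zeroFreeSet per c r, ε ≤ ‖F p.1 p.2‖) (hLr : 1 / L < r)
    (hsign : ∀ x ∈ Metric.ball c r, ∀ a, F 0 x a < 0 ↔ x a < c a)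
    {π : Equiv.Perm (Fin (M + 1))} (hπ : π (Fin.last M) = Fin.last M) (R : Fin M → Fin L) :
    labelDet (fun i => firstIndex fun a => gridValue F L (facetVertex π 0 R i) a < 0)
      = if π = 1 ∧ ∀ b, R b + 1 = ⌈c b * L⌉₊ then 1 else 0 := by
  have hL' : (0 : ℝ) < L := by exact_mod_cast hL
  have htime : ∀ i, (facetVertex π 0 R i (Fin.last M) : ℝ) / L = 0 := fun i => by
    have hself := facetVertex_apply_last π 0 R i
    rw [hπ] at hself
    simp [hself]
  by_cases hnear : ∀ i, dist (fun a : Fin M => (facetVertex π 0 R i a.castSucc : ℝ) / L) c < r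
  · rw [← labelDet_threshold hπ 0]
    congr 1
    funext i
    congr 1
    funext a
    rw [gridValue, htime, hsign _ (hnear i), div_lt_iff₀ hL', Nat.lt_ceil]
  · rw [if_neg fun h => hnear (dist_facetVertex_lt hL hLr hπ 0 h.2)]
    push Not at hnear
    obtain ⟨i, hi⟩ := hnear
    have hmem := facetVertex_le π (Nat.zero_le L) R i
    exact labelDet_gridValue_eq_zero_of_le_norm hL hε hosc π (Nat.zero_le L) R (hfree (_, _)
      ⟨⟨natCast_div_mem_unitInterval hL (hmem _), natCast_div_mem_cube hL hmem⟩,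
        Or.inr (Or.inr ⟨htime i, hi⟩)⟩)

lemma labelDet_gridValue_top_sub_bottom (hL : 0 < L) (hε : 0 < ε)
    (hosc : ∀ p ∈ Set.Icc (0 : ℝ) 1 ×ˢ Set.Icc (0 : Fin M → ℝ) 1,
      ∀ p' ∈ Set.Icc (0 : ℝ) 1 ×ˢ Set.Icc (0 : Fin M → ℝ) 1,
        dist p p' ≤ 1 / L → dist (F p.1 p.2) (F p'.1 p'.2) < ε)
    (hper : ∀ τ x a, per a → F τ (Function.update x a 1) = F τ (Function.update x a 0))
    (hfree : ∀ p ∈ zeroFreeSet per c r, ε ≤ ‖F p.1 p.2‖) (hLr : 1 / L < r)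
    (hsign : ∀ x ∈ Metric.ball c r, ∀ a, F 0 x a < 0 ↔ x a < c a)
    (π : Equiv.Perm (Fin (M + 1))) (R : Fin M → Fin L) :
    labelDet (fun i => firstIndex fun a => gridValue F L (facetVertex π L R i) a < 0)
        - labelDet (fun i => firstIndex fun a => gridValue F L (facetVertex π 0 R i) a < 0)
      = if π = 1 ∧ ∀ b, R b + 1 = ⌈c b * L⌉₊ then 1 else 0 := by
  rcases Fin.eq_castSucc_or_eq_last (π (Fin.last M)) with ⟨a, ha⟩ | hπ
  · have hne : π ≠ 1 := fun h => (Fin.castSucc_lt_last a).ne' (by simpa [h] using ha)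
    rw [labelDet_gridValue_side hL hε hosc hper hfree ha, sub_self, if_neg fun h => hne h.1]
  · rw [labelDet_gridValue_top hL hε hosc hfree hπ,
      labelDet_gridValue_bottom hL hε hosc hfree hLr hsign hπ, CharTwo.sub_eq_add, zero_add]

lemma exists_pos_forall_le_norm_zeroFreeSet (hF : Continuous (Function.uncurry F))
    (hside : ∀ τ ∈ Set.Icc (0 : ℝ) 1, ∀ x ∈ Set.Icc (0 : Fin M → ℝ) 1,
      ∀ a, ¬ per a → (x a = 0 ∨ x a = 1) → F τ x ≠ 0)
    (hzeros : ∀ x ∈ Set.Icc (0 : Fin M → ℝ) 1, F 0 x = 0 → x ∈ Metric.ball c r)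
    (htop : ∀ x ∈ Set.Icc (0 : Fin M → ℝ) 1, F 1 x ≠ 0) :
    ∃ ε > 0, ∀ p ∈ zeroFreeSet per c r, ε ≤ ‖F p.1 p.2‖ := by
  refine (isCompact_zeroFreeSet per c r).exists_forall_le' hF.norm.continuousOn ?_
  rintro ⟨τ, x⟩ ⟨⟨hτ, hx⟩, ⟨a, ha, hxa⟩ | rfl | ⟨rfl, hdist⟩⟩
  · exact norm_pos_iff.2 (hside τ hτ x hx a ha hxa)
  · exact norm_pos_iff.2 (htop x hx)
  · exact norm_pos_iff.2 fun h => absurd (hzeros x hx h) (not_lt.2 hdist)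

end Facets

lemma exists_fin_add_one_eq_ceil {c : ℝ} (hc : c ∈ Set.Ioo (0 : ℝ) 1) (hL : 0 < L) :
    ∃ R : Fin L, R + 1 = ⌈c * L⌉₊ := by
  have hL' : (0 : ℝ) < L := by exact_mod_cast hL
  have hpos : 0 < ⌈c * L⌉₊ := Nat.ceil_pos.2 (mul_pos hc.1 hL')
  have hle : ⌈c * L⌉₊ ≤ L := Nat.ceil_le.2 (mul_le_of_le_one_left hL'.le hc.2.le)
  exact ⟨⟨⌈c * L⌉₊ - 1, by omega⟩, Nat.sub_add_cancel hpos⟩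

/-- The case `ι = Fin M` of `exists_zero_of_homotopy`. The facets on the boundary of the cylinder
that carry all labels of `F` come in pairs on the periodic sides, and there is exactly one more at
the bottom, in contradiction to `kuhn_parity`. -/
lemma exists_zero_of_homotopy_fin (per : Fin M → Prop) (hF : Continuous (Function.uncurry F))
    (hper : ∀ τ x a, per a → F τ (Function.update x a 1) = F τ (Function.update x a 0))
    (hside : ∀ τ ∈ Set.Icc (0 : ℝ) 1, ∀ x ∈ Set.Icc (0 : Fin M → ℝ) 1,
      ∀ a, ¬ per a → (x a = 0 ∨ x a = 1) → F τ x ≠ 0)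
    {c : Fin M → ℝ} (hc : ∀ a, c a ∈ Set.Ioo (0 : ℝ) 1) {r : ℝ} (hr : 0 < r)
    (hzeros : ∀ x ∈ Set.Icc (0 : Fin M → ℝ) 1, F 0 x = 0 → x ∈ Metric.ball c r)
    (hsign : ∀ x ∈ Metric.ball c r, ∀ a, F 0 x a < 0 ↔ x a < c a) :
    ∃ x ∈ Set.Icc (0 : Fin M → ℝ) 1, F 1 x = 0 := by
  classical
  by_contra! htop
  obtain ⟨ε, hε, hfree⟩ := exists_pos_forall_le_norm_zeroFreeSet hF hside hzeros htop
  obtain ⟨δ, hδ, hδF⟩ := Metric.uniformContinuousOn_iff.1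
    ((isCompact_Icc.prod isCompact_Icc).uniformContinuousOn_of_continuous
      (s := Set.Icc (0 : ℝ) 1 ×ˢ Set.Icc (0 : Fin M → ℝ) 1) hF.continuousOn) ε hε
  obtain ⟨L, hLδr⟩ := exists_nat_one_div_lt (lt_min hδ hr)
  rw [← Nat.cast_add_one, lt_min_iff] at hLδr
  choose R₀ hR₀ using fun a => exists_fin_add_one_eq_ceil (hc a) L.succ_pos
  have hR : ∀ R : Fin M → Fin (L + 1), (∀ b, R b + 1 = ⌈c b * (L + 1 : ℕ)⌉₊) ↔ R = R₀ := fun R => by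
    rw [funext_iff]
    refine forall_congr' fun b => ?_
    rw [← hR₀ b, Fin.ext_iff, Nat.add_right_cancel_iff]
  have hparity := kuhn_parity (L := L + 1)
    fun v => firstIndex fun a => gridValue F (L + 1) v a < 0
  have hcount : ∑ π : Equiv.Perm (Fin (M + 1)), ∑ R : Fin M → Fin (L + 1),
      (if π = 1 ∧ R = R₀ then (1 : ZMod 2) else 0) = 0 := by
    refine (sum_congr rfl fun π _ => sum_congr rfl fun R _ => ?_).trans hparity
    simp only [← hR]
    exact (labelDet_gridValue_top_sub_bottom L.succ_pos hε
      (fun p hp p' hp' h => hδF p hp p' hp' (h.trans_lt hLδr.1)) hper hfree hLδr.2 hsign π R).symm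
  simp [ite_and] at hcount

/-- A homotopy on the unit cube, periodic in some of the coordinates and without zeros on the faces
of the other ones, keeps a zero if the initial map has mod 2 degree one: its zeros lie in a ball
around `c`, in which each of its coordinates changes sign where the same coordinate of `x - c`
does. -/
theorem exists_zero_of_homotopy {ι : Type*} [Fintype ι] [DecidableEq ι] (per : ι → Prop)
    {F : ℝ → (ι → ℝ) → ι → ℝ} (hF : Continuous (Function.uncurry F))
    (hper : ∀ τ x a, per a → F τ (Function.update x a 1) = F τ (Function.update x a 0))
    (hside : ∀ τ ∈ Set.Icc (0 : ℝ) 1, ∀ x ∈ Set.Icc (0 : ι → ℝ) 1,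
      ∀ a, ¬ per a → (x a = 0 ∨ x a = 1) → F τ x ≠ 0)
    {c : ι → ℝ} (hc : ∀ a, c a ∈ Set.Ioo (0 : ℝ) 1) {r : ℝ} (hr : 0 < r)
    (hzeros : ∀ x ∈ Set.Icc (0 : ι → ℝ) 1, F 0 x = 0 → x ∈ Metric.ball c r)
    (hsign : ∀ x ∈ Metric.ball c r, ∀ a, F 0 x a < 0 ↔ x a < c a) :
    ∃ x ∈ Set.Icc (0 : ι → ℝ) 1, F 1 x = 0 := by
  set e := Fintype.equivFin ι
  have hcube : ∀ {x : Fin (Fintype.card ι) → ℝ}, x ∈ Set.Icc 0 1 →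
      x ∘ e ∈ Set.Icc (0 : ι → ℝ) 1 := fun h => ⟨fun a => h.1 (e a), fun a => h.2 (e a)⟩
  have hball : ∀ {x : Fin (Fintype.card ι) → ℝ},
      x ∈ Metric.ball (c ∘ e.symm) r ↔ x ∘ e ∈ Metric.ball c r := fun {x} => by
    simp only [Metric.mem_ball, dist_pi_lt_iff hr, e.forall_congr_left, Function.comp_apply,
      Equiv.apply_symm_apply]
  have hzero : ∀ {τ} {x : Fin (Fintype.card ι) → ℝ},
      F τ (x ∘ e) ∘ e.symm = 0 ↔ F τ (x ∘ e) = 0 := by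
    simp [funext_iff, e.forall_congr_left]
  obtain ⟨x, hx, hFx⟩ := exists_zero_of_homotopy_fin (per ∘ e.symm)
    (F := fun τ x => F τ (x ∘ e) ∘ e.symm) (c := c ∘ e.symm) (r := r)
    (continuous_pi fun a => (continuous_apply (e.symm a)).comp <| hF.comp <|
      continuous_fst.prodMk <| continuous_pi fun b => (continuous_apply (e b)).comp continuous_snd)
    (fun τ x a ha => by
      have h := hper τ (x ∘ e) (e.symm a) ha
      simp only [Function.update_comp_equiv, h])
    (fun τ hτ x hx a ha hxa h => hside τ hτ _ (hcube hx) (e.symm a) ha (by simpa using hxa)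
      (hzero.1 h))
    (fun a => hc _) hr (fun x hx h => hball.2 (hzeros _ (hcube hx) (hzero.1 h)))
    (fun x hx a => by simpa using hsign _ (hball.1 hx) (e.symm a))
  exact ⟨x ∘ e, hcube hx, hzero.1 hFx⟩

end Degree

/-! ### Paths that alternate between opposite rays -/

/-- The alternating signs `-1, 1, -1, …`, indexed from `0`. -/
def altSign (i : ℕ) : ℝ := (-1) ^ (i + 1)

lemma altSign_mul_self (i : ℕ) : altSign i * altSign i = 1 := by
  rw [altSign, ← mul_pow]
  norm_num

lemma altSign_ne_zero (i : ℕ) : altSign i ≠ 0 := left_ne_zero_of_mul_eq_one (altSign_mul_self i)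

lemma altSign_succ (i : ℕ) : altSign (i + 1) = -altSign i := by
  rw [altSign, altSign, pow_succ]
  ring

section Alternation

variable {E : Type*} [AddCommGroup E] [Module ℝ E]

lemma mem_Ioo_of_smul_eq_smul {a ε : ℝ} {u v : E} (ha : a ∈ Set.Icc (0 : ℝ) 1) (hε : ε ≠ 0)
    (hu : u ≠ 0) (hv : v ≠ 0) (h : a • u = ((1 - a) * ε) • v) : a ∈ Set.Ioo (0 : ℝ) 1 := by
  refine ⟨ha.1.lt_of_ne ?_, ha.2.lt_of_ne ?_⟩ <;> rintro rfl
  · exact hε (by simpa [hv] using h.symm)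
  · exact hu (by simpa using h)

lemma sameRay_of_smul_eq_smul {a ε : ℝ} {u v : E} (ha : a ∈ Set.Ioo (0 : ℝ) 1)
    (h : a • u = ((1 - a) * ε) • v) : SameRay ℝ (ε • v) u :=
  Or.inr (Or.inr ⟨1 - a, a, sub_pos.2 ha.2, ha.1, by rw [smul_smul, h]⟩)

lemma not_sameRay_neg_smul {ε : ℝ} {u v : E} (hε : ε ≠ 0) (hu : u ≠ 0) (hv : v ≠ 0)
    (h : SameRay ℝ (ε • v) u) : ¬ SameRay ℝ (-ε • v) u := fun h' => by
  have hself := h.trans h'.symm fun hu' => absurd hu' hu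
  rw [neg_smul] at hself
  exact smul_ne_zero hε hv (eq_zero_of_sameRay_self_neg hself)

variable {k : ℕ} {G : ℝ → E} {t : Fin k → ℝ}

lemma strictMono_of_alternating (hG : ∀ s ∈ Set.Icc (0 : ℝ) 1, G s ≠ 0)
    (ht : ∀ i, t i ∈ Set.Icc (0 : ℝ) 1) (hmono : Monotone t)
    (halt : ∀ i : Fin k, SameRay ℝ (altSign i • G 0) (G (t i))) : StrictMono t := by
  intro i j hij
  have hi : (i : ℕ) + 1 < k := (Nat.succ_le_of_lt hij).trans_lt j.is_lt
  have hstep : t i ≠ t ⟨i + 1, hi⟩ := fun h => by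
    have hsucc := halt ⟨i + 1, hi⟩
    rw [← h, altSign_succ] at hsucc
    exact not_sameRay_neg_smul (altSign_ne_zero i) (hG _ (ht i)) (hG 0 (by simp)) (halt i) hsucc
  exact ((hmono (Fin.mk_le_mk.2 (Nat.le_succ _))).lt_of_ne hstep).trans_le (hmono hij)

lemma pos_of_alternating (hG : G 0 ≠ 0) (ht : ∀ i, 0 ≤ t i) (hmono : Monotone t)
    (halt : ∀ i : Fin k, SameRay ℝ (altSign i • G 0) (G (t i))) (i : Fin k) : 0 < t i := by
  have hfirst : t ⟨0, i.pos⟩ ≠ 0 := fun h => by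
    have hray := halt ⟨0, i.pos⟩
    rw [h, altSign, zero_add, pow_one] at hray
    exact not_sameRay_neg_smul one_ne_zero hG hG (by rw [one_smul]) hray
  exact ((ht _).lt_of_ne' hfirst).trans_le (hmono (Fin.mk_le_mk.2 (Nat.zero_le _)))

lemma lt_one_of_alternating (hk : Even k) (hG : ¬ SameRay ℝ (G 0) (G 1)) (ht : ∀ i, t i ≤ 1)
    (hmono : Monotone t) (halt : ∀ i : Fin k, SameRay ℝ (altSign i • G 0) (G (t i)))
    (i : Fin k) : t i < 1 := by
  have hpos := i.pos
  have hlast : t ⟨k - 1, by omega⟩ ≠ 1 := fun h => hG <| by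
    have hray := halt ⟨k - 1, by omega⟩
    rwa [h, altSign, Nat.sub_add_cancel hpos, hk.neg_one_pow, one_smul] at hray
  exact (hmono (Fin.mk_le_mk.2 (by omega))).trans_lt ((ht _).lt_of_ne hlast)

end Alternation

section RunningMin

variable {ι α : Type*} [LinearOrder ι] [LocallyFiniteOrderTop ι] [LinearOrder α] {f : ι → α}

/-- The minimum of `f` over all later indices. It turns an arbitrary tuple of times into a monotone
one, and it depends continuously on the tuple. -/
def runningMin (f : ι → α) (i : ι) : α := (Ici i).inf' nonempty_Ici f

lemma runningMin_le {i j : ι} (h : i ≤ j) : runningMin f i ≤ f j := inf'_le _ (mem_Ici.2 h)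

lemma exists_runningMin_eq (f : ι → α) (i : ι) : ∃ j, i ≤ j ∧ runningMin f i = f j := by
  obtain ⟨j, hj, h⟩ := exists_mem_eq_inf' (nonempty_Ici (a := i)) f
  exact ⟨j, mem_Ici.1 hj, h⟩

lemma monotone_runningMin (f : ι → α) : Monotone (runningMin f) := fun _ _ h =>
  inf'_mono f (Ici_subset_Ici.2 h) nonempty_Ici

lemma runningMin_eq_self_of_monotone (hf : Monotone f) : runningMin f = f :=
  funext fun _ => le_antisymm (runningMin_le le_rfl) (le_inf' _ _ fun _ hj => hf (mem_Ici.1 hj))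

lemma runningMin_eq_self_of_strictMono (hf : StrictMono (runningMin f)) : runningMin f = f := by
  funext i
  obtain ⟨j, hij, hj⟩ := exists_runningMin_eq f i
  rcases hij.eq_or_lt with rfl | hlt
  · exact hj
  · exact absurd hj ((hf hlt).trans_le (runningMin_le le_rfl)).ne

lemma continuous_runningMin [TopologicalSpace α] [OrderTopology α] (i : ι) :
    Continuous fun f : ι → α => runningMin f i :=
  Continuous.finset_inf'_apply _ fun j _ => continuous_apply j

end RunningMin

section AlternationMap

variable {k q : ℕ}

/-- The point of the torus of parameters with angular coordinates `x (i, j)`, `2 ≤ j`. -/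
noncomputable def torusPoint (x : Fin k × Fin (q + 2) → ℝ) (i : Fin k) (j : Fin q) : Circle :=
  Circle.exp (2 * Real.pi * x (i, j.succ.succ))

lemma torusPoint_re (x : Fin k × Fin (q + 2) → ℝ) (i : Fin k) (j : Fin q) :
    (torusPoint x i j : ℂ).re = Real.cos (2 * Real.pi * x (i, j.succ.succ)) := by
  rw [torusPoint, Circle.coe_exp, Complex.exp_ofReal_mul_I_re]

lemma torusPoint_im (x : Fin k × Fin (q + 2) → ℝ) (i : Fin k) (j : Fin q) :
    (torusPoint x i j : ℂ).im = Real.sin (2 * Real.pi * x (i, j.succ.succ)) := by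
  rw [torusPoint, Circle.coe_exp, Complex.exp_ofReal_mul_I_im]

lemma continuous_torusPoint : Continuous (torusPoint (k := k) (q := q)) :=
  continuous_pi fun i => continuous_pi fun j => Circle.exp.continuous.comp (by fun_prop)

/-- The crossing times of the parameter `x`, whose time coordinates are `x (i, 1)`. -/
noncomputable def crossingTime (x : Fin k × Fin (q + 2) → ℝ) : Fin k → ℝ :=
  runningMin fun i => x (i, 1)

lemma continuous_crossingTime (i : Fin k) :
    Continuous fun x : Fin k × Fin (q + 2) → ℝ => crossingTime x i :=
  (continuous_runningMin i).comp (continuous_pi fun j => continuous_apply (j, 1))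

lemma crossingTime_mem_Icc {x : Fin k × Fin (q + 2) → ℝ} (hx : x ∈ Set.Icc 0 1) (i : Fin k) :
    crossingTime x i ∈ Set.Icc (0 : ℝ) 1 := by
  obtain ⟨j, -, hj⟩ := exists_runningMin_eq (fun i => x (i, 1)) i
  rw [crossingTime, hj]
  exact ⟨hx.1 _, hx.2 _⟩

/-- The map whose zeros are the alternating configurations of the family of paths `H`: at a zero,
`H w (t i)` is a positive multiple of `altSign i • H w 0`, with the ratio of the two vectors encoded
by the coordinate `x (i, 0)`. The signs in front only serve to orient the coordinates, the one of
index `1` by `σ`. -/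
noncomputable def alternationMap (σ : ℝ)
    (H : (Fin k → Fin q → Circle) → ℝ → EuclideanSpace ℝ (Fin (q + 2)))
    (x : Fin k × Fin (q + 2) → ℝ) (p : Fin k × Fin (q + 2)) : ℝ :=
  altSign p.1 * (if p.2 = 1 then σ else 1) *
    (x (p.1, 0) * H (torusPoint x) (crossingTime x p.1) p.2
      - (1 - x (p.1, 0)) * altSign p.1 * H (torusPoint x) 0 p.2)

lemma continuous_alternationMap (σ : ℝ)
    {H : ℝ → (Fin k → Fin q → Circle) → ℝ → EuclideanSpace ℝ (Fin (q + 2))}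
    (hH : Continuous fun p : ℝ × (Fin k → Fin q → Circle) × ℝ => H p.1 p.2.1 p.2.2) :
    Continuous (Function.uncurry fun τ => alternationMap σ (H τ)) := by
  refine continuous_pi fun p => ?_
  have hpath : ∀ {s : (Fin k × Fin (q + 2) → ℝ) → ℝ}, Continuous s →
      Continuous fun y : ℝ × (Fin k × Fin (q + 2) → ℝ) => H y.1 (torusPoint y.2) (s y.2) p.2 :=
    fun hs => (EuclideanSpace.proj (𝕜 := ℝ) p.2).continuous.comp <| hH.comp <|
      continuous_fst.prodMk ((continuous_torusPoint.prodMk hs).comp continuous_snd)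
  have hcross := hpath (continuous_crossingTime p.1)
  have hstart := hpath (continuous_const (y := (0 : ℝ)))
  have hradial : Continuous fun y : ℝ × (Fin k × Fin (q + 2) → ℝ) => y.2 (p.1, 0) := by fun_prop
  exact continuous_const.mul ((hradial.mul hcross).sub
    (((continuous_const.sub hradial).mul continuous_const).mul hstart))

lemma alternationMap_update_of_periodic (σ : ℝ)
    (H : (Fin k → Fin q → Circle) → ℝ → EuclideanSpace ℝ (Fin (q + 2)))
    (x : Fin k × Fin (q + 2) → ℝ) {a : Fin k × Fin (q + 2)} (h0 : a.2 ≠ 0) (h1 : a.2 ≠ 1) :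
    alternationMap σ H (Function.update x a 1) = alternationMap σ H (Function.update x a 0) := by
  have htorus : torusPoint (Function.update x a 1) = torusPoint (Function.update x a 0) := by
    funext i j
    rcases eq_or_ne (i, j.succ.succ) a with rfl | h
    · simp [torusPoint]
    · simp only [torusPoint, Function.update_of_ne h]
  have hother : ∀ (i : Fin k) (v : ℝ) {j : Fin (q + 2)}, a.2 ≠ j →
      Function.update x a v (i, j) = x (i, j) := fun i v j hj =>
    Function.update_of_ne (fun h => hj (congrArg Prod.snd h).symm) v x
  funext p
  simp only [alternationMap, crossingTime, htorus, hother _ _ h0, hother _ _ h1]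

variable {σ : ℝ} {H : (Fin k → Fin q → Circle) → ℝ → EuclideanSpace ℝ (Fin (q + 2))}
  {x : Fin k × Fin (q + 2) → ℝ}

lemma smul_eq_smul_of_alternationMap_eq_zero (hσ : σ ≠ 0) (h : alternationMap σ H x = 0)
    (i : Fin k) :
    x (i, 0) • H (torusPoint x) (crossingTime x i)
      = ((1 - x (i, 0)) * altSign i) • H (torusPoint x) 0 := by
  ext j
  have hsign : altSign i * (if j = 1 then σ else 1) ≠ 0 := by
    have := altSign_ne_zero i
    split_ifs <;> positivity
  exact sub_eq_zero.1 ((mul_eq_zero.1 (congrFun h (i, j))).resolve_left hsign)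

lemma mem_Ioo_of_alternationMap_eq_zero (hk : Even k) (hσ : σ ≠ 0)
    (hne : ∀ w, ∀ t ∈ Set.Icc (0 : ℝ) 1, H w t ≠ 0) (hray : ∀ w, ¬ SameRay ℝ (H w 0) (H w 1))
    (hx : x ∈ Set.Icc 0 1) (h : alternationMap σ H x = 0) :
    (∀ i, x (i, 0) ∈ Set.Ioo (0 : ℝ) 1) ∧ (∀ i, x (i, 1) ∈ Set.Ioo (0 : ℝ) 1) ∧
      StrictMono (fun i => x (i, 1)) ∧ crossingTime x = fun i => x (i, 1) := by
  have hsmul := smul_eq_smul_of_alternationMap_eq_zero hσ h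
  have hmem := crossingTime_mem_Icc hx
  have hmono : Monotone (crossingTime x) := monotone_runningMin _
  have hradial : ∀ i, x (i, 0) ∈ Set.Ioo (0 : ℝ) 1 := fun i =>
    mem_Ioo_of_smul_eq_smul ⟨hx.1 _, hx.2 _⟩ (altSign_ne_zero i) (hne _ _ (hmem i))
      (hne _ 0 (by simp)) (hsmul i)
  have halt := fun i => sameRay_of_smul_eq_smul (hradial i) (hsmul i)
  have hstrict := strictMono_of_alternating (hne _) hmem hmono halt
  have hself : crossingTime x = fun i => x (i, 1) := runningMin_eq_self_of_strictMono hstrict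
  rw [hself] at hmono hstrict halt
  exact ⟨hradial, fun i => ⟨pos_of_alternating (hne _ 0 (by simp)) (fun i => hx.1 (i, 1)) hmono
    halt i, lt_one_of_alternating hk (hray _) (fun i => hx.2 (i, 1)) hmono halt i⟩, hstrict, hself⟩

end AlternationMap

section InitialFamily

variable {k q : ℕ}

/-- A smooth cut-off function around the crossing number `i`, which takes place at `i + 1 / 2`. -/
noncomputable def crossingBump (i : ℕ) : ContDiffBump ((i : ℝ) + 1 / 2) where
  rIn := 1 / 4
  rOut := 1 / 2
  rIn_pos := by norm_num
  rIn_lt_rOut := by norm_num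

/-- The position along the axis of index `0` at a crossing: it is positive for exactly one of the
parameters `u` with real entries. -/
noncomputable def crossingAmplitude (u : Fin q → Circle) : ℝ := 1 - 2 * ∑ j, max (u j : ℂ).re 0

/-- The position at the crossing number `i`, as a function of the parameter of this crossing. -/
noncomputable def crossingVector (i : ℕ) (u : Fin q → Circle) : EuclideanSpace ℝ (Fin (q + 2)) :=
  WithLp.toLp 2 <| Matrix.vecCons (altSign i * crossingAmplitude u) <| Matrix.vecCons 0 fun j =>
    -(altSign i * (u j : ℂ).im)

lemma crossingVector_apply_zero (i : ℕ) (u : Fin q → Circle) :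
    crossingVector i u 0 = altSign i * crossingAmplitude u := rfl

lemma crossingVector_apply_one (i : ℕ) (u : Fin q → Circle) : crossingVector i u 1 = 0 := rfl

lemma crossingVector_apply_succ_succ (i : ℕ) (u : Fin q → Circle) (j : Fin q) :
    crossingVector i u j.succ.succ = -(altSign i * (u j : ℂ).im) := rfl

lemma continuous_crossingVector (i : ℕ) : Continuous (crossingVector (q := q) i) := by
  have hcoe : ∀ j, Continuous fun u : Fin q → Circle => (u j : ℂ) := fun j =>
    continuous_subtype_val.comp (continuous_apply j)
  have hre := fun j => Complex.continuous_re.comp (hcoe j)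
  have him := fun j => Complex.continuous_im.comp (hcoe j)
  refine (PiLp.continuous_toLp 2 _).comp (continuous_pi (Fin.cases ?_ (Fin.cases ?_ fun j => ?_)))
  · exact continuous_const.mul (continuous_const.sub (continuous_const.mul
      (continuous_finsetSum _ fun j _ => (hre j).max continuous_const)))
  · exact continuous_const
  · exact (continuous_const.mul (him j)).neg

lemma re_eq_one_or_neg_one {z : Circle} (h : (z : ℂ).im = 0) :
    (z : ℂ).re = 1 ∨ (z : ℂ).re = -1 := by
  have hnorm := Circle.normSq_coe z
  rw [Complex.normSq_apply, h, mul_zero, add_zero] at hnorm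
  exact mul_self_eq_one_iff.1 hnorm

lemma exists_crossingAmplitude_eq {u : Fin q → Circle} (h : ∀ j, (u j : ℂ).im = 0) :
    ∃ m : ℕ, crossingAmplitude u = 1 - 2 * m ∧ (m = 0 → ∀ j, (u j : ℂ).re = -1) := by
  classical
  have hre := fun j => re_eq_one_or_neg_one (h j)
  have hmax : ∀ j, max (u j : ℂ).re 0 = if (u j : ℂ).re = 1 then 1 else 0 := fun j => by
    rcases hre j with hj | hj <;> norm_num [hj]
  refine ⟨#{j | (u j : ℂ).re = 1}, ?_, fun hm j => (hre j).resolve_left fun hj => ?_⟩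
  · simp only [crossingAmplitude, hmax, sum_boole]
  · exact filter_eq_empty_iff.1 (card_eq_zero.1 hm) (mem_univ j) hj

lemma im_eq_zero_of_smul_crossingVector_eq {a b : ℝ} (ha : a ≠ 0) {i : ℕ} {u : Fin q → Circle}
    (h : a • crossingVector i u = b • EuclideanSpace.single 0 1) (j : Fin q) :
    (u j : ℂ).im = 0 := by
  have hj := congrArg (fun v : EuclideanSpace ℝ (Fin (q + 2)) => v j.succ.succ) h
  simpa [crossingVector_apply_succ_succ, ha, altSign_ne_zero] using hj

lemma crossingVector_ne_zero (i : ℕ) (u : Fin q → Circle) : crossingVector i u ≠ 0 := fun h => by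
  obtain ⟨m, hm, -⟩ := exists_crossingAmplitude_eq
    (im_eq_zero_of_smul_crossingVector_eq one_ne_zero (b := 0) (by rw [h, zero_smul, smul_zero]))
  have hzero := congrArg (fun v : EuclideanSpace ℝ (Fin (q + 2)) => v 0) h
  have hodd : (1 : ℝ) = (2 * m : ℕ) := by
    simpa [crossingVector_apply_zero, hm, altSign_ne_zero, sub_eq_zero] using hzero
  have : 1 = 2 * m := by exact_mod_cast hodd
  omega

lemma eq_half_of_smul_crossingVector_eq {a : ℝ} (ha : a ∈ Set.Ioo (0 : ℝ) 1) {i : ℕ}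
    {u : Fin q → Circle}
    (h : a • crossingVector i u = ((1 - a) * altSign i) • EuclideanSpace.single 0 1) :
    a = 1 / 2 ∧ ∀ j, (u j : ℂ).re = -1 := by
  obtain ⟨m, hm, hre⟩ :=
    exists_crossingAmplitude_eq (im_eq_zero_of_smul_crossingVector_eq ha.1.ne' h)
  have hzero := congrArg (fun v : EuclideanSpace ℝ (Fin (q + 2)) => v 0) h
  simp only [PiLp.smul_apply, PiLp.single_apply, smul_eq_mul, crossingVector_apply_zero,
    if_true, mul_one, hm] at hzero
  have hamp : a * (1 - 2 * m) = 1 - a :=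
    mul_left_cancel₀ (altSign_ne_zero i) (by linear_combination hzero)
  obtain rfl : m = 0 := by
    by_contra hne
    have : (1 : ℝ) ≤ m := by exact_mod_cast Nat.one_le_iff_ne_zero.2 hne
    nlinarith [ha.1, ha.2]
  exact ⟨by push_cast at hamp; linarith, hre rfl⟩

/-- The initial family of paths on `[-1/2, k + 1/2]`, from the axis of index `0` to `v`. Its
component along the axis of index `1` is `± cos (π s)` on `[-1/2, k]`, so that the line spanned by
the axis of index `0` can only be met at half-integers, where the position is `crossingVector`. -/
noncomputable def initialPath (σ : ℝ) (v : EuclideanSpace ℝ (Fin (q + 2)))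
    (w : Fin k → Fin q → Circle) (s : ℝ) : EuclideanSpace ℝ (Fin (q + 2)) :=
  (Real.cos (Real.pi * s) * σ) • EuclideanSpace.single 1 1
    + Real.smoothTransition (-2 * s) • EuclideanSpace.single 0 1
    + ∑ i : Fin k, crossingBump i s • crossingVector i (w i)
    + Real.smoothTransition (2 * (s - k)) • v

variable {σ : ℝ} {v : EuclideanSpace ℝ (Fin (q + 2))}

lemma continuous_sum_smul_crossingVector {φ : Fin k → ℝ → ℝ} (hφ : ∀ i, Continuous (φ i)) :
    Continuous fun p : (Fin k → Fin q → Circle) × ℝ =>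
      ∑ i : Fin k, φ i p.2 • crossingVector i (p.1 i) :=
  continuous_finsetSum _ fun i _ => ((hφ i).comp continuous_snd).smul
    ((continuous_crossingVector i).comp ((continuous_apply i).comp continuous_fst))

lemma hasDerivAt_initialPath (w : Fin k → Fin q → Circle) (s : ℝ) :
    HasDerivAt (initialPath σ v w)
      ((-Real.sin (Real.pi * s) * Real.pi * σ) • EuclideanSpace.single 1 1
        + (deriv Real.smoothTransition (-2 * s) * -2) • EuclideanSpace.single 0 1
        + ∑ i : Fin k, deriv (crossingBump i) s • crossingVector i (w i)
        + (deriv Real.smoothTransition (2 * (s - k)) * 2) • v) s := by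
  have hcos : HasDerivAt (fun s => Real.cos (Real.pi * s)) (-Real.sin (Real.pi * s) * Real.pi) s :=
    by simpa using ((hasDerivAt_id s).const_mul Real.pi).cos
  have htransition : ∀ u, HasDerivAt Real.smoothTransition (deriv Real.smoothTransition u) u :=
    fun u => (Real.smoothTransition.contDiff.differentiable one_ne_zero u).hasDerivAt
  have hstart : HasDerivAt (fun s : ℝ => Real.smoothTransition (-2 * s))
      (deriv Real.smoothTransition (-2 * s) * -2) s :=
    (htransition _).comp s (by simpa only [mul_one, id_eq] using (hasDerivAt_id s).const_mul (-2))
  have hend : HasDerivAt (fun s : ℝ => Real.smoothTransition (2 * (s - k)))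
      (deriv Real.smoothTransition (2 * (s - k)) * 2) s :=
    (htransition _).comp s (by simpa using ((hasDerivAt_id s).sub_const (k : ℝ)).const_mul 2)
  have hbump : ∀ i : Fin k, HasDerivAt (crossingBump i) (deriv (crossingBump i) s) s :=
    fun i => ((crossingBump i).contDiff.differentiable one_ne_zero s).hasDerivAt
  exact ((((hcos.mul_const σ).smul_const _).add (hstart.smul_const _)).add
    (HasDerivAt.fun_sum fun i _ => (hbump i).smul_const _)).add (hend.smul_const v)

lemma continuous_deriv_initialPath {φ : ℝ → ℝ} (hφ : Continuous φ) :
    Continuous fun p : (Fin k → Fin q → Circle) × ℝ => deriv (initialPath σ v p.1) (φ p.2) := by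
  have hsum := continuous_sum_smul_crossingVector (k := k) (q := q)
    fun i => ((crossingBump i).contDiff.continuous_deriv le_rfl).comp hφ
  have : Continuous (deriv Real.smoothTransition) :=
    Real.smoothTransition.contDiff.continuous_deriv le_rfl
  simp only [Function.comp_apply] at hsum
  simp only [(hasDerivAt_initialPath _ _).deriv]
  fun_prop

lemma crossingBump_eq_zero {i : ℕ} {s : ℝ} (h : s ≤ i ∨ i + 1 ≤ s) : crossingBump i s = 0 := by
  refine (crossingBump i).zero_of_le_dist ?_
  change 1 / 2 ≤ |s - (i + 1 / 2)|
  rw [le_abs]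
  rcases h with h | h
  · right; linarith
  · left; linarith

lemma initialPath_of_near_crossing (w : Fin k → Fin q → Circle) {i : Fin k} {s : ℝ}
    (h : |s - (i + 1 / 2)| ≤ 1 / 4) :
    initialPath σ v w s
      = (Real.cos (Real.pi * s) * σ) • EuclideanSpace.single 1 1 + crossingVector i (w i) := by
  have hs := abs_le.1 h
  have : (0 : ℝ) ≤ (i : ℕ) := Nat.cast_nonneg _
  have hik : ((i : ℕ) : ℝ) + 1 ≤ k := by exact_mod_cast i.2
  have hother : ∀ l, l ≠ i → crossingBump l s = 0 := fun l hl => crossingBump_eq_zero <| by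
    rcases hl.lt_or_gt with hlt | hgt
    · have : ((l : ℕ) : ℝ) + 1 ≤ (i : ℕ) := by exact_mod_cast hlt
      right; linarith
    · have : ((i : ℕ) : ℝ) + 1 ≤ (l : ℕ) := by exact_mod_cast hgt
      left; linarith
  rw [initialPath, sum_eq_single i (fun l _ hl => by rw [hother l hl, zero_smul]) (by simp),
    (crossingBump i).one_of_mem_closedBall h, Real.smoothTransition.zero_of_nonpos (by linarith),
    Real.smoothTransition.zero_of_nonpos (by linarith)]
  simp

lemma cos_pi_mul_natCast_add_half (i : ℕ) : Real.cos (Real.pi * (i + 1 / 2)) = 0 := by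
  rw [show Real.pi * ((i : ℝ) + 1 / 2) = i * Real.pi + Real.pi / 2 by ring,
    Real.cos_add_pi_div_two, Real.sin_nat_mul_pi, neg_zero]

lemma initialPath_natCast_add_half (w : Fin k → Fin q → Circle) (i : Fin k) :
    initialPath σ v w (i + 1 / 2) = crossingVector i (w i) := by
  rw [initialPath_of_near_crossing w (i := i) (by norm_num), cos_pi_mul_natCast_add_half]
  simp

lemma initialPath_start (w : Fin k → Fin q → Circle) :
    initialPath σ v w (-1 / 2) = EuclideanSpace.single 0 1 := by
  have : (0 : ℝ) ≤ k := Nat.cast_nonneg _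
  have hbump : ∀ i : Fin k, crossingBump i (-1 / 2) = 0 := fun i =>
    crossingBump_eq_zero (.inl (by linarith [Nat.cast_nonneg (α := ℝ) (i : ℕ)]))
  rw [initialPath, Real.smoothTransition.one_of_one_le (by norm_num),
    Real.smoothTransition.zero_of_nonpos (by linarith),
    show Real.pi * (-1 / 2) = -(Real.pi / 2) by ring]
  simp [hbump]

lemma initialPath_end (w : Fin k → Fin q → Circle) : initialPath σ v w (k + 1 / 2) = v := by
  have : (0 : ℝ) ≤ k := Nat.cast_nonneg _
  have hbump : ∀ i : Fin k, crossingBump i ((k : ℝ) + 1 / 2) = 0 := fun i => by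
    have : ((i : ℕ) : ℝ) + 1 ≤ k := by exact_mod_cast i.2
    exact crossingBump_eq_zero (.inr (by linarith))
  rw [initialPath, Real.smoothTransition.one_of_one_le (x := 2 * _) (by linarith),
    Real.smoothTransition.zero_of_nonpos (by linarith), cos_pi_mul_natCast_add_half]
  simp only [hbump]
  simp

lemma initialPath_apply_one (w : Fin k → Fin q → Circle) (s : ℝ) :
    initialPath σ v w s 1
      = Real.cos (Real.pi * s) * σ + Real.smoothTransition (2 * (s - k)) * v 1 := by
  simp [initialPath, crossingVector_apply_one]

lemma cos_pi_mul_pos_of_even (hk : Even k) {s : ℝ} (hs : (k : ℝ) ≤ s) (hs' : s < k + 1 / 2) :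
    0 < Real.cos (Real.pi * s) := by
  have hshift := Real.cos_add_nat_mul_pi (Real.pi * (s - k)) k
  rw [hk.neg_one_pow, one_mul] at hshift
  rw [show Real.pi * s = Real.pi * (s - k) + k * Real.pi by ring, hshift]
  apply Real.cos_pos_of_mem_Ioo
  constructor <;> nlinarith [Real.pi_pos]

lemma exists_natCast_add_half_of_cos_eq_zero {s : ℝ} (hs : -1 / 2 < s)
    (h : Real.cos (Real.pi * s) = 0) : ∃ i : ℕ, s = i + 1 / 2 := by
  obtain ⟨m, hm⟩ := Real.cos_eq_zero_iff.1 h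
  have hsm : s = m + 1 / 2 := mul_left_cancel₀ Real.pi_ne_zero (by linear_combination hm)
  have hm0 : (-1 : ℤ) < m := by
    have : ((-1 : ℤ) : ℝ) < m := by push_cast; linarith
    exact_mod_cast this
  lift m to ℕ using by omega
  exact ⟨m, by exact_mod_cast hsm⟩

lemma exists_crossing_of_initialPath_apply_one_eq_zero (hk : Even k) (hσ : σ ^ 2 = 1)
    (hv : 0 ≤ σ * v 1) {w : Fin k → Fin q → Circle} {s : ℝ} (hs : -1 / 2 < s)
    (hs' : s < k + 1 / 2) (h : initialPath σ v w s 1 = 0) : ∃ i : Fin k, s = i + 1 / 2 := by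
  rw [initialPath_apply_one] at h
  rcases lt_or_ge s k with hsk | hsk
  · rw [Real.smoothTransition.zero_of_nonpos (by linarith), zero_mul, add_zero] at h
    obtain ⟨i, rfl⟩ := exists_natCast_add_half_of_cos_eq_zero hs
      ((mul_eq_zero.1 h).resolve_right (by rintro rfl; norm_num at hσ))
    have hik : (i : ℝ) < k := by linarith
    exact ⟨⟨i, by exact_mod_cast hik⟩, rfl⟩
  · have hcos := cos_pi_mul_pos_of_even hk hsk hs'
    have hnonneg := mul_nonneg (Real.smoothTransition.nonneg (2 * (s - k))) hv
    have : Real.cos (Real.pi * s) + Real.smoothTransition (2 * (s - k)) * (σ * v 1) = 0 := by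
      linear_combination σ * h - Real.cos (Real.pi * s) * hσ
    linarith

lemma initialPath_ne_zero (hk : Even k) (hσ : σ ^ 2 = 1) (hv : 0 ≤ σ * v 1) (hv0 : v ≠ 0)
    (w : Fin k → Fin q → Circle) {s : ℝ} (hs : s ∈ Set.Icc (-1 / 2 : ℝ) (k + 1 / 2)) :
    initialPath σ v w s ≠ 0 := by
  intro h
  rcases hs.1.eq_or_lt with rfl | hs1
  · rw [initialPath_start] at h
    simp at h
  rcases hs.2.eq_or_lt with rfl | hs2
  · exact hv0 (by rwa [initialPath_end] at h)
  obtain ⟨i, rfl⟩ :=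
    exists_crossing_of_initialPath_apply_one_eq_zero hk hσ hv hs1 hs2 (w := w) (by rw [h]; rfl)
  exact crossingVector_ne_zero _ _ (by rwa [initialPath_natCast_add_half] at h)

end InitialFamily

section AlternatingFamily

variable {k q : ℕ}

/-- The affine change of time from `[0, 1]` to `[-1/2, k + 1/2]`. -/
noncomputable def pathTime (k : ℕ) (t : ℝ) : ℝ := (k + 1) * t - 1 / 2

lemma strictMono_pathTime (k : ℕ) : StrictMono (pathTime k) := fun _ _ h =>
  sub_lt_sub_right (mul_lt_mul_of_pos_left h (by positivity)) _

lemma hasDerivAt_pathTime (k : ℕ) (t : ℝ) : HasDerivAt (pathTime k) (k + 1) t := by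
  have h : HasDerivAt (fun t : ℝ => (k + 1) * t - 1 / 2) ((k + 1) * 1) t :=
    ((hasDerivAt_id' t).const_mul ((k : ℝ) + 1)).sub_const (1 / 2)
  rwa [mul_one] at h

lemma continuous_pathTime (k : ℕ) : Continuous (pathTime k) := by
  unfold pathTime
  fun_prop

lemma pathTime_zero (k : ℕ) : pathTime k 0 = -1 / 2 := by
  rw [pathTime]
  ring

lemma pathTime_one (k : ℕ) : pathTime k 1 = k + 1 / 2 := by
  rw [pathTime]
  ring

lemma pathTime_mem_Icc {t : ℝ} (ht : t ∈ Set.Icc (0 : ℝ) 1) :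
    pathTime k t ∈ Set.Icc (-1 / 2 : ℝ) (k + 1 / 2) := by
  rw [← pathTime_zero k, ← pathTime_one k]
  exact (strictMono_pathTime k).monotone.mapsTo_Icc ht

lemma pathTime_mem_Ioo {t : ℝ} (ht : t ∈ Set.Ioo (0 : ℝ) 1) :
    pathTime k t ∈ Set.Ioo (-1 / 2 : ℝ) (k + 1 / 2) := by
  rw [← pathTime_zero k, ← pathTime_one k]
  exact (strictMono_pathTime k).mapsTo_Ioo ht

/-- The unique zero of the `alternationMap` of the initial family. -/
noncomputable def crossingCenter (p : Fin k × Fin (q + 2)) : ℝ :=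
  if p.2 = 1 then ((p.1 : ℕ) + 1) / (k + 1) else 1 / 2

lemma crossingCenter_of_ne_one (i : Fin k) {j : Fin (q + 2)} (hj : j ≠ 1) :
    crossingCenter (i, j) = 1 / 2 := if_neg hj

lemma pathTime_crossingCenter (i : Fin k) :
    pathTime k (crossingCenter (i, (1 : Fin (q + 2)))) = i + 1 / 2 := by
  rw [pathTime, crossingCenter, if_pos rfl, mul_div_cancel₀ _ (by positivity)]
  ring

lemma crossingCenter_mem_Ioo (p : Fin k × Fin (q + 2)) : crossingCenter p ∈ Set.Ioo (0 : ℝ) 1 := by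
  rw [crossingCenter]
  split_ifs
  · have : ((p.1 : ℕ) : ℝ) < k := by exact_mod_cast p.1.2
    exact ⟨by positivity, (div_lt_one (by positivity)).2 (by linarith)⟩
  · norm_num

/-- The ball around `crossingCenter` on which the crossings occur in the linear regime of the
initial family. -/
def crossingBall (k q : ℕ) : Set (Fin k × Fin (q + 2) → ℝ) :=
  Metric.ball crossingCenter (1 / (4 * (k + 1)))

section CrossingBall

variable {x : Fin k × Fin (q + 2) → ℝ}

lemma abs_mul_sub_crossingCenter_lt (hx : x ∈ crossingBall k q) (p : Fin k × Fin (q + 2)) :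
    (k + 1) * |x p - crossingCenter p| < 1 / 4 := by
  have hdist : |x p - crossingCenter p| < 1 / (4 * (k + 1)) :=
    (dist_pi_lt_iff (by positivity)).1 hx p
  rw [lt_div_iff₀ (by positivity)] at hdist
  linarith

lemma abs_sub_crossingCenter_lt (hx : x ∈ crossingBall k q) (p : Fin k × Fin (q + 2)) :
    |x p - crossingCenter p| < 1 / 4 :=
  (le_mul_of_one_le_left (abs_nonneg _) (by simp)).trans_lt (abs_mul_sub_crossingCenter_lt hx p)

lemma abs_pathTime_sub_lt (hx : x ∈ crossingBall k q) (i : Fin k) :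
    |pathTime k (x (i, 1)) - (i + 1 / 2)| < 1 / 4 := by
  rw [← pathTime_crossingCenter (q := q) i, pathTime, pathTime, sub_sub_sub_cancel_right, ← mul_sub,
    abs_mul, abs_of_pos (by positivity)]
  exact abs_mul_sub_crossingCenter_lt hx _

lemma crossingTime_of_mem_crossingBall (hx : x ∈ crossingBall k q) :
    crossingTime x = fun i => x (i, 1) := by
  refine runningMin_eq_self_of_monotone (monotone_iff_forall_lt.2 fun i j hij => ?_)
  refine ((strictMono_pathTime k).lt_iff_lt.1 ?_).le
  have hi := abs_lt.1 (abs_pathTime_sub_lt hx i)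
  have hj := abs_lt.1 (abs_pathTime_sub_lt hx j)
  have : ((i : ℕ) : ℝ) + 1 ≤ (j : ℕ) := by exact_mod_cast hij
  linarith

lemma mem_Icc_of_mem_crossingBall (hx : x ∈ crossingBall k q) (i : Fin k) :
    x (i, 1) ∈ Set.Icc (0 : ℝ) 1 := by
  have hi := abs_lt.1 (abs_pathTime_sub_lt hx i)
  have : (0 : ℝ) ≤ (i : ℕ) := Nat.cast_nonneg _
  have : ((i : ℕ) : ℝ) + 1 ≤ k := by exact_mod_cast i.2
  constructor <;> refine ((strictMono_pathTime k).lt_iff_lt.1 ?_).le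
  · rw [pathTime_zero]
    linarith
  · rw [pathTime_one]
    linarith

lemma crossingAmplitude_torusPoint (hx : x ∈ crossingBall k q) (i : Fin k) :
    crossingAmplitude (torusPoint x i) = 1 := by
  have hre : ∀ j, (torusPoint x i j : ℂ).re ≤ 0 := fun j => by
    have hj := abs_lt.1 (abs_sub_crossingCenter_lt hx (i, j.succ.succ))
    rw [crossingCenter_of_ne_one i (by simp [Fin.ext_iff])] at hj
    rw [torusPoint_re]
    apply Real.cos_nonpos_of_pi_div_two_le_of_le <;> nlinarith [Real.pi_pos]
  simp [crossingAmplitude, hre]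

end CrossingBall

lemma altSign_mul_cos (i : ℕ) (d : ℝ) :
    altSign i * Real.cos (Real.pi * (i + 1 / 2 + d)) = Real.sin (Real.pi * d) := by
  have hshift := Real.cos_add_nat_mul_pi (Real.pi * d + Real.pi / 2) i
  rw [Real.cos_add_pi_div_two] at hshift
  rw [show Real.pi * (i + 1 / 2 + d) = Real.pi * d + Real.pi / 2 + i * Real.pi by ring, hshift,
    altSign, pow_succ]
  linear_combination Real.sin (Real.pi * d) * (mul_self_eq_one_iff.2 (neg_one_pow_eq_or ℝ i))

lemma sin_pi_mul_neg_iff {d : ℝ} (hd : |d| < 1) : Real.sin (Real.pi * d) < 0 ↔ d < 0 := by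
  obtain ⟨h1, h2⟩ := abs_lt.1 hd
  refine ⟨fun h => ?_, fun h => ?_⟩
  · by_contra! hd0
    refine h.not_ge (Real.sin_nonneg_of_nonneg_of_le_pi (by positivity) ?_)
    nlinarith [Real.pi_pos]
  · apply Real.sin_neg_of_neg_of_neg_pi_lt <;> nlinarith [Real.pi_pos]

section InitialZeros

variable {σ : ℝ} {v : EuclideanSpace ℝ (Fin (q + 2))} {x : Fin k × Fin (q + 2) → ℝ}
  {H : (Fin k → Fin q → Circle) → ℝ → EuclideanSpace ℝ (Fin (q + 2))}

lemma alternationMap_initialPath_apply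
    (hH : ∀ w, ∀ t ∈ Set.Icc (0 : ℝ) 1, H w t = initialPath σ v w (pathTime k t))
    (hx : x ∈ crossingBall k q) (i : Fin k) (j : Fin (q + 2)) :
    alternationMap σ H x (i, j) = altSign i * (if j = 1 then σ else 1) *
      (x (i, 0) * (Real.cos (Real.pi * pathTime k (x (i, 1))) * σ * (if j = 1 then 1 else 0)
        + crossingVector i (torusPoint x i) j)
        - (1 - x (i, 0)) * altSign i * (if j = 0 then 1 else 0)) := by
  rw [alternationMap, crossingTime_of_mem_crossingBall hx,
    hH _ _ (mem_Icc_of_mem_crossingBall hx i), hH _ 0 (by simp), pathTime_zero, initialPath_start,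
    initialPath_of_near_crossing _ (abs_pathTime_sub_lt hx i).le]
  simp only [PiLp.add_apply, PiLp.smul_apply, PiLp.single_apply, smul_eq_mul]

lemma alternationMap_initialPath_zero
    (hH : ∀ w, ∀ t ∈ Set.Icc (0 : ℝ) 1, H w t = initialPath σ v w (pathTime k t))
    (hx : x ∈ crossingBall k q) (i : Fin k) :
    alternationMap σ H x (i, 0) = 2 * (x (i, 0) - crossingCenter (i, (0 : Fin (q + 2)))) := by
  rw [alternationMap_initialPath_apply hH hx, crossingVector_apply_zero,
    crossingAmplitude_torusPoint hx, crossingCenter_of_ne_one i (by simp)]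
  simp only [if_true, zero_ne_one, if_false]
  linear_combination (2 * x (i, 0) - 1) * altSign_mul_self i

lemma alternationMap_initialPath_one (hσ : σ ^ 2 = 1)
    (hH : ∀ w, ∀ t ∈ Set.Icc (0 : ℝ) 1, H w t = initialPath σ v w (pathTime k t))
    (hx : x ∈ crossingBall k q) (i : Fin k) :
    alternationMap σ H x (i, 1)
      = x (i, 0) * Real.sin
        (Real.pi * ((k + 1) * (x (i, 1) - crossingCenter (i, (1 : Fin (q + 2)))))) := by
  have htime : pathTime k (x (i, 1))
      = i + 1 / 2 + (k + 1) * (x (i, 1) - crossingCenter (i, (1 : Fin (q + 2)))) := by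
    rw [← pathTime_crossingCenter (q := q) i, pathTime, pathTime]
    ring
  rw [alternationMap_initialPath_apply hH hx, crossingVector_apply_one, htime, ← altSign_mul_cos i]
  simp only [if_true, one_ne_zero, if_false]
  linear_combination altSign i * x (i, 0) * Real.cos _ * hσ

lemma alternationMap_initialPath_succ_succ
    (hH : ∀ w, ∀ t ∈ Set.Icc (0 : ℝ) 1, H w t = initialPath σ v w (pathTime k t))
    (hx : x ∈ crossingBall k q) (i : Fin k) (j : Fin q) :
    alternationMap σ H x (i, j.succ.succ) = x (i, 0) *
      Real.sin (Real.pi * (2 * (x (i, j.succ.succ) - crossingCenter (i, j.succ.succ)))) := by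
  have hj0 : j.succ.succ ≠ 0 := Fin.succ_ne_zero _
  have hj1 : j.succ.succ ≠ 1 := fun h => Fin.succ_ne_zero j (Fin.succ_injective _ h)
  rw [alternationMap_initialPath_apply hH hx, crossingVector_apply_succ_succ, torusPoint_im,
    crossingCenter_of_ne_one i hj1, show 2 * Real.pi * x (i, j.succ.succ)
      = Real.pi * (2 * (x (i, j.succ.succ) - 1 / 2)) + Real.pi by ring, Real.sin_add_pi]
  simp only [hj0, hj1, if_false]
  linear_combination x (i, 0) * Real.sin _ * altSign_mul_self i

lemma alternationMap_initialPath_neg_iff (hσ : σ ^ 2 = 1)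
    (hH : ∀ w, ∀ t ∈ Set.Icc (0 : ℝ) 1, H w t = initialPath σ v w (pathTime k t))
    (hx : x ∈ crossingBall k q) (p : Fin k × Fin (q + 2)) :
    alternationMap σ H x p < 0 ↔ x p < crossingCenter p := by
  obtain ⟨i, j⟩ := p
  have hneg : ∀ {a b : ℝ}, 0 < a → (a * b < 0 ↔ b < 0) := fun ha => smul_neg_iff_of_pos_left ha
  have hpos : 0 < x (i, 0) := by
    have := abs_lt.1 (abs_sub_crossingCenter_lt hx (i, 0))
    rw [crossingCenter_of_ne_one i (by simp)] at this
    linarith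
  cases j using Fin.cases with
  | zero => rw [alternationMap_initialPath_zero hH hx, hneg two_pos, sub_neg]
  | succ j =>
    cases j using Fin.cases with
    | zero =>
      rw [Fin.succ_zero_eq_one, alternationMap_initialPath_one hσ hH hx, hneg hpos,
        sin_pi_mul_neg_iff, hneg (by positivity), sub_neg]
      rw [abs_mul, abs_of_pos (by positivity)]
      linarith [abs_mul_sub_crossingCenter_lt hx (i, 1)]
    | succ j =>
      rw [alternationMap_initialPath_succ_succ hH hx, hneg hpos, sin_pi_mul_neg_iff, hneg two_pos,
        sub_neg]
      rw [abs_mul, abs_two]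
      linarith [abs_sub_crossingCenter_lt hx (i, j.succ.succ)]

lemma eq_half_of_cos_two_pi_mul_eq_neg_one {y : ℝ} (hy : y ∈ Set.Icc (0 : ℝ) 1)
    (h : Real.cos (2 * Real.pi * y) = -1) : y = 1 / 2 := by
  obtain ⟨m, hm⟩ := Real.cos_eq_neg_one_iff.1 h
  have hym : 2 * y = 1 + 2 * m := mul_left_cancel₀ Real.pi_ne_zero (by linear_combination -hm)
  obtain rfl : m = 0 := by
    have hlower : ((-1 : ℤ) : ℝ) < m := by push_cast; linarith [hy.1]
    have hupper : (m : ℝ) < (1 : ℤ) := by push_cast; linarith [hy.2]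
    have := Int.cast_lt.1 hlower
    have := Int.cast_lt.1 hupper
    omega
  push_cast at hym
  linarith

lemma eq_id_of_strictMono {l : Fin k → Fin k} (hl : StrictMono l) : l = id :=
  (StrictMono.range_inj hl strictMono_id).1 <| by
    rw [(Finite.surjective_of_injective hl.injective).range_eq, Set.range_id]

lemma pathTime_eq_of_crossing (hk : Even k) (hσ : σ ^ 2 = 1) (hv : 0 ≤ σ * v 1)
    {w : Fin k → Fin q → Circle} {t : Fin k → ℝ} (ht : ∀ i, t i ∈ Set.Ioo (0 : ℝ) 1)
    (hmono : StrictMono t) (hzero : ∀ i, initialPath σ v w (pathTime k (t i)) 1 = 0) (i : Fin k) :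
    pathTime k (t i) = i + 1 / 2 := by
  choose l hl using fun i => exists_crossing_of_initialPath_apply_one_eq_zero hk hσ hv
    (pathTime_mem_Ioo (ht i)).1 (pathTime_mem_Ioo (ht i)).2 (hzero i)
  have hl_mono : StrictMono l := fun i j hij => by
    have := strictMono_pathTime k (hmono hij)
    rw [hl i, hl j, add_lt_add_iff_right] at this
    exact Fin.lt_def.2 (by exact_mod_cast this)
  rw [hl i, eq_id_of_strictMono hl_mono, id]

lemma eq_crossingCenter_of_alternationMap_eq_zero (hk : Even k) (hσ : σ ^ 2 = 1)
    (hv : 0 ≤ σ * v 1)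
    (hH : ∀ w, ∀ t ∈ Set.Icc (0 : ℝ) 1, H w t = initialPath σ v w (pathTime k t))
    (hne : ∀ w, ∀ t ∈ Set.Icc (0 : ℝ) 1, H w t ≠ 0) (hray : ∀ w, ¬ SameRay ℝ (H w 0) (H w 1))
    (hx : x ∈ Set.Icc 0 1) (h : alternationMap σ H x = 0) : x = crossingCenter := by
  have hσ0 : σ ≠ 0 := by rintro rfl; norm_num at hσ
  obtain ⟨hradial, htime, hmono, hcrossing⟩ :=
    mem_Ioo_of_alternationMap_eq_zero hk hσ0 hne hray hx h
  have hsmul : ∀ i, x (i, 0) • initialPath σ v (torusPoint x) (pathTime k (x (i, 1)))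
      = ((1 - x (i, 0)) * altSign i) • EuclideanSpace.single 0 1 := fun i => by
    have hi := smul_eq_smul_of_alternationMap_eq_zero hσ0 h i
    rwa [hcrossing, hH _ _ (Set.Ioo_subset_Icc_self (htime i)), hH _ 0 (by simp), pathTime_zero,
      initialPath_start] at hi
  have hpath := pathTime_eq_of_crossing hk hσ hv (w := torusPoint x) htime hmono fun i => by
    have hi := congrArg (fun u : EuclideanSpace ℝ (Fin (q + 2)) => u 1) (hsmul i)
    simpa [(hradial i).1.ne'] using hi
  have hhalf := fun i => eq_half_of_smul_crossingVector_eq (hradial i)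
    (i := i) (u := torusPoint x i) (by rw [← hsmul i, hpath i, initialPath_natCast_add_half])
  funext ⟨i, j⟩
  cases j using Fin.cases with
  | zero => rw [(hhalf i).1, crossingCenter_of_ne_one i zero_ne_one]
  | succ j =>
    cases j using Fin.cases with
    | zero =>
      exact (strictMono_pathTime k).injective ((hpath i).trans (pathTime_crossingCenter i).symm)
    | succ j =>
      have hre := (hhalf i).2 j
      rw [torusPoint_re] at hre
      rw [crossingCenter_of_ne_one i (by simp [Fin.ext_iff])]
      exact eq_half_of_cos_two_pi_mul_eq_neg_one ⟨hx.1 _, hx.2 _⟩ hre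

end InitialZeros

theorem exists_alternating_of_homotopy (hk : Even k) {σ : ℝ} (hσ : σ ^ 2 = 1)
    {v : EuclideanSpace ℝ (Fin (q + 2))} (hv : 0 ≤ σ * v 1)
    {H : ℝ → (Fin k → Fin q → Circle) → ℝ → EuclideanSpace ℝ (Fin (q + 2))}
    (hH : Continuous fun p : ℝ × (Fin k → Fin q → Circle) × ℝ => H p.1 p.2.1 p.2.2)
    (hinit : ∀ w, ∀ t ∈ Set.Icc (0 : ℝ) 1, H 0 w t = initialPath σ v w (pathTime k t))
    (hne : ∀ τ ∈ Set.Icc (0 : ℝ) 1, ∀ w, ∀ t ∈ Set.Icc (0 : ℝ) 1, H τ w t ≠ 0)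
    (hray : ∀ τ ∈ Set.Icc (0 : ℝ) 1, ∀ w, ¬ SameRay ℝ (H τ w 0) (H τ w 1)) :
    ∃ (w : Fin k → Fin q → Circle) (t : Fin k → ℝ), StrictMono t ∧
      (∀ i, t i ∈ Set.Icc (0 : ℝ) 1) ∧
        ∀ i : Fin k, SameRay ℝ (altSign i • H 1 w 0) (H 1 w (t i)) := by
  have hσ0 : σ ≠ 0 := by rintro rfl; norm_num at hσ
  have h0 : (0 : ℝ) ∈ Set.Icc (0 : ℝ) 1 := by simp
  have h1 : (1 : ℝ) ∈ Set.Icc (0 : ℝ) 1 := by simp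
  obtain ⟨x, hx, hzero⟩ := exists_zero_of_homotopy
    (fun a : Fin k × Fin (q + 2) => a.2 ≠ 0 ∧ a.2 ≠ 1) (continuous_alternationMap σ hH)
    (fun τ x a ha => alternationMap_update_of_periodic σ (H τ) x ha.1 ha.2)
    (fun τ hτ x hx a ha hxa h => by
      obtain ⟨hradial, htime, -⟩ :=
        mem_Ioo_of_alternationMap_eq_zero hk hσ0 (hne τ hτ) (hray τ hτ) hx h
      have hmem : x a ∈ Set.Ioo (0 : ℝ) 1 := by
        obtain ⟨i, j⟩ := a
        rcases not_and_or.1 ha with hj | hj <;> obtain rfl := not_not.1 hj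
        exacts [hradial i, htime i]
      exact hxa.elim hmem.1.ne' hmem.2.ne)
    crossingCenter_mem_Ioo (r := 1 / (4 * (k + 1))) (by positivity)
    (fun x hx h => by
      rw [eq_crossingCenter_of_alternationMap_eq_zero hk hσ hv hinit (hne 0 h0) (hray 0 h0) hx h]
      exact Metric.mem_ball_self (by positivity))
    (fun x hx a => alternationMap_initialPath_neg_iff hσ hinit hx a)
  obtain ⟨hradial, htime, hmono, hcrossing⟩ :=
    mem_Ioo_of_alternationMap_eq_zero hk hσ0 (hne 1 h1) (hray 1 h1) hx hzero
  refine ⟨torusPoint x, fun i => x (i, 1), hmono, fun i => Set.Ioo_subset_Icc_self (htime i),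
    fun i => sameRay_of_smul_eq_smul (hradial i) ?_⟩
  rw [← smul_eq_smul_of_alternationMap_eq_zero hσ0 hzero i, hcrossing]

lemma hasDerivAt_initialPath_pathTime {σ : ℝ} {v : EuclideanSpace ℝ (Fin (q + 2))}
    (w : Fin k → Fin q → Circle) (t : ℝ) :
    HasDerivAt (fun t => initialPath σ v w (pathTime k t))
      (((k : ℝ) + 1) • deriv (initialPath σ v w) (pathTime k t)) t :=
  (hasDerivAt_initialPath w _).differentiableAt.hasDerivAt.scomp t (hasDerivAt_pathTime k t)

lemma continuous_deriv_initialPath_pathTime {σ : ℝ} {v : EuclideanSpace ℝ (Fin (q + 2))} :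
    Continuous fun p : (Fin k → Fin q → Circle) × ℝ =>
      deriv (fun t => initialPath σ v p.1 (pathTime k t)) p.2 := by
  simp only [(hasDerivAt_initialPath_pathTime _ _).deriv]
  exact (continuous_deriv_initialPath (continuous_pathTime k)).const_smul ((k : ℝ) + 1)

/-- A torus of paths such that every homotopic torus of paths contains one which meets alternately,
`k` times, the two rays spanned by the opposite of its initial point and by its initial point. -/
theorem exists_alternating_family (hk : Even k)
    {g : EuclideanSpace ℝ (Fin (q + 2)) → EuclideanSpace ℝ (Fin (q + 2))}
    (hg : ∀ v, v ≠ 0 → ¬ SameRay ℝ v (g v)) :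
    ∃ y : (Fin k → Fin q → Circle) → ℝ → EuclideanSpace ℝ (Fin (q + 2)),
      (∀ w, Differentiable ℝ (y w)) ∧
      (Continuous fun p : (Fin k → Fin q → Circle) × ℝ => deriv (y p.1) p.2) ∧
      (∀ w, ∀ t ∈ Set.Icc (0 : ℝ) 1, y w t ≠ 0) ∧ (∀ w, y w 1 = g (y w 0)) ∧
      ∀ H : ℝ → (Fin k → Fin q → Circle) → ℝ → EuclideanSpace ℝ (Fin (q + 2)),
        (Continuous fun p : ℝ × (Fin k → Fin q → Circle) × ℝ => H p.1 p.2.1 p.2.2) →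
        (∀ w, ∀ t ∈ Set.Icc (0 : ℝ) 1, H 0 w t = y w t) →
        (∀ τ ∈ Set.Icc (0 : ℝ) 1, ∀ w, ∀ t ∈ Set.Icc (0 : ℝ) 1, H τ w t ≠ 0) →
        (∀ τ ∈ Set.Icc (0 : ℝ) 1, ∀ w, H τ w 1 = g (H τ w 0)) →
        ∃ (w : Fin k → Fin q → Circle) (t : Fin k → ℝ), StrictMono t ∧
          (∀ i, t i ∈ Set.Icc (0 : ℝ) 1) ∧
          ∀ i : Fin k, SameRay ℝ (altSign i • H 1 w 0) (H 1 w (t i)) := by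
  obtain ⟨v, hv⟩ : ∃ v, v = g (EuclideanSpace.single 0 1) := ⟨_, rfl⟩
  have hv0 : v ≠ 0 := fun h => hg (EuclideanSpace.single 0 1) (by simp) (by
    rw [← hv, h]; exact SameRay.zero_right _)
  obtain ⟨σ, hσ, hσv⟩ : ∃ σ : ℝ, σ ^ 2 = 1 ∧ 0 ≤ σ * v 1 := by
    rcases le_total 0 (v 1) with h | h
    · exact ⟨1, by norm_num, by linarith⟩
    · exact ⟨-1, by norm_num, by linarith⟩
  refine ⟨fun w t => initialPath σ v w (pathTime k t),
    fun w t => (hasDerivAt_initialPath_pathTime w t).differentiableAt,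
    continuous_deriv_initialPath_pathTime, fun w t ht => ?_, fun w => ?_, ?_⟩
  · exact initialPath_ne_zero hk hσ hσv hv0 w (pathTime_mem_Icc ht)
  · simp only [pathTime_one, pathTime_zero, initialPath_start, initialPath_end, hv]
  · intro H hH hinit hne hend
    refine exists_alternating_of_homotopy hk hσ hσv hH hinit hne fun τ hτ w => ?_
    rw [hend τ hτ w]
    exact hg _ (hne τ hτ w 0 (by simp))

end AlternatingFamily

/-! ### Twisted paths and the action functional -/

section L2NormSq

variable {E : Type*} [NormedAddCommGroup E] {P : ℝ}

/-- The squared `L²` norm of a path on `[0, P]`. -/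
noncomputable def l2NormSq (P : ℝ) (u : ℝ → E) : ℝ := ∫ t in (0 : ℝ)..P, ‖u t‖ ^ 2

lemma l2NormSq_nonneg (hP : 0 ≤ P) (u : ℝ → E) : 0 ≤ l2NormSq P u :=
  intervalIntegral.integral_nonneg hP fun _ _ => sq_nonneg _

lemma l2NormSq_smul [NormedSpace ℝ E] (a : ℝ) (u : ℝ → E) :
    l2NormSq P (a • u) = a ^ 2 * l2NormSq P u := by
  simp only [l2NormSq, Pi.smul_apply, norm_smul, mul_pow, Real.norm_eq_abs, sq_abs,
    intervalIntegral.integral_const_mul]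

lemma l2NormSq_le_two_mul_add {F G : Type*} [NormedAddCommGroup F] [NormedAddCommGroup G]
    (hP : 0 ≤ P) {u : ℝ → E} {v : ℝ → F} {w : ℝ → G} (hu : Continuous u) (hv : Continuous v)
    (hw : Continuous w) (h : ∀ t ∈ Set.Icc 0 P, ‖w t‖ ≤ ‖u t‖ + ‖v t‖) :
    l2NormSq P w ≤ 2 * l2NormSq P u + 2 * l2NormSq P v := by
  simp only [l2NormSq]
  rw [← intervalIntegral.integral_const_mul, ← intervalIntegral.integral_const_mul,
    ← intervalIntegral.integral_add]
  · refine intervalIntegral.integral_mono_on hP (Continuous.intervalIntegrable (by fun_prop) _ _)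
      (Continuous.intervalIntegrable (by fun_prop) _ _) fun t ht => ?_
    nlinarith [pow_le_pow_left₀ (norm_nonneg _) (h t ht) 2, sq_nonneg (‖u t‖ - ‖v t‖)]
  all_goals exact Continuous.intervalIntegrable (by fun_prop) _ _

lemma l2NormSq_sub [InnerProductSpace ℝ E] {u v : ℝ → E} (hu : Continuous u) (hv : Continuous v) :
    l2NormSq P (u - v)
      = l2NormSq P u - 2 * (∫ t in (0 : ℝ)..P, inner ℝ (u t) (v t)) + l2NormSq P v := by
  simp only [l2NormSq, Pi.sub_apply, norm_sub_sq_real]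
  rw [intervalIntegral.integral_add, intervalIntegral.integral_sub,
    intervalIntegral.integral_const_mul]
  all_goals exact Continuous.intervalIntegrable (by fun_prop) _ _

lemma sq_integral_norm_le (hP : 0 < P) {v : ℝ → E} (hv : Continuous v) :
    (∫ t in (0 : ℝ)..P, ‖v t‖) ^ 2 ≤ P * l2NormSq P v := by
  set m := ∫ t in (0 : ℝ)..P, ‖v t‖ with hm
  have hvariance := l2NormSq_nonneg hP.le ((fun t => ‖v t‖) - fun _ => m / P)
  rw [l2NormSq_sub hv.norm continuous_const] at hvariance
  simp only [l2NormSq, RCLike.inner_apply, conj_trivial, Real.norm_eq_abs, sq_abs,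
    intervalIntegral.integral_const_mul, intervalIntegral.integral_const, ← hm, smul_eq_mul,
    sub_zero] at hvariance ⊢
  have : m / P * m = m ^ 2 / P := by ring
  have : P * (m / P) ^ 2 = m ^ 2 / P := by field_simp
  rw [← div_le_iff₀' hP]
  linarith

end L2NormSq

section TwistedPrimitive

variable {E : Type*} [NormedAddCommGroup E] [InnerProductSpace ℝ E] {P : ℝ} {B : E →L[ℝ] E}

/-- The path with velocity `u` which starts at `B (∫ t in 0..P, u t)`. If `A ∘ B = B + 1`, it
satisfies the twisted boundary condition `x P = A (x 0)`. -/
noncomputable def twistedPrimitive (P : ℝ) (B : E →L[ℝ] E) (u : ℝ → E) (t : ℝ) : E :=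
  B (∫ s in (0 : ℝ)..P, u s) + ∫ s in (0 : ℝ)..t, u s

lemma twistedPrimitive_twist {A : E → E} (hB : ∀ v, A (B v) = B v + v) (u : ℝ → E) :
    twistedPrimitive P B u P = A (twistedPrimitive P B u 0) := by
  simp [twistedPrimitive, hB]

lemma twistedPrimitive_smul (a : ℝ) (u : ℝ → E) :
    twistedPrimitive P B (a • u) = a • twistedPrimitive P B u := by
  funext t
  simp only [twistedPrimitive, Pi.smul_apply, intervalIntegral.integral_smul, map_smul, smul_add]

lemma twistedPrimitive_sub {u v : ℝ → E} (hu : Continuous u) (hv : Continuous v) :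
    twistedPrimitive P B (u - v) = twistedPrimitive P B u - twistedPrimitive P B v := by
  funext t
  have hsub : ∀ b, ∫ s in (0 : ℝ)..b, (u - v) s
      = (∫ s in (0 : ℝ)..b, u s) - ∫ s in (0 : ℝ)..b, v s := fun b =>
    intervalIntegral.integral_sub (hu.intervalIntegrable _ _) (hv.intervalIntegrable _ _)
  simp only [twistedPrimitive, Pi.sub_apply _ _ t, hsub, map_sub]
  abel

lemma twistedPrimitive_congr {u v : ℝ → E} (huv : ∀ t ∈ Set.Icc 0 P, u t = v t) {t : ℝ}
    (ht : t ∈ Set.Icc 0 P) : twistedPrimitive P B u t = twistedPrimitive P B v t := by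
  have hint : ∀ b ∈ Set.Icc 0 P, ∫ s in (0 : ℝ)..b, u s = ∫ s in (0 : ℝ)..b, v s := fun b hb =>
    intervalIntegral.integral_congr fun s hs => huv s <|
      Set.uIcc_subset_Icc (Set.left_mem_Icc.2 (hb.1.trans hb.2)) hb hs
  simp only [twistedPrimitive, hint t ht, hint P (Set.right_mem_Icc.2 (ht.1.trans ht.2))]

lemma norm_twistedPrimitive_le {u : ℝ → E} (hu : Continuous u) {t : ℝ}
    (ht : t ∈ Set.Icc 0 P) :
    ‖twistedPrimitive P B u t‖ ≤ (‖B‖ + 1) * ∫ s in (0 : ℝ)..P, ‖u s‖ := by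
  have hfull : ‖∫ s in (0 : ℝ)..P, u s‖ ≤ ∫ s in (0 : ℝ)..P, ‖u s‖ :=
    intervalIntegral.norm_integral_le_integral_norm (ht.1.trans ht.2)
  have hpart : ‖∫ s in (0 : ℝ)..t, u s‖ ≤ ∫ s in (0 : ℝ)..P, ‖u s‖ :=
    (intervalIntegral.norm_integral_le_integral_norm ht.1).trans
      (intervalIntegral.integral_mono_interval le_rfl ht.1 ht.2
        (.of_forall fun _ => norm_nonneg _) (hu.norm.intervalIntegrable _ _))
  calc ‖twistedPrimitive P B u t‖
      ≤ ‖B (∫ s in (0 : ℝ)..P, u s)‖ + ‖∫ s in (0 : ℝ)..t, u s‖ := norm_add_le _ _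
    _ ≤ ‖B‖ * (∫ s in (0 : ℝ)..P, ‖u s‖) + ∫ s in (0 : ℝ)..P, ‖u s‖ := by
        gcongr
        exact (B.le_opNorm _).trans (by gcongr)
    _ = (‖B‖ + 1) * ∫ s in (0 : ℝ)..P, ‖u s‖ := by ring

lemma sq_norm_twistedPrimitive_le (hP : 0 < P) {u : ℝ → E} (hu : Continuous u) {t : ℝ}
    (ht : t ∈ Set.Icc 0 P) :
    ‖twistedPrimitive P B u t‖ ^ 2 ≤ (‖B‖ + 1) ^ 2 * P * l2NormSq P u :=
  calc ‖twistedPrimitive P B u t‖ ^ 2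
      ≤ ((‖B‖ + 1) * ∫ s in (0 : ℝ)..P, ‖u s‖) ^ 2 := by
        gcongr
        exact norm_twistedPrimitive_le hu ht
    _ ≤ (‖B‖ + 1) ^ 2 * (P * l2NormSq P u) := by
        rw [mul_pow]
        gcongr
        exact sq_integral_norm_le hP hu
    _ = (‖B‖ + 1) ^ 2 * P * l2NormSq P u := by ring

lemma norm_twistedPrimitive_le_of_norm_le {u : ℝ → E} (hu : Continuous u) {M : ℝ}
    (hM : ∀ t ∈ Set.Icc 0 P, ‖u t‖ ≤ M) {t : ℝ} (ht : t ∈ Set.Icc 0 P) :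
    ‖twistedPrimitive P B u t‖ ≤ (‖B‖ + 1) * (M * P) := by
  refine (norm_twistedPrimitive_le hu ht).trans ?_
  have hmean : ∫ s in (0 : ℝ)..P, ‖u s‖ ≤ ∫ _ in (0 : ℝ)..P, M :=
    intervalIntegral.integral_mono_on (ht.1.trans ht.2) (hu.norm.intervalIntegrable _ _)
      (continuous_const.intervalIntegrable _ _) hM
  gcongr
  simpa [mul_comm] using hmean

lemma norm_twistedPrimitive_sub_le {u : ℝ → E} (hu : Continuous u) {M : ℝ}
    (hM : ∀ t ∈ Set.Icc 0 P, ‖u t‖ ≤ M) {s t : ℝ} (hs : s ∈ Set.Icc 0 P)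
    (ht : t ∈ Set.Icc 0 P) :
    ‖twistedPrimitive P B u s - twistedPrimitive P B u t‖ ≤ M * |s - t| := by
  rw [twistedPrimitive, twistedPrimitive, add_sub_add_left_eq_sub,
    intervalIntegral.integral_interval_sub_left (hu.intervalIntegrable _ _)
      (hu.intervalIntegrable _ _)]
  exact intervalIntegral.norm_integral_le_of_norm_le_const fun r hr =>
    hM r (Set.uIcc_subset_Icc ht hs (Set.uIoc_subset_uIcc hr))

variable [CompleteSpace E]

lemma hasDerivAt_twistedPrimitive {u : ℝ → E} (hu : Continuous u) (t : ℝ) :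
    HasDerivAt (twistedPrimitive P B u) (u t) t :=
  (hu.integral_hasStrictDerivAt 0 t).hasDerivAt.const_add _

lemma continuous_twistedPrimitive {u : ℝ → E} (hu : Continuous u) :
    Continuous (twistedPrimitive P B u) :=
  continuous_iff_continuousAt.2 fun t => (hasDerivAt_twistedPrimitive hu t).continuousAt

lemma twistedPrimitive_add_period {A : E ≃ₗᵢ[ℝ] E} (hB : ∀ v, A (B v) = B v + v) {u : ℝ → E}
    (hu : Continuous u) (htwist : ∀ t, u (t + P) = A (u t)) (t : ℝ) :
    twistedPrimitive P B u (t + P) = A (twistedPrimitive P B u t) := by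
  have hshift : ∫ s in P..(t + P), u s = A (∫ s in (0 : ℝ)..t, u s) := by
    have hcomp : ∫ s in (0 : ℝ)..t, u (s + P) = ∫ s in P..(t + P), u s := by
      rw [intervalIntegral.integral_comp_add_right, zero_add]
    rw [← hcomp]
    simp only [htwist]
    exact ContinuousLinearMap.intervalIntegral_comp_comm
      (A.toContinuousLinearEquiv : E →L[ℝ] E) (hu.intervalIntegrable _ _)
  rw [twistedPrimitive, twistedPrimitive, map_add, hB, ← hshift, add_assoc,
    intervalIntegral.integral_add_adjacent_intervals (hu.intervalIntegrable _ _)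
      (hu.intervalIntegrable _ _)]

/-- The boundary terms of the integration by parts cancel because `A` is an isometry. -/
lemma integral_inner_twistedPrimitive {A : E ≃ₗᵢ[ℝ] E} (hB : ∀ v, A (B v) = B v + v)
    {u v : ℝ → E} (hu : Continuous u) (hv : Continuous v) :
    ∫ t in (0 : ℝ)..P, inner ℝ (u t) (twistedPrimitive P B v t)
      = -∫ t in (0 : ℝ)..P, inner ℝ (twistedPrimitive P B u t) (v t) := by
  have hTu : Continuous (twistedPrimitive P B u) := continuous_twistedPrimitive hu
  have hTv : Continuous (twistedPrimitive P B v) := continuous_twistedPrimitive hv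
  have hparts := intervalIntegral.integral_eq_sub_of_hasDerivAt (a := 0) (b := P)
    (fun t _ => (hasDerivAt_twistedPrimitive (P := P) (B := B) hu t).inner ℝ
      (hasDerivAt_twistedPrimitive (P := P) (B := B) hv t))
    (Continuous.intervalIntegrable (by fun_prop) _ _)
  rw [twistedPrimitive_twist hB, twistedPrimitive_twist hB, A.inner_map_map, sub_self,
    intervalIntegral.integral_add (Continuous.intervalIntegrable (by fun_prop) _ _)
      (Continuous.intervalIntegrable (by fun_prop) _ _)] at hparts
  linarith

end TwistedPrimitive

/-- A time-dependent nonpositive potential `W` on `domain`, with gradient `gradW`, and a linear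
isometry `A` without nonzero fixed point; the gradient is equivariant under the shift of time by
`P` and `A`. The field `taylor` encodes the `C²` regularity of `W`. -/
structure TwistedPotential (E : Type*) [NormedAddCommGroup E] [InnerProductSpace ℝ E]
    (P : ℝ) (A : E ≃ₗᵢ[ℝ] E) where
  W : ℝ → E → ℝ
  gradW : ℝ → E → E
  domain : Set E
  /-- The inverse of `A - 1`. -/
  B : E →L[ℝ] E
  period_pos : 0 < P
  twist_B : ∀ v, A (B v) = B v + v
  continuousOn_W : ContinuousOn (fun p : ℝ × E => W p.1 p.2) (Set.univ ×ˢ domain)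
  continuousOn_gradW : ContinuousOn (fun p : ℝ × E => gradW p.1 p.2) (Set.univ ×ˢ domain)
  nonpos : ∀ t, ∀ x ∈ domain, W t x ≤ 0
  taylor : ∀ K ⊆ domain, IsCompact K → ∃ L > 0, ∃ r > 0, ∀ t ∈ Set.Icc 0 P, ∀ x ∈ K, ∀ z : E,
    ‖z‖ ≤ r → x + z ∈ domain ∧ |W t (x + z) - W t x - inner ℝ (gradW t x) z| ≤ L * ‖z‖ ^ 2
  map_mem_iff : ∀ x, A x ∈ domain ↔ x ∈ domain
  gradW_twist : ∀ t, ∀ x ∈ domain, gradW (t + P) (A x) = A (gradW t x)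

namespace TwistedPotential

section Action

variable {E : Type*} [NormedAddCommGroup E] [InnerProductSpace ℝ E]
  {P : ℝ} {A : E ≃ₗᵢ[ℝ] E} (S : TwistedPotential E P A)

/-- The twisted path with a given velocity. -/
noncomputable abbrev path (u : ℝ → E) : ℝ → E := twistedPrimitive P S.B u

/-- The action of the twisted path with velocity `u`, the kinetic energy being `‖u‖² / 2`. -/
noncomputable def action (u : ℝ → E) : ℝ :=
  1 / 2 * l2NormSq P u - ∫ t in (0 : ℝ)..P, S.W t (S.path u t)

/-- Continuous velocities whose twisted path avoids the singularities. -/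
def IsAdmissible (u : ℝ → E) : Prop :=
  Continuous u ∧ ∀ t ∈ Set.Icc 0 P, S.path u t ∈ S.domain

/-- The paths of bounded action stay in a compact set of nonsingular positions. This is what the
strong force condition is for. -/
def HasCompactSublevels : Prop :=
  ∀ b : ℝ, ∃ K ⊆ S.domain, IsCompact K ∧
    ∀ u, S.IsAdmissible u → S.action u ≤ b → ∀ t ∈ Set.Icc 0 P, S.path u t ∈ K

/-- The gradient of the potential along the path with velocity `u`, extended by constants outside
`[0, P]`. -/
noncomputable def force (u : ℝ → E) : ℝ → E :=
  Set.IccExtend S.period_pos.le fun t => S.gradW t (S.path u t)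

variable {S}

lemma force_of_mem {u : ℝ → E} {t : ℝ} (ht : t ∈ Set.Icc 0 P) :
    S.force u t = S.gradW t (S.path u t) :=
  Set.IccExtend_of_mem _ _ ht

lemma exists_gradW_bound {K : Set E} (hK : IsCompact K) (hKS : K ⊆ S.domain) :
    ∃ M, ∀ t ∈ Set.Icc 0 P, ∀ x ∈ K, ‖S.gradW t x‖ ≤ M := by
  obtain ⟨M, hM⟩ := ((isCompact_Icc (a := 0) (b := P)).prod hK).exists_bound_of_continuousOn
    (S.continuousOn_gradW.mono (Set.prod_mono (Set.subset_univ _) hKS))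
  exact ⟨M, fun t ht x hx => hM (t, x) ⟨ht, hx⟩⟩

lemma exists_W_bound {K : Set E} (hK : IsCompact K) (hKS : K ⊆ S.domain) :
    ∃ M, ∀ t ∈ Set.Icc 0 P, ∀ x ∈ K, ‖S.W t x‖ ≤ M := by
  obtain ⟨M, hM⟩ := ((isCompact_Icc (a := 0) (b := P)).prod hK).exists_bound_of_continuousOn
    (S.continuousOn_W.mono (Set.prod_mono (Set.subset_univ _) hKS))
  exact ⟨M, fun t ht x hx => hM (t, x) ⟨ht, hx⟩⟩

lemma HasCompactSublevels.exists_force_bound (hS : S.HasCompactSublevels) (b : ℝ) :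
    ∃ M, ∀ u, S.IsAdmissible u → S.action u ≤ b → ∀ t ∈ Set.Icc 0 P, ‖S.force u t‖ ≤ M := by
  obtain ⟨K, hKS, hK, hpath⟩ := hS b
  obtain ⟨M, hM⟩ := exists_gradW_bound hK hKS
  refine ⟨M, fun u hu hub t ht => ?_⟩
  rw [force_of_mem ht]
  exact hM t ht _ (hpath u hu hub t ht)

lemma intervalIntegrable_W {x : ℝ → E} (hx : Continuous x)
    (hxS : ∀ t ∈ Set.Icc 0 P, x t ∈ S.domain) :
    IntervalIntegrable (fun t => S.W t (x t)) MeasureTheory.volume 0 P := by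
  refine ContinuousOn.intervalIntegrable ?_
  rw [Set.uIcc_of_le S.period_pos.le]
  exact S.continuousOn_W.comp (f := fun t => (t, x t)) (by fun_prop)
    fun t ht => ⟨Set.mem_univ _, hxS t ht⟩

end Action

section Gradient

variable {E : Type*} [NormedAddCommGroup E] [InnerProductSpace ℝ E] [CompleteSpace E]
  {P : ℝ} {A : E ≃ₗᵢ[ℝ] E} (S : TwistedPotential E P A)

/-- The gradient of the action, for the `L²` inner product of velocities. -/
noncomputable def gradient (u : ℝ → E) : ℝ → E := u + S.path (S.force u)

/-- The critical points of the action. -/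
def IsCritical (u : ℝ → E) : Prop :=
  S.IsAdmissible u ∧ ∀ t ∈ Set.Icc 0 P, u t = -S.path (S.force u) t

variable {S} {u q : ℝ → E}

lemma IsAdmissible.continuous_path (hu : S.IsAdmissible u) : Continuous (S.path u) :=
  continuous_twistedPrimitive hu.1

lemma IsAdmissible.continuous_force (hu : S.IsAdmissible u) : Continuous (S.force u) := by
  refine continuous_IccExtend_iff.2 (S.continuousOn_gradW.comp_continuous
    (f := fun t : Set.Icc 0 P => ((t : ℝ), S.path u t)) ?_ fun t => ⟨Set.mem_univ _, hu.2 t t.2⟩)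
  exact continuous_subtype_val.prodMk (hu.continuous_path.comp continuous_subtype_val)

lemma IsAdmissible.continuous_gradient (hu : S.IsAdmissible u) : Continuous (S.gradient u) :=
  hu.1.add (continuous_twistedPrimitive hu.continuous_force)

lemma IsAdmissible.l2NormSq_le (hu : S.IsAdmissible u) : l2NormSq P u ≤ 2 * S.action u := by
  have hW : ∫ t in (0 : ℝ)..P, S.W t (S.path u t) ≤ 0 := by
    simpa using intervalIntegral.integral_mono_on S.period_pos.le
      (intervalIntegrable_W hu.continuous_path hu.2)
      (intervalIntegrable_const (c := (0 : ℝ))) fun t ht => S.nonpos t _ (hu.2 t ht)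
  unfold action
  linarith

lemma HasCompactSublevels.exists_gradient_bound (hS : S.HasCompactSublevels) (b : ℝ) :
    ∃ C > 0, ∀ u, S.IsAdmissible u → S.action u ≤ b → l2NormSq P (S.gradient u) ≤ C := by
  obtain ⟨M, hM⟩ := hS.exists_force_bound b
  set R := (‖S.B‖ + 1) * (M * P)
  have hP := S.period_pos
  refine ⟨4 * |b| + 2 * (R ^ 2 * P) + 1, by positivity, fun u hu hub => ?_⟩
  have hle := l2NormSq_le_two_mul_add hP.le hu.1 (continuous_const (y := R))
    hu.continuous_gradient fun t ht => (norm_add_le _ _).trans <| by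
      gcongr
      exact (norm_twistedPrimitive_le_of_norm_le hu.continuous_force (hM u hu hub) ht).trans
        (le_abs_self R)
  have hR : l2NormSq P (fun _ => R) = R ^ 2 * P := by simp [l2NormSq, mul_comm]
  linarith [hu.l2NormSq_le, le_abs_self b]

lemma IsAdmissible.integral_inner_gradient (hu : S.IsAdmissible u) (hq : Continuous q) :
    ∫ t in (0 : ℝ)..P, inner ℝ (S.gradient u t) (q t)
      = (∫ t in (0 : ℝ)..P, inner ℝ (u t) (q t))
        - ∫ t in (0 : ℝ)..P, inner ℝ (S.force u t) (S.path q t) := by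
  have hpath : Continuous (S.path (S.force u)) := continuous_twistedPrimitive hu.continuous_force
  have := hu.1
  simp only [gradient, Pi.add_apply, inner_add_left]
  rw [intervalIntegral.integral_add (Continuous.intervalIntegrable (by fun_prop) _ _)
    (Continuous.intervalIntegrable (by fun_prop) _ _),
    integral_inner_twistedPrimitive S.twist_B hu.continuous_force hq, sub_neg_eq_add]

lemma integral_W_sub_ge (hu : S.IsAdmissible u) (hq : Continuous q) {ε : ℝ}
    (hmem : ∀ t ∈ Set.Icc 0 P, S.path u t - S.path q t ∈ S.domain)
    (hε : ∀ t ∈ Set.Icc 0 P, S.W t (S.path u t) - inner ℝ (S.force u t) (S.path q t) - ε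
      ≤ S.W t (S.path u t - S.path q t)) :
    (∫ t in (0 : ℝ)..P, S.W t (S.path u t))
        - (∫ t in (0 : ℝ)..P, inner ℝ (S.force u t) (S.path q t)) - ε * P
      ≤ ∫ t in (0 : ℝ)..P, S.W t (S.path u t - S.path q t) := by
  have hpath : Continuous (S.path q) := continuous_twistedPrimitive hq
  have hW := intervalIntegrable_W hu.continuous_path hu.2
  have hinner : IntervalIntegrable (fun t => inner ℝ (S.force u t) (S.path q t))
      MeasureTheory.volume 0 P :=
    (hu.continuous_force.inner hpath).intervalIntegrable _ _
  have hmono := intervalIntegral.integral_mono_on S.period_pos.le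
    ((hW.sub hinner).sub intervalIntegrable_const)
    (intervalIntegrable_W (hu.continuous_path.sub hpath) hmem) hε
  rwa [intervalIntegral.integral_sub (hW.sub hinner) intervalIntegrable_const,
    intervalIntegral.integral_sub hW hinner, intervalIntegral.integral_const, sub_zero,
    smul_eq_mul, mul_comm] at hmono

lemma HasCompactSublevels.action_sub_le (hS : S.HasCompactSublevels) (b : ℝ) :
    ∃ L > 0, ∃ δ > 0, ∀ u, S.IsAdmissible u → S.action u ≤ b → ∀ q, Continuous q →
      l2NormSq P q ≤ δ → (∀ t ∈ Set.Icc 0 P, S.path u t - S.path q t ∈ S.domain) ∧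
        S.action (u - q) ≤ S.action u - (∫ t in (0 : ℝ)..P, inner ℝ (S.gradient u t) (q t))
          + L * l2NormSq P q := by
  obtain ⟨K, hKS, hK, hpathK⟩ := hS b
  obtain ⟨L, hL, r, hr, htaylor⟩ := S.taylor K hKS hK
  have hP := S.period_pos
  set C := (‖S.B‖ + 1) ^ 2 * P
  have hC : 0 < C := by positivity
  refine ⟨1 / 2 + L * C * P, by positivity, r ^ 2 / C, by positivity, fun u hu hub q hq hδ => ?_⟩
  have hsq : ∀ t ∈ Set.Icc 0 P, ‖-S.path q t‖ ^ 2 ≤ C * l2NormSq P q := fun t ht => by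
    rw [norm_neg]
    exact sq_norm_twistedPrimitive_le hP hq ht
  have htaylor_path := fun t ht => htaylor t ht _ (hpathK u hu hub t ht) (-S.path q t)
    (le_of_sq_le_sq ((hsq t ht).trans ((le_div_iff₀' hC).1 hδ)) hr.le)
  simp only [← sub_eq_add_neg] at htaylor_path
  refine ⟨fun t ht => (htaylor_path t ht).1, ?_⟩
  have hW := integral_W_sub_ge hu hq (ε := L * (C * l2NormSq P q))
    (fun t ht => (htaylor_path t ht).1) fun t ht => by
      have hlower := (abs_le.1 (htaylor_path t ht).2).1
      rw [inner_neg_right, ← force_of_mem ht] at hlower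
      linarith [mul_le_mul_of_nonneg_left (hsq t ht) hL.le]
  rw [hu.integral_inner_gradient hq]
  simp only [action, path, l2NormSq_sub hu.1 hq, twistedPrimitive_sub hu.1 hq, Pi.sub_apply]
  linarith

lemma HasCompactSublevels.exists_descent_step (hS : S.HasCompactSublevels) (b : ℝ) :
    ∃ h > 0, ∀ u, S.IsAdmissible u → S.action u ≤ b →
      (∀ σ ∈ Set.Icc (0 : ℝ) 1, ∀ t ∈ Set.Icc 0 P,
        S.path u t - (σ * h) • S.path (S.gradient u) t ∈ S.domain) ∧
      S.action (u - h • S.gradient u) ≤ S.action u - h / 2 * l2NormSq P (S.gradient u) := by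
  obtain ⟨C, hC, hgradient⟩ := hS.exists_gradient_bound b
  obtain ⟨L, hL, δ, hδ, hexpansion⟩ := hS.action_sub_le b
  obtain ⟨h, hh, hhL, hhδ⟩ : ∃ h > 0, L * h ≤ 1 / 2 ∧ h ^ 2 * C ≤ δ := by
    refine ⟨min (1 / 2 / L) √(δ / C), by positivity, ?_, ?_⟩
    · exact (le_div_iff₀' hL).1 (min_le_left _ _)
    · rw [← le_div_iff₀ hC, ← Real.le_sqrt' (by positivity)]
      exact min_le_right _ _
  refine ⟨h, hh, fun u hu hub => ?_⟩
  have hcont := hu.continuous_gradient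
  have hsmall : ∀ σ ∈ Set.Icc (0 : ℝ) 1, l2NormSq P ((σ * h) • S.gradient u) ≤ δ := fun σ hσ =>
    calc l2NormSq P ((σ * h) • S.gradient u) = σ ^ 2 * (h ^ 2 * l2NormSq P (S.gradient u)) := by
          rw [l2NormSq_smul]; ring
      _ ≤ 1 * (h ^ 2 * C) := by
          gcongr
          · exact mul_nonneg (sq_nonneg h) (l2NormSq_nonneg S.period_pos.le _)
          · exact pow_le_one₀ hσ.1 hσ.2
          · exact hgradient u hu hub
      _ ≤ δ := by rwa [one_mul]
  refine ⟨fun σ hσ t ht => ?_, ?_⟩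
  · simpa only [path, twistedPrimitive_smul, Pi.smul_apply] using
      (hexpansion u hu hub _ (hcont.const_smul _) (hsmall σ hσ)).1 t ht
  · have hstep := (hexpansion u hu hub (h • S.gradient u) (hcont.const_smul _)
      (by simpa using hsmall 1 (by simp))).2
    simp only [Pi.smul_apply, inner_smul_right, real_inner_self_eq_norm_sq,
      intervalIntegral.integral_const_mul, l2NormSq_smul] at hstep
    have hquadratic : L * h * (h * l2NormSq P (S.gradient u))
        ≤ 1 / 2 * (h * l2NormSq P (S.gradient u)) :=
      mul_le_mul_of_nonneg_right hhL (mul_nonneg hh.le (l2NormSq_nonneg S.period_pos.le _))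
    change _ ≤ S.action u - h * l2NormSq P (S.gradient u) + _ at hstep
    linarith

end Gradient

end TwistedPotential

/-! ### The Palais–Smale condition and the deformation of families -/

section Compactness

open Filter Topology

section Limits

variable {E ι : Type*} [NormedAddCommGroup E] {P : ℝ} {l : Filter ι}

lemma tendsto_integral_norm_of_l2NormSq (hP : 0 < P) {w : ι → ℝ → E} (hw : ∀ n, Continuous (w n))
    (h : Tendsto (fun n => l2NormSq P (w n)) l (𝓝 0)) :
    Tendsto (fun n => ∫ t in (0 : ℝ)..P, ‖w n t‖) l (𝓝 0) := by
  have hsqrt : Tendsto (fun n => √(P * l2NormSq P (w n))) l (𝓝 0) := by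
    simpa using (h.const_mul P).sqrt
  exact squeeze_zero
    (fun n => intervalIntegral.integral_nonneg hP.le fun _ _ => norm_nonneg _)
    (fun n => Real.le_sqrt_of_sq_le (sq_integral_norm_le hP (hw n))) hsqrt

lemma tendsto_integral_norm_sub_of_dominated {u : ℕ → ℝ → E} {v : ℝ → E} {M : ℝ} (hP : 0 ≤ P)
    (hu : ∀ n, Continuous (u n)) (hv : Continuous v) (hM : ∀ n, ∀ t ∈ Set.Icc 0 P, ‖u n t‖ ≤ M)
    (h : ∀ t ∈ Set.Icc 0 P, Tendsto (fun n => u n t) atTop (𝓝 (v t))) :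
    Tendsto (fun n => ∫ t in (0 : ℝ)..P, ‖(u n - v) t‖) atTop (𝓝 0) := by
  have hmem : ∀ t ∈ Set.uIoc 0 P, t ∈ Set.Icc 0 P := fun t ht => by
    simpa only [Set.uIcc_of_le hP] using Set.uIoc_subset_uIcc ht
  simpa using intervalIntegral.tendsto_integral_filter_of_dominated_convergence
    (F := fun n t => ‖(u n - v) t‖) (f := fun _ => 0) (fun t => M + ‖v t‖)
    (.of_forall fun n => ((hu n).sub hv).norm.aestronglyMeasurable)
    (.of_forall fun n => .of_forall fun t ht => by
      rw [norm_norm]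
      exact (norm_sub_le _ _).trans (by gcongr; exact hM n t (hmem t ht)))
    ((continuous_const.add hv.norm).intervalIntegrable _ _)
    (.of_forall fun t ht => tendsto_iff_norm_sub_tendsto_zero.1 (h t (hmem t ht)))

variable [InnerProductSpace ℝ E] {u : ι → ℝ → E} {v : ℝ → E}

lemma tendsto_twistedPrimitive {B : E →L[ℝ] E} (hu : ∀ n, Continuous (u n)) (hv : Continuous v)
    (h : Tendsto (fun n => ∫ t in (0 : ℝ)..P, ‖(u n - v) t‖) l (𝓝 0)) {t : ℝ}
    (ht : t ∈ Set.Icc 0 P) :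
    Tendsto (fun n => twistedPrimitive P B (u n) t) l (𝓝 (twistedPrimitive P B v t)) := by
  rw [tendsto_iff_norm_sub_tendsto_zero]
  refine squeeze_zero (fun _ => norm_nonneg _) (fun n => ?_)
    (by simpa using h.const_mul (‖B‖ + 1))
  rw [← Pi.sub_apply, ← twistedPrimitive_sub (hu n) hv]
  exact norm_twistedPrimitive_le ((hu n).sub hv) ht

lemma tendsto_l2NormSq (hP : 0 < P) (hu : ∀ n, Continuous (u n)) (hv : Continuous v)
    (h : Tendsto (fun n => l2NormSq P (u n - v)) l (𝓝 0)) :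
    Tendsto (fun n => l2NormSq P (u n)) l (𝓝 (l2NormSq P v)) := by
  obtain ⟨R, hR⟩ := (isCompact_Icc (a := 0) (b := P)).exists_bound_of_continuousOn hv.continuousOn
  have hinner : Tendsto (fun n => ∫ t in (0 : ℝ)..P, inner ℝ ((u n - v) t) ((-v) t)) l (𝓝 0) := by
    refine squeeze_zero_norm (fun n => ?_) (by simpa using
      (tendsto_integral_norm_of_l2NormSq hP (fun n => (hu n).sub hv) h).mul_const R)
    rw [← intervalIntegral.integral_mul_const]
    have : Continuous (u n - v) := (hu n).sub hv
    refine (intervalIntegral.norm_integral_le_integral_norm hP.le).trans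
      (intervalIntegral.integral_mono_on hP.le
        (Continuous.intervalIntegrable (by fun_prop) _ _)
        (Continuous.intervalIntegrable (by fun_prop) _ _) fun t ht => ?_)
    exact (norm_inner_le_norm _ _).trans
      (mul_le_mul_of_nonneg_left (by simpa using hR t ht) (norm_nonneg _))
  have hexpand : ∀ n, l2NormSq P (u n) = l2NormSq P (u n - v)
      - 2 * (∫ t in (0 : ℝ)..P, inner ℝ ((u n - v) t) ((-v) t)) + l2NormSq P v := fun n => by
    have hsub := l2NormSq_sub (P := P) ((hu n).sub hv) hv.neg
    simpa [l2NormSq] using hsub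
  simp only [hexpand]
  simpa using (h.sub (hinner.const_mul 2)).add_const (l2NormSq P v)

end Limits

/-- By the Arzelà–Ascoli theorem, the twisted primitive is a compact operator. -/
lemma exists_subseq_tendsto_twistedPrimitive {E : Type*} [NormedAddCommGroup E]
    [InnerProductSpace ℝ E] [ProperSpace E] {P : ℝ} {B : E →L[ℝ] E} (hP : 0 ≤ P) {u : ℕ → ℝ → E}
    {M : ℝ} (hu : ∀ n, Continuous (u n)) (hM : ∀ n, ∀ t ∈ Set.Icc 0 P, ‖u n t‖ ≤ M) :
    ∃ k : ℝ → E, Continuous k ∧ ∃ φ : ℕ → ℕ, StrictMono φ ∧ ∃ ε : ℕ → ℝ,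
      Tendsto ε atTop (𝓝 0) ∧
        ∀ n, ∀ t ∈ Set.Icc 0 P, ‖twistedPrimitive P B (u (φ n)) t - k t‖ ≤ ε n := by
  let f (n : ℕ) : BoundedContinuousFunction (Set.Icc 0 P) E :=
    BoundedContinuousFunction.mkOfCompact ⟨fun t => twistedPrimitive P B (u n) t,
      (continuous_twistedPrimitive (hu n)).comp continuous_subtype_val⟩
  have hcompact : IsCompact (closure (Set.range f)) := by
    refine BoundedContinuousFunction.arzela_ascoli
      (Metric.closedBall 0 ((‖B‖ + 1) * (M * P))) (isCompact_closedBall _ _) _ ?_ ?_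
    · rintro _ t ⟨n, rfl⟩
      exact mem_closedBall_zero_iff.2 (norm_twistedPrimitive_le_of_norm_le (hu n) (hM n) t.2)
    · refine Metric.equicontinuous_of_continuity_modulus (fun δ => M * δ) ?_ _ ?_
      · simpa using (tendsto_id (x := 𝓝 (0 : ℝ))).const_mul M
      · rintro t t' ⟨_, n, rfl⟩
        rw [dist_eq_norm]
        exact norm_twistedPrimitive_sub_le (hu n) (hM n) t.2 t'.2
  obtain ⟨k, -, φ, hφ, hlim⟩ := hcompact.tendsto_subseq fun n => subset_closure ⟨n, rfl⟩
  refine ⟨Set.IccExtend hP k, k.continuous.Icc_extend', φ, hφ, fun n => dist (f (φ n)) k,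
    tendsto_iff_dist_tendsto_zero.1 hlim, fun n t ht => ?_⟩
  rw [Set.IccExtend_of_mem _ _ ht, ← dist_eq_norm]
  exact BoundedContinuousFunction.dist_coe_le_dist (f := f (φ n)) (⟨t, ht⟩ : Set.Icc 0 P)

namespace TwistedPotential

section PalaisSmale

variable {E : Type*} [NormedAddCommGroup E] [InnerProductSpace ℝ E]
  {P : ℝ} {A : E ≃ₗᵢ[ℝ] E} {S : TwistedPotential E P A} {u : ℕ → ℝ → E} {v : ℝ → E}

lemma IsAdmissible.tendsto_graph_path (hu : ∀ n, S.IsAdmissible (u n))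
    (h : ∀ t ∈ Set.Icc 0 P, Tendsto (fun n => S.path (u n) t) atTop (𝓝 (S.path v t)))
    {t : ℝ} (ht : t ∈ Set.Icc 0 P) :
    Tendsto (fun n => (t, S.path (u n) t)) atTop (𝓝[Set.univ ×ˢ S.domain] (t, S.path v t)) :=
  tendsto_nhdsWithin_iff.2 ⟨tendsto_const_nhds.prodMk_nhds (h t ht),
    .of_forall fun n => ⟨Set.mem_univ _, (hu n).2 t ht⟩⟩

lemma HasCompactSublevels.isAdmissible_of_tendsto (hS : S.HasCompactSublevels) {b : ℝ}
    (hu : ∀ n, S.IsAdmissible (u n)) (hub : ∀ n, S.action (u n) ≤ b) (hv : Continuous v)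
    (h : ∀ t ∈ Set.Icc 0 P, Tendsto (fun n => S.path (u n) t) atTop (𝓝 (S.path v t))) :
    S.IsAdmissible v := by
  obtain ⟨K, hKS, hK, hpath⟩ := hS b
  exact ⟨hv, fun t ht => hKS <| hK.isClosed.mem_of_tendsto (h t ht) <|
    .of_forall fun n => hpath _ (hu n) (hub n) t ht⟩

lemma HasCompactSublevels.tendsto_action [CompleteSpace E] (hS : S.HasCompactSublevels) {b : ℝ}
    (hu : ∀ n, S.IsAdmissible (u n)) (hub : ∀ n, S.action (u n) ≤ b) (hv : S.IsAdmissible v)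
    (hL2 : Tendsto (fun n => l2NormSq P (u n - v)) atTop (𝓝 0))
    (h : ∀ t ∈ Set.Icc 0 P, Tendsto (fun n => S.path (u n) t) atTop (𝓝 (S.path v t))) :
    Tendsto (fun n => S.action (u n)) atTop (𝓝 (S.action v)) := by
  obtain ⟨K, hKS, hK, hpath⟩ := hS b
  obtain ⟨M, hM⟩ := exists_W_bound hK hKS
  have hmem : ∀ t ∈ Set.uIoc 0 P, t ∈ Set.Icc 0 P := fun t ht => by
    simpa only [Set.uIcc_of_le S.period_pos.le] using Set.uIoc_subset_uIcc ht
  have hpotential : Tendsto (fun n => ∫ t in (0 : ℝ)..P, S.W t (S.path (u n) t)) atTop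
      (𝓝 (∫ t in (0 : ℝ)..P, S.W t (S.path v t))) :=
    intervalIntegral.tendsto_integral_filter_of_dominated_convergence (fun _ => M)
      (.of_forall fun n => (intervalIntegrable_W (hu n).continuous_path
        (hu n).2).aestronglyMeasurable_restrict_uIoc)
      (.of_forall fun n => .of_forall fun t ht =>
        hM t (hmem t ht) _ (hpath _ (hu n) (hub n) t (hmem t ht)))
      intervalIntegrable_const
      (.of_forall fun t ht =>
        (S.continuousOn_W _ ⟨Set.mem_univ _, hv.2 t (hmem t ht)⟩).tendsto.comp
          (IsAdmissible.tendsto_graph_path hu h (hmem t ht)))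
  exact ((tendsto_l2NormSq S.period_pos (fun n => (hu n).1) hv.1 hL2).const_mul _).sub hpotential

lemma HasCompactSublevels.isCritical_of_tendsto [CompleteSpace E] (hS : S.HasCompactSublevels)
    {b : ℝ} (hu : ∀ n, S.IsAdmissible (u n)) (hub : ∀ n, S.action (u n) ≤ b)
    (hv : S.IsAdmissible v)
    (h : ∀ t ∈ Set.Icc 0 P, Tendsto (fun n => S.path (u n) t) atTop (𝓝 (S.path v t)))
    (hforce : ∀ t ∈ Set.Icc 0 P,
      Tendsto (fun n => S.path (S.force (u n)) t) atTop (𝓝 (-v t))) :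
    S.IsCritical v := by
  obtain ⟨M, hM⟩ := hS.exists_force_bound b
  have hlim : ∀ t ∈ Set.Icc 0 P,
      Tendsto (fun n => S.force (u n) t) atTop (𝓝 (S.force v t)) := fun t ht => by
    simp only [force_of_mem ht]
    exact (S.continuousOn_gradW _ ⟨Set.mem_univ _, hv.2 t ht⟩).tendsto.comp
      (IsAdmissible.tendsto_graph_path hu h ht)
  have hcont := fun n => (hu n).continuous_force
  refine ⟨hv, fun t ht => ?_⟩
  refine neg_eq_iff_eq_neg.1 (tendsto_nhds_unique (hforce t ht)
    (tendsto_twistedPrimitive hcont hv.continuous_force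
      (tendsto_integral_norm_sub_of_dominated S.period_pos.le hcont hv.continuous_force
        (fun n => hM _ (hu n) (hub n)) hlim) ht))

lemma HasCompactSublevels.palais_smale [ProperSpace E] (hS : S.HasCompactSublevels) {b : ℝ}
    (hu : ∀ n, S.IsAdmissible (u n)) (hub : ∀ n, S.action (u n) ≤ b)
    (hgrad : Tendsto (fun n => l2NormSq P (S.gradient (u n))) atTop (𝓝 0)) :
    ∃ v, S.IsCritical v ∧ ∃ φ : ℕ → ℕ, StrictMono φ ∧
      Tendsto (fun n => S.action (u (φ n))) atTop (𝓝 (S.action v)) := by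
  have hP := S.period_pos
  obtain ⟨M, hM⟩ := hS.exists_force_bound b
  obtain ⟨k, hk, φ, hφ, ε, hε, hforce⟩ := exists_subseq_tendsto_twistedPrimitive (B := S.B) hP.le
    (fun n => (hu n).continuous_force) fun n => hM _ (hu n) (hub n)
  obtain ⟨v, rfl⟩ : ∃ v, k = -v := ⟨-k, (neg_neg k).symm⟩
  have hv : Continuous v := by simpa using hk.neg
  have hL2 : Tendsto (fun n => l2NormSq P (u (φ n) - v)) atTop (𝓝 0) := by
    refine squeeze_zero (fun n => l2NormSq_nonneg hP.le _)
      (fun n => l2NormSq_le_two_mul_add hP.le (hu (φ n)).continuous_gradient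
        (continuous_const (y := ε n)) ((hu (φ n)).1.sub hv) fun t ht => ?_) ?_
    · have hsplit : (u (φ n) - v) t = S.gradient (u (φ n)) t
          - (S.path (S.force (u (φ n))) t - (-v) t) := by
        simp only [gradient, Pi.sub_apply, Pi.add_apply, Pi.neg_apply]; abel
      rw [hsplit]
      exact (norm_sub_le _ _).trans
        (by gcongr; exact (hforce n t ht).trans (le_abs_self _))
    · have hconst : ∀ n, l2NormSq P (fun _ => ε n) = P * ε n ^ 2 := fun n => by simp [l2NormSq]
      simp only [hconst]
      simpa using ((hgrad.comp hφ.tendsto_atTop).const_mul 2).add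
        (((hε.pow 2).const_mul P).const_mul 2)
  have hpath : ∀ t ∈ Set.Icc 0 P,
      Tendsto (fun n => S.path (u (φ n)) t) atTop (𝓝 (S.path v t)) := fun t ht =>
    tendsto_twistedPrimitive (fun n => (hu _).1) hv
      (tendsto_integral_norm_of_l2NormSq hP (fun n => (hu _).1.sub hv) hL2) ht
  have hvS := hS.isAdmissible_of_tendsto (fun n => hu (φ n)) (fun n => hub (φ n)) hv hpath
  refine ⟨v, hS.isCritical_of_tendsto (fun n => hu (φ n)) (fun n => hub (φ n)) hvS hpath
    fun t ht => ?_, φ, hφ,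
    hS.tendsto_action (fun n => hu (φ n)) (fun n => hub (φ n)) hvS hL2 hpath⟩
  exact tendsto_iff_norm_sub_tendsto_zero.2
    (squeeze_zero (fun _ => norm_nonneg _) (fun n => hforce n t ht) hε)

lemma HasCompactSublevels.exists_le_l2NormSq_gradient [ProperSpace E] (hS : S.HasCompactSublevels)
    {c : ℝ} (hc : ∀ u, S.IsCritical u → S.action u < c) (b : ℝ) :
    ∃ η > 0, ∀ u, S.IsAdmissible u → S.action u ≤ b → c ≤ S.action u →
      η ≤ l2NormSq P (S.gradient u) := by
  by_contra! hsmall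
  choose u hu hub hcu hgrad using fun n : ℕ => hsmall (1 / (n + 1 : ℝ)) (by positivity)
  obtain ⟨v, hv, φ, -, hlim⟩ := hS.palais_smale hu hub <|
    squeeze_zero (fun n => l2NormSq_nonneg S.period_pos.le _) (fun n => (hgrad n).le)
      tendsto_one_div_add_atTop_nhds_zero_nat
  exact (hc v hv).not_ge (ge_of_tendsto' hlim fun n => hcu (φ n))

end PalaisSmale

end TwistedPotential

end Compactness

lemma continuous_twistedPrimitive_family {E Z : Type*} [NormedAddCommGroup E]
    [InnerProductSpace ℝ E] [TopologicalSpace Z] {P : ℝ} {B : E →L[ℝ] E} {U : Z → ℝ → E}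
    (hU : Continuous (Function.uncurry U)) :
    Continuous (Function.uncurry fun z => twistedPrimitive P B (U z)) := by
  have hV : Continuous (Function.uncurry fun (p : Z × ℝ) (s : ℝ) => U p.1 s) :=
    hU.comp (by fun_prop : Continuous fun q : (Z × ℝ) × ℝ => (q.1.1, q.2))
  exact (B.continuous.comp
    (intervalIntegral.continuous_parametric_intervalIntegral_of_continuous' hV 0 P)).add
    (intervalIntegral.continuous_parametric_intervalIntegral_of_continuous hV continuous_snd)

namespace TwistedPotential

variable {E Z : Type*} [NormedAddCommGroup E] [InnerProductSpace ℝ E]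
  [TopologicalSpace Z] {P : ℝ} {A : E ≃ₗᵢ[ℝ] E}

section TwistedFamily

variable (S : TwistedPotential E P A)

/-- A family of twisted paths avoiding the singularities, regarded as a map on `Z × ℝ`. -/
def IsTwistedFamily (f : C(Z × ℝ, E)) : Prop :=
  ∀ z, (∀ t ∈ Set.Icc 0 P, f (z, t) ∈ S.domain) ∧ f (z, P) = A (f (z, 0))

/-- The family of the twisted paths with given velocities. -/
noncomputable def familyPath {U : Z → ℝ → E} (hU : Continuous (Function.uncurry U)) :
    C(Z × ℝ, E) :=
  ⟨_, continuous_twistedPrimitive_family (P := P) (B := S.B) hU⟩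

variable {S} {U : Z → ℝ → E}

lemma isTwistedFamily_familyPath (hU : Continuous (Function.uncurry U))
    (hadm : ∀ z, S.IsAdmissible (U z)) : S.IsTwistedFamily (S.familyPath hU) := fun z =>
  ⟨(hadm z).2, twistedPrimitive_twist S.twist_B _⟩

lemma continuous_IccExtend_path_family {F : Type*} [TopologicalSpace F] {f : ℝ → E → F}
    (hf : ContinuousOn (fun p : ℝ × E => f p.1 p.2) (Set.univ ×ˢ S.domain))
    (hU : Continuous (Function.uncurry U)) (hadm : ∀ z, S.IsAdmissible (U z)) :
    Continuous (Function.uncurry fun z =>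
      Set.IccExtend S.period_pos.le fun t : Set.Icc 0 P => f t (S.path (U z) t)) := by
  have hproj : Continuous fun p : Z × ℝ => (Set.projIcc 0 P S.period_pos.le p.2 : ℝ) := by fun_prop
  exact hf.comp_continuous (hproj.prodMk
    ((continuous_twistedPrimitive_family hU).comp (continuous_fst.prodMk hproj)))
    fun p => ⟨Set.mem_univ _, (hadm p.1).2 _ (Subtype.prop _)⟩

lemma continuous_gradient_family [CompleteSpace E] (hU : Continuous (Function.uncurry U))
    (hadm : ∀ z, S.IsAdmissible (U z)) :
    Continuous (Function.uncurry fun z => S.gradient (U z)) := by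
  have hforce : Continuous (Function.uncurry fun z => S.force (U z)) :=
    continuous_IccExtend_path_family S.continuousOn_gradW hU hadm
  have hpath := continuous_twistedPrimitive_family (P := P) (B := S.B) hforce
  exact hU.add hpath

lemma continuous_action_family (hU : Continuous (Function.uncurry U))
    (hadm : ∀ z, S.IsAdmissible (U z)) : Continuous fun z => S.action (U z) := by
  have hW : ∀ z, ∫ t in (0 : ℝ)..P, S.W t (S.path (U z) t) = ∫ t in (0 : ℝ)..P,
      Set.IccExtend S.period_pos.le (fun t : Set.Icc 0 P => S.W t (S.path (U z) t)) t :=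
    fun z => intervalIntegral.integral_congr fun t ht =>
      (Set.IccExtend_of_mem S.period_pos.le (fun t : Set.Icc 0 P => S.W t (S.path (U z) t))
        (by rwa [Set.uIcc_of_le S.period_pos.le] at ht)).symm
  have hnorm : Continuous (Function.uncurry fun z t => ‖U z t‖ ^ 2) := hU.norm.pow 2
  simp only [action, hW, l2NormSq]
  exact (continuous_const.mul
    (intervalIntegral.continuous_parametric_intervalIntegral_of_continuous'
      hnorm 0 P)).sub
    (intervalIntegral.continuous_parametric_intervalIntegral_of_continuous'
      (continuous_IccExtend_path_family S.continuousOn_W hU hadm) 0 P)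

end TwistedFamily

section Deformation

variable [CompleteSpace E] {S : TwistedPotential E P A} {U : Z → ℝ → E}

lemma familyPath_homotopicWith_descent (hU : Continuous (Function.uncurry U))
    (hadm : ∀ z, S.IsAdmissible (U z)) {h : ℝ}
    (hdomain : ∀ z, ∀ σ ∈ Set.Icc (0 : ℝ) 1, ∀ t ∈ Set.Icc 0 P,
      S.path (U z) t - (σ * h) • S.path (S.gradient (U z)) t ∈ S.domain) :
    ∃ hV : Continuous (Function.uncurry fun z => U z - h • S.gradient (U z)),
      (∀ z, S.IsAdmissible (U z - h • S.gradient (U z))) ∧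
      (S.familyPath hU).HomotopicWith (S.familyPath hV) S.IsTwistedFamily := by
  have hgrad := continuous_gradient_family hU hadm
  have hpath : ∀ z t, S.path (U z - h • S.gradient (U z)) t
      = S.path (U z) t - h • S.path (S.gradient (U z)) t := fun z t => by
    rw [path, twistedPrimitive_sub (hadm z).1 ((hadm z).continuous_gradient.const_smul h),
      twistedPrimitive_smul, Pi.sub_apply, Pi.smul_apply]
  refine ⟨hU.sub (hgrad.const_smul h), fun z => ⟨?_, fun t ht => ?_⟩, ⟨⟨⟨⟨fun p =>
    S.familyPath hU p.2 - ((p.1 : ℝ) * h) • S.familyPath hgrad p.2, by fun_prop⟩, fun p => ?_,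
    fun p => ?_⟩, fun σ z => ⟨hdomain z σ σ.2, ?_⟩⟩⟩⟩
  · exact (hadm z).1.sub ((hadm z).continuous_gradient.const_smul h)
  · rw [hpath]
    simpa using hdomain z 1 (by simp) t ht
  · simp
  · simpa using! (hpath p.1 p.2).symm
  · simp [familyPath, twistedPrimitive_twist S.twist_B]

/-- By the Palais–Smale condition the gradient is bounded below above the level `c`, so finitely
many steps of gradient descent suffice. -/
theorem HasCompactSublevels.exists_homotopicWith_action_le [ProperSpace E] [CompactSpace Z]
    (hS : S.HasCompactSublevels) {c : ℝ} (hc : ∀ u, S.IsCritical u → S.action u < c)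
    (hU : Continuous (Function.uncurry U)) (hadm : ∀ z, S.IsAdmissible (U z)) :
    ∃ (V : Z → ℝ → E) (hV : Continuous (Function.uncurry V)), (∀ z, S.IsAdmissible (V z)) ∧
      (∀ z, S.action (V z) ≤ c) ∧
      (S.familyPath hU).HomotopicWith (S.familyPath hV) S.IsTwistedFamily := by
  obtain ⟨b, hcb, hb⟩ : ∃ b, c ≤ b ∧ ∀ z, S.action (U z) ≤ b := by
    obtain ⟨b, hb⟩ := (isCompact_range (continuous_action_family hU hadm)).bddAbove
    exact ⟨max c b, le_max_left _ _, fun z => (hb ⟨z, rfl⟩).trans (le_max_right _ _)⟩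
  obtain ⟨h, hh, hstep⟩ := hS.exists_descent_step b
  obtain ⟨η, hη, hgrad⟩ := hS.exists_le_l2NormSq_gradient hc b
  have hdescent : ∀ m : ℕ, ∃ (V : Z → ℝ → E) (hV : Continuous (Function.uncurry V)),
      (∀ z, S.IsAdmissible (V z)) ∧ (∀ z, S.action (V z) ≤ max c (b - m * (h / 2 * η))) ∧
      (S.familyPath hU).HomotopicWith (S.familyPath hV) S.IsTwistedFamily := fun m => by
    induction m with
    | zero =>
      exact ⟨U, hU, hadm, fun z => by simpa using Or.inr (hb z),
        .refl _ (isTwistedFamily_familyPath hU hadm)⟩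
    | succ m ih =>
      obtain ⟨V, hV, hVadm, hVm, hUV⟩ := ih
      have hVb : ∀ z, S.action (V z) ≤ b := fun z => (hVm z).trans
        (max_le hcb (sub_le_self _ (by positivity)))
      obtain ⟨hV', hadm', hVV'⟩ := familyPath_homotopicWith_descent hV hVadm
        fun z => (hstep _ (hVadm z) (hVb z)).1
      refine ⟨_, hV', hadm', fun z => (hstep _ (hVadm z) (hVb z)).2.trans ?_, hUV.trans hVV'⟩
      rcases le_total (S.action (V z)) c with hle | hge
      · have := l2NormSq_nonneg S.period_pos.le (S.gradient (V z))
        exact (sub_le_self _ (by positivity)).trans (hle.trans (le_max_left _ _))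
      · have hdecrease : h / 2 * η ≤ h / 2 * l2NormSq P (S.gradient (V z)) := by
          gcongr
          exact hgrad _ (hVadm z) (hVb z) hge
        push_cast
        refine (le_max_iff.1 (hVm z)).elim (fun hle => ?_) fun hle => ?_
        · exact le_max_of_le_left (by linarith [mul_pos (half_pos hh) hη])
        · exact le_max_of_le_right (by linarith)
  obtain ⟨m, hm⟩ := exists_nat_ge ((b - c) / (h / 2 * η))
  obtain ⟨V, hV, hVadm, hVm, hUV⟩ := hdescent m
  refine ⟨V, hV, hVadm, fun z => (hVm z).trans (max_le le_rfl ?_), hUV⟩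
  rw [div_le_iff₀ (by positivity)] at hm
  linarith

end Deformation

end TwistedPotential

/-! ### Solutions and collisions -/

section TwistedExtension

variable {E : Type*} [NormedAddCommGroup E] [InnerProductSpace ℝ E] {P : ℝ} {hP : 0 < P}
  {A : E ≃ₗᵢ[ℝ] E} {p : ℝ → E}

/-- The extension of `p` from `[0, P)` to a twisted path on `ℝ`. -/
noncomputable def twistedExtension (hP : 0 < P) (A : E ≃ₗᵢ[ℝ] E) (p : ℝ → E) (t : ℝ) : E :=
  (A ^ toIcoDiv hP 0 t) (p (toIcoMod hP 0 t))

lemma twistedExtension_add_period (t : ℝ) :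
    twistedExtension hP A p (t + P) = A (twistedExtension hP A p t) := by
  rw [twistedExtension, toIcoDiv_add_right, toIcoMod_add_right, add_comm, zpow_one_add]
  rfl

lemma twistedExtension_of_mem_Icc (hp : p P = A (p 0)) {t : ℝ} (ht : t ∈ Set.Icc 0 P) :
    twistedExtension hP A p t = p t := by
  have hIco : ∀ s ∈ Set.Ico 0 P, twistedExtension hP A p s = p s := fun s hs => by
    rw [twistedExtension, (toIcoMod_eq_self hP).2 (by simpa using hs),
      toIcoDiv_eq_of_sub_zsmul_mem_Ico hP (n := 0) (by simpa using hs), zpow_zero]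
    rfl
  rcases ht.2.lt_or_eq with hlt | heq
  · exact hIco t ⟨ht.1, hlt⟩
  · have hend := twistedExtension_add_period (hP := hP) (A := A) (p := p) 0
    rw [zero_add, hIco 0 ⟨le_rfl, hP⟩, ← hp] at hend
    rw [heq, hend]

lemma continuous_twistedExtension (hpc : Continuous p) (hp : p P = A (p 0)) :
    Continuous (twistedExtension hP A p) := by
  set f := twistedExtension hP A p with hf
  have hshift : f ∘ (· + P) = A ∘ f := funext twistedExtension_add_period
  have hright : ContinuousOn f (Set.Icc 0 P) :=
    hpc.continuousOn.congr fun t ht => twistedExtension_of_mem_Icc hp ht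
  have hleft : ContinuousOn f (Set.Icc (-P) 0) := by
    refine ContinuousOn.congr (f := fun t => A.symm (p (t + P))) (by fun_prop) fun t ht => ?_
    have hmem : t + P ∈ Set.Icc 0 P := ⟨by linarith [ht.1], by linarith [ht.2]⟩
    rw [hf]
    change twistedExtension hP A p t = A.symm (p (t + P))
    rw [← twistedExtension_of_mem_Icc (hP := hP) hp hmem, twistedExtension_add_period,
      A.symm_apply_apply]
  have hcont : ContinuousOn f (Set.Icc (-P) P) := by
    rw [← Set.Icc_union_Icc_eq_Icc (neg_nonpos.2 hP.le) hP.le]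
    exact hleft.union_of_isClosed hright isClosed_Icc isClosed_Icc
  have hperiodic : Function.Periodic (ContinuousAt f) P := fun t => propext <| by
    rw [← A.toHomeomorph.comp_continuousAt_iff f t]
    change _ ↔ ContinuousAt (A ∘ f) t
    rw [← hshift]
    exact ((Homeomorph.addRight P).comp_continuousAt_iff' f t).symm
  refine continuous_iff_continuousAt.2 fun t => ?_
  obtain ⟨s, hs, heq⟩ := hperiodic.exists_mem_Ico₀ hP t
  rw [heq]
  exact hcont.continuousAt (Icc_mem_nhds (by linarith [hs.1]) hs.2)

end TwistedExtension

namespace TwistedPotential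

variable {E : Type*} [NormedAddCommGroup E] [InnerProductSpace ℝ E]
  {P : ℝ} {A : E ≃ₗᵢ[ℝ] E} {S : TwistedPotential E P A} {u v : ℝ → E}

lemma action_congr (huv : ∀ t ∈ Set.Icc 0 P, u t = v t) : S.action u = S.action v := by
  have hIcc : Set.uIcc 0 P = Set.Icc 0 P := Set.uIcc_of_le S.period_pos.le
  have hkinetic : ∫ t in (0)..P, ‖u t‖ ^ 2 = ∫ t in (0)..P, ‖v t‖ ^ 2 :=
    intervalIntegral.integral_congr fun t ht => by simp only [huv t (hIcc ▸ ht)]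
  have hpotential : ∫ t in (0)..P, S.W t (S.path u t) = ∫ t in (0)..P, S.W t (S.path v t) :=
    intervalIntegral.integral_congr fun t ht => by
      simp only [path, twistedPrimitive_congr huv (hIcc ▸ ht)]
  rw [action, action, l2NormSq, l2NormSq, hkinetic, hpotential]

lemma IsAdmissible.force_period (hu : S.IsAdmissible u) : S.force u P = A (S.force u 0) := by
  have hP := S.period_pos.le
  rw [force_of_mem ⟨hP, le_rfl⟩, force_of_mem ⟨le_rfl, hP⟩,
    ← S.gradW_twist 0 _ (hu.2 0 ⟨le_rfl, hP⟩), zero_add, path, twistedPrimitive_twist S.twist_B]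

variable (S) in
/-- The twisted solutions of `x'' = -∇W(t, x)`. -/
def IsSolution (x : ℝ → E) : Prop :=
  ContDiff ℝ 2 x ∧ (∀ t, x t ∈ S.domain) ∧ (∀ t, x (t + P) = A (x t)) ∧
    ∀ t, deriv (deriv x) t = -S.gradW t (x t)

variable [CompleteSpace E]

lemma IsCritical.exists_contDiff_eqOn (hu : S.IsCritical u) :
    ∃ v, ContDiff ℝ 1 v ∧ (∀ t, v (t + P) = A (v t)) ∧ (∀ t, deriv v (t + P) = A (deriv v t)) ∧
      ∀ t ∈ Set.Icc 0 P, v t = u t ∧ deriv v t = -S.force u t := by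
  have hforce := hu.1.force_period
  set h := twistedExtension S.period_pos A (S.force u)
  have hcont : Continuous h := continuous_twistedExtension hu.1.continuous_force hforce
  have hperiod : ∀ t, h (t + P) = A (h t) := twistedExtension_add_period
  have hhu : ∀ t ∈ Set.Icc 0 P, h t = S.force u t := fun t ht =>
    twistedExtension_of_mem_Icc hforce ht
  have hderiv : ∀ t, HasDerivAt (-S.path h) (-h t) t := fun t =>
    (hasDerivAt_twistedPrimitive hcont t).neg
  have hderiv_eq : deriv (-S.path h) = -h := funext fun t => (hderiv t).deriv
  refine ⟨-S.path h, contDiff_one_iff_deriv.2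
    ⟨fun t => (hderiv t).differentiableAt, hderiv_eq ▸ hcont.neg⟩,
    fun t => ?_, fun t => ?_, fun t ht => ⟨?_, ?_⟩⟩
  · rw [Pi.neg_apply, path, twistedPrimitive_add_period S.twist_B hcont hperiod, ← map_neg]
    rfl
  · rw [hderiv_eq, Pi.neg_apply, hperiod, ← map_neg]
    rfl
  · rw [hu.2 t ht, Pi.neg_apply, path, path, twistedPrimitive_congr hhu ht]
  · rw [hderiv_eq, Pi.neg_apply, hhu t ht]

lemma IsCritical.exists_isSolution (hu : S.IsCritical u) :
    ∃ x, S.IsSolution x ∧ S.action (deriv x) = S.action u := by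
  obtain ⟨v, hv, hvperiod, hv'period, hvu⟩ := hu.exists_contDiff_eqOn
  have hxderiv : ∀ t, HasDerivAt (S.path v) (v t) t := hasDerivAt_twistedPrimitive hv.continuous
  have hxderiv_eq : deriv (S.path v) = v := funext fun t => (hxderiv t).deriv
  have hxperiod : ∀ t, S.path v (t + P) = A (S.path v t) :=
    twistedPrimitive_add_period S.twist_B hv.continuous hvperiod
  have hsolution : ∀ t, S.path v t ∈ S.domain ∧ deriv v t = -S.gradW t (S.path v t) := fun t => by
    have hperiodic : Function.Periodic
        (fun t => S.path v t ∈ S.domain ∧ deriv v t = -S.gradW t (S.path v t)) P :=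
      fun t => propext <| by
        beta_reduce
        rw [hxperiod, hv'period, S.map_mem_iff]
        refine and_congr_right fun hmem => ?_
        rw [S.gradW_twist t _ hmem, ← map_neg, A.injective.eq_iff]
    obtain ⟨s, hs, heq⟩ := hperiodic.exists_mem_Ico₀ S.period_pos t
    have hs' := Set.Ico_subset_Icc_self hs
    rw [heq, (hvu s hs').2, force_of_mem hs', path, path,
      twistedPrimitive_congr (fun t ht => (hvu t ht).1) hs']
    exact ⟨hu.1.2 s hs', rfl⟩
  refine ⟨S.path v, ⟨?_, fun t => (hsolution t).1, hxperiod, fun t => ?_⟩, ?_⟩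
  · rw [show (2 : WithTop ℕ∞) = 1 + 1 from rfl, contDiff_succ_iff_deriv]
    exact ⟨fun t => (hxderiv t).differentiableAt, by simp, hxderiv_eq.symm ▸ hv⟩
  · rw [hxderiv_eq, (hsolution t).2]
  · rw [hxderiv_eq, action_congr fun t ht => (hvu t ht).1]

lemma infinite_isSolution (h : ∀ c, ∃ u, S.IsCritical u ∧ c < S.action u) :
    {x | S.IsSolution x}.Infinite := by
  intro hfin
  obtain ⟨c, hc⟩ := (hfin.image fun x => S.action (deriv x)).bddAbove
  obtain ⟨u, hu, hcu⟩ := h c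
  obtain ⟨x, hx, hxu⟩ := hu.exists_isSolution
  exact (hc ⟨x, hx, hxu⟩).not_gt hcu

end TwistedPotential

section SmoothPotential

lemma norm_sub_sub_fderiv_le {E F : Type*} [NormedAddCommGroup E] [NormedSpace ℝ E]
    [NormedAddCommGroup F] [NormedSpace ℝ F] {f : E → F} {x z : E} {L : ℝ} (hL : 0 ≤ L)
    (hf : ∀ y ∈ Metric.closedBall x ‖z‖, ContDiffAt ℝ 2 f y)
    (hbound : ∀ y ∈ Metric.closedBall x ‖z‖, ‖fderiv ℝ (fderiv ℝ f) y‖ ≤ L) :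
    ‖f (x + z) - f x - fderiv ℝ f x z‖ ≤ L * ‖z‖ ^ 2 := by
  have hconvex := convex_closedBall x ‖z‖
  have hx : x ∈ Metric.closedBall x ‖z‖ := by simp
  have hfderiv : ∀ y ∈ Metric.closedBall x ‖z‖, ‖fderiv ℝ f y - fderiv ℝ f x‖ ≤ L * ‖z‖ :=
    fun y hy => (hconvex.norm_image_sub_le_of_norm_fderiv_le
      (fun w hw => ((hf w hw).fderiv_right le_rfl).differentiableAt one_ne_zero)
      hbound hx hy).trans (by gcongr; exact mem_closedBall_iff_norm.1 hy)
  have htaylor := hconvex.norm_image_sub_le_of_norm_fderiv_le'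
    (fun y hy => (hf y hy).differentiableAt two_ne_zero) hfderiv hx
    (y := x + z) (by simp)
  rwa [add_sub_cancel_left, mul_assoc, ← sq] at htaylor

lemma exists_norm_sub_sub_fderiv_le {E F : Type*} [NormedAddCommGroup E] [NormedSpace ℝ E]
    [ProperSpace E] [NormedAddCommGroup F] [NormedSpace ℝ F] {f : E → F} {s K : Set E}
    (hs : IsOpen s) (hf : ContDiffOn ℝ 2 f s) (hKs : K ⊆ s) (hK : IsCompact K) :
    ∃ L > 0, ∃ r > 0, ∀ x ∈ K, ∀ z, ‖z‖ ≤ r →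
      x + z ∈ s ∧ ‖f (x + z) - f x - fderiv ℝ f x z‖ ≤ L * ‖z‖ ^ 2 := by
  obtain ⟨r, hr, hrs⟩ := hK.exists_cthickening_subset_open hs hKs
  have hfderiv : ContDiffOn ℝ 1 (fderiv ℝ f) s := hf.fderiv_of_isOpen hs le_rfl
  obtain ⟨L, hL⟩ := (hK.cthickening (r := r)).exists_bound_of_continuousOn
    ((hfderiv.continuousOn_fderiv_of_isOpen hs le_rfl).mono hrs)
  refine ⟨max L 1, by positivity, r, hr, fun x hx z hz => ?_⟩
  have hball : Metric.closedBall x ‖z‖ ⊆ Metric.cthickening r K :=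
    (Metric.closedBall_subset_closedBall hz).trans (Metric.closedBall_subset_cthickening hx r)
  exact ⟨hrs (hball (by simp)), norm_sub_sub_fderiv_le (by positivity)
    (fun y hy => hf.contDiffAt (hs.mem_nhds (hrs (hball hy))))
    fun y hy => (hL y (hball hy)).trans (le_max_left _ _)⟩

lemma hasFDerivAt_slice {E : Type*} [NormedAddCommGroup E] [NormedSpace ℝ E] {W : ℝ → E → ℝ}
    {s : Set E} (hs : IsOpen s)
    (hW : ContDiffOn ℝ 2 (fun p : ℝ × E => W p.1 p.2) (Set.univ ×ˢ s)) (t : ℝ) {x : E}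
    (hx : x ∈ s) : HasFDerivAt (W t)
      ((fderiv ℝ (fun p : ℝ × E => W p.1 p.2) (t, x)).comp (ContinuousLinearMap.inr ℝ ℝ E)) x :=
  HasFDerivAt.comp x (((hW.differentiableOn two_ne_zero).differentiableAt
    ((isOpen_univ.prod hs).mem_nhds ⟨Set.mem_univ _, hx⟩)).hasFDerivAt)
    (hasFDerivAt_prodMk_right t x)

variable {E : Type*} [NormedAddCommGroup E] [InnerProductSpace ℝ E]
  {W : ℝ → E → ℝ} {s : Set E}

lemma exists_abs_sub_sub_inner_gradient_le [ProperSpace E] (hs : IsOpen s)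
    (hW : ContDiffOn ℝ 2 (fun p : ℝ × E => W p.1 p.2) (Set.univ ×ˢ s)) (P : ℝ) {K : Set E}
    (hKs : K ⊆ s) (hK : IsCompact K) :
    ∃ L > 0, ∃ r > 0, ∀ t ∈ Set.Icc 0 P, ∀ x ∈ K, ∀ z : E, ‖z‖ ≤ r →
      x + z ∈ s ∧ |W t (x + z) - W t x - inner ℝ (gradient (W t) x) z| ≤ L * ‖z‖ ^ 2 := by
  obtain ⟨L, hL, r, hr, htaylor⟩ := exists_norm_sub_sub_fderiv_le (isOpen_univ.prod hs) hW
    (Set.prod_mono (Set.subset_univ (Set.Icc 0 P)) hKs) (isCompact_Icc.prod hK)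
  refine ⟨L, hL, r, hr, fun t ht x hx z hz => ?_⟩
  obtain ⟨hmem, hle⟩ := htaylor (t, x) ⟨ht, hx⟩ (0, z) (by simpa using hz)
  refine ⟨by simpa using hmem, ?_⟩
  rw [gradient, InnerProductSpace.toDual_symm_apply, (hasFDerivAt_slice hs hW t (hKs hx)).fderiv]
  simpa using hle

variable [CompleteSpace E]

lemma continuousOn_gradient_slice (hs : IsOpen s)
    (hW : ContDiffOn ℝ 2 (fun p : ℝ × E => W p.1 p.2) (Set.univ ×ˢ s)) :
    ContinuousOn (fun p : ℝ × E => gradient (W p.1) p.2) (Set.univ ×ˢ s) := by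
  have hfderiv : ContinuousOn (fderiv ℝ fun p : ℝ × E => W p.1 p.2) (Set.univ ×ˢ s) :=
    hW.continuousOn_fderiv_of_isOpen (isOpen_univ.prod hs) one_le_two
  refine ((InnerProductSpace.toDual ℝ E).symm.continuous.comp_continuousOn
    (hfderiv.clm_comp (continuousOn_const (c := ContinuousLinearMap.inr ℝ ℝ E)))).congr
    fun p hp => ?_
  rw [gradient, (hasFDerivAt_slice hs hW p.1 hp.2).fderiv]
  rfl

lemma gradient_map_of_eventuallyEq_comp {f h : E → ℝ} {A : E ≃ₗᵢ[ℝ] E} {x : E}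
    (hfh : h ∘ A =ᶠ[nhds x] f) : gradient h (A x) = A (gradient f x) := by
  refine ext_inner_right ℝ fun z => ?_
  obtain ⟨z, rfl⟩ := A.surjective z
  rw [A.inner_map_map, gradient, gradient, InnerProductSpace.toDual_symm_apply,
    InnerProductSpace.toDual_symm_apply, ← hfh.fderiv_eq]
  have hcomp := A.toContinuousLinearEquiv.comp_right_fderiv (f := h) (x := x)
  exact (congrArg (fun l : E →L[ℝ] ℝ => l z) hcomp).symm

end SmoothPotential

section StrongForce

lemma exists_mem_uIcc_eq_forall_le {f : ℝ → ℝ} (hf : Continuous f) {a b r : ℝ} (ha : f a < r)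
    (hb : r ≤ f b) : ∃ c ∈ Set.uIcc a b, f c = r ∧ ∀ t ∈ Set.uIcc a c, f t ≤ r := by
  have hcompact : IsCompact (Set.uIcc a b ∩ {c | f c = r}) :=
    isCompact_uIcc.inter_right (isClosed_eq hf continuous_const)
  have hne : (Set.uIcc a b ∩ {c | f c = r}).Nonempty :=
    intermediate_value_uIcc hf.continuousOn (Set.mem_uIcc.2 (Or.inl ⟨ha.le, hb⟩))
  obtain ⟨c, ⟨hc, hfc⟩, hmin⟩ := hcompact.exists_isMinOn hne
    (f := fun c => |c - a|) (by fun_prop)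
  refine ⟨c, hc, hfc, fun t ht => not_lt.1 fun hlt => ?_⟩
  obtain ⟨c', hc', hfc'⟩ := intermediate_value_uIcc hf.continuousOn
    (Set.mem_uIcc.2 (Or.inl ⟨ha.le, hlt.le⟩) : r ∈ Set.uIcc (f a) (f t))
  have hclosest : |c - a| ≤ |c' - a| := hmin
    ⟨Set.uIcc_subset_uIcc_left (Set.uIcc_subset_uIcc_left hc ht) hc', hfc'⟩
  have heq : c' = t := by grind [Set.mem_uIcc]
  exact hlt.ne' (heq ▸ hfc')

lemma exists_mem_Icc_le_div_of_integral_le {f : ℝ → ℝ} {P M : ℝ} (hP : 0 < P)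
    (hf : ContinuousOn f (Set.Icc 0 P)) (hM : ∫ t in (0 : ℝ)..P, f t ≤ M) :
    ∃ t ∈ Set.Icc 0 P, f t ≤ M / P := by
  by_contra! hlt
  have hstrict : ∫ _ in (0 : ℝ)..P, M / P < ∫ t in (0 : ℝ)..P, f t :=
    intervalIntegral.integral_lt_integral_of_continuousOn_of_le_of_exists_lt hP
      continuousOn_const hf (fun t ht => (hlt t (Set.Ioc_subset_Icc_self ht)).le)
      ⟨0, ⟨le_rfl, hP.le⟩, hlt 0 ⟨le_rfl, hP.le⟩⟩
  rw [intervalIntegral.integral_const, smul_eq_mul, sub_zero, mul_div_cancel₀ _ hP.ne'] at hstrict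
  exact hstrict.not_ge hM

lemma exists_lt_sub_of_tendsto_atBot {F : Type*} [NormedAddCommGroup F] [ProperSpace F]
    {U : F → ℝ} {r : ℝ} (M : ℝ) (hU : ContinuousOn U (Metric.sphere 0 r))
    (hlim : Filter.Tendsto U (nhdsWithin 0 {ξ | ξ ≠ 0}) Filter.atBot) :
    ∃ ε > 0, ∀ ξ η, ξ ≠ 0 → ‖ξ‖ < ε → ‖η‖ = r → U ξ < U η - M := by
  obtain ⟨C, hC⟩ := (isCompact_sphere (0 : F) r).exists_bound_of_continuousOn hU
  obtain ⟨ε, hε, hεU⟩ := Metric.mem_nhdsWithin_iff.1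
    (hlim.eventually (Filter.eventually_lt_atBot (-C - M)))
  refine ⟨ε, hε, fun ξ η hξ hlt hη => ?_⟩
  have hξU : U ξ < -C - M := hεU ⟨mem_ball_zero_iff.2 hlt, hξ⟩
  linarith [neg_le_of_abs_le (hC η (mem_sphere_zero_iff_norm.2 hη))]

variable {F : Type*} [NormedAddCommGroup F] [InnerProductSpace ℝ F]

section Gordon

variable [CompleteSpace F] {U : F → ℝ} {s : Set F} {ξ ξ' : ℝ → F} {f : ℝ → ℝ} {a b P : ℝ}

lemma two_mul_abs_sub_le_of_sq_norm_gradient_le (hs : IsOpen s) (hU : ContDiffOn ℝ 1 U s)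
    (hξ : ∀ t, HasDerivAt ξ (ξ' t) t) (hξ' : Continuous ξ') (hab : a ≤ b)
    (hmem : ∀ t ∈ Set.Icc a b, ξ t ∈ s) (hf : ContinuousOn f (Set.Icc a b))
    (hUf : ∀ t ∈ Set.Icc a b, ‖gradient U (ξ t)‖ ^ 2 ≤ f t) :
    2 * |U (ξ b) - U (ξ a)| ≤ ∫ t in a..b, (f t + ‖ξ' t‖ ^ 2) := by
  have hξc : Continuous ξ := continuous_iff_continuousAt.2 fun t => (hξ t).continuousAt
  rw [← Set.uIcc_of_le hab] at hmem hf
  have hderiv : ∀ t ∈ Set.uIcc a b, HasDerivAt (U ∘ ξ) (fderiv ℝ U (ξ t) (ξ' t)) t :=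
    fun t ht => ((hU.differentiableOn one_ne_zero).differentiableAt
      (hs.mem_nhds (hmem t ht))).hasFDerivAt.comp_hasDerivAt t (hξ t)
  have hcont : ContinuousOn (fun t => fderiv ℝ U (ξ t) (ξ' t)) (Set.uIcc a b) :=
    ((hU.continuousOn_fderiv_of_isOpen hs le_rfl).comp hξc.continuousOn hmem).clm_apply
      hξ'.continuousOn
  have hyoung : ∀ t ∈ Set.Icc a b,
      2 * ‖fderiv ℝ U (ξ t) (ξ' t)‖ ≤ f t + ‖ξ' t‖ ^ 2 := fun t ht => by
    have hcauchy := norm_inner_le_norm (𝕜 := ℝ) (gradient U (ξ t)) (ξ' t)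
    rw [gradient, InnerProductSpace.toDual_symm_apply, ← gradient] at hcauchy
    linarith [hUf t ht, two_mul_le_add_sq ‖gradient U (ξ t)‖ ‖ξ' t‖]
  calc 2 * |U (ξ b) - U (ξ a)|
      = 2 * ‖∫ t in a..b, fderiv ℝ U (ξ t) (ξ' t)‖ := by
        rw [intervalIntegral.integral_eq_sub_of_hasDerivAt hderiv hcont.intervalIntegrable]
        rfl
    _ ≤ 2 * ∫ t in a..b, ‖fderiv ℝ U (ξ t) (ξ' t)‖ := by
        gcongr
        exact intervalIntegral.norm_integral_le_integral_norm hab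
    _ = ∫ t in a..b, 2 * ‖fderiv ℝ U (ξ t) (ξ' t)‖ :=
        (intervalIntegral.integral_const_mul _ _).symm
    _ ≤ ∫ t in a..b, (f t + ‖ξ' t‖ ^ 2) :=
        intervalIntegral.integral_mono_on hab
          (continuousOn_const.mul hcont.norm).intervalIntegrable
          (hf.add (hξ'.norm.pow 2).continuousOn).intervalIntegrable hyoung

lemma abs_sub_le_of_sq_norm_gradient_le (hs : IsOpen s) (hU : ContDiffOn ℝ 1 U s)
    (hξ : ∀ t, HasDerivAt ξ (ξ' t) t) (hξ' : Continuous ξ') (ha : a ∈ Set.Icc 0 P)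
    (hb : b ∈ Set.Icc 0 P) (hmem : ∀ t ∈ Set.uIcc a b, ξ t ∈ s)
    (hf : ContinuousOn f (Set.Icc 0 P)) (hf0 : ∀ t ∈ Set.Icc 0 P, 0 ≤ f t)
    (hUf : ∀ t ∈ Set.uIcc a b, ‖gradient U (ξ t)‖ ^ 2 ≤ f t) {M : ℝ}
    (hfM : ∫ t in (0 : ℝ)..P, f t ≤ M) (hξM : l2NormSq P ξ' ≤ M) :
    |U (ξ b) - U (ξ a)| ≤ M := by
  wlog hab : a ≤ b generalizing a b
  · rw [abs_sub_comm]
    exact this hb ha (Set.uIcc_comm a b ▸ hmem) (Set.uIcc_comm a b ▸ hUf) (le_of_not_ge hab)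
  have hP : (0 : ℝ) ≤ P := ha.1.trans ha.2
  rw [Set.uIcc_of_le hab] at hmem hUf
  have hlocal := two_mul_abs_sub_le_of_sq_norm_gradient_le hs hU hξ hξ' hab hmem
    (hf.mono (Set.Icc_subset_Icc ha.1 hb.2)) hUf
  rw [← Set.uIcc_of_le hP] at hf
  have hξint : IntervalIntegrable (fun t => ‖ξ' t‖ ^ 2) MeasureTheory.volume 0 P :=
    (hξ'.norm.pow 2).intervalIntegrable 0 P
  have hmono : ∫ t in a..b, (f t + ‖ξ' t‖ ^ 2) ≤ ∫ t in (0 : ℝ)..P, (f t + ‖ξ' t‖ ^ 2) := by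
    refine intervalIntegral.integral_mono_interval ha.1 hab hb.2 ?_
      (hf.intervalIntegrable.add hξint)
    refine (MeasureTheory.ae_restrict_iff' measurableSet_Ioc).2 (.of_forall fun t ht => ?_)
    exact add_nonneg (hf0 t (Set.Ioc_subset_Icc_self ht)) (sq_nonneg _)
  rw [intervalIntegral.integral_add hf.intervalIntegrable hξint, ← l2NormSq] at hmono
  linarith

end Gordon

/-- The hypotheses (V2)–(V5) on a pair potential: it is `C²` off the collision `ξ = 0`, tends to
`-∞` there, is nonpositive and satisfies Gordon's strong force condition. -/
structure IsStrongForce [CompleteSpace F] (V : ℝ → F → ℝ) : Prop where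
  contDiffOn : ContDiffOn ℝ 2 (fun p : ℝ × F => V p.1 p.2) {p : ℝ × F | p.2 ≠ 0}
  exists_lt : ∀ M : ℝ, ∃ δ > (0 : ℝ), ∀ t : ℝ, ∀ ξ : F, ξ ≠ 0 → ‖ξ‖ < δ → V t ξ < M
  nonpos : ∀ t : ℝ, ∀ ξ : F, ξ ≠ 0 → V t ξ ≤ 0
  exists_gordon : ∃ r₀ > (0 : ℝ), ∃ U : F → ℝ, ContDiffOn ℝ 1 U {ξ | 0 < ‖ξ‖ ∧ ‖ξ‖ < r₀} ∧
    Filter.Tendsto U (nhdsWithin 0 {ξ | ξ ≠ 0}) Filter.atBot ∧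
    ∀ t : ℝ, ∀ ξ : F, 0 < ‖ξ‖ → ‖ξ‖ < r₀ → -V t ξ ≥ ‖gradient U ξ‖ ^ 2

lemma IsStrongForce.continuousOn_comp [CompleteSpace F] {V : ℝ → F → ℝ} (hV : IsStrongForce V)
    {ξ : ℝ → F} (hξ : Continuous ξ) {s : Set ℝ} (hξ0 : ∀ t ∈ s, ξ t ≠ 0) :
    ContinuousOn (fun t => V t (ξ t)) s :=
  hV.contDiffOn.continuousOn.comp (f := fun t => (t, ξ t)) (by fun_prop) hξ0

/-- A path which stays within `r` of the origin has too much potential energy; a path which goes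
from the sphere of radius `r` to the origin has too much variation of `U`. -/
lemma IsStrongForce.exists_le_norm [ProperSpace F] {V : ℝ → F → ℝ} (hV : IsStrongForce V) {P : ℝ}
    (hP : 0 < P) (M : ℝ) :
    ∃ δ > 0, ∀ ξ ξ' : ℝ → F, (∀ t, HasDerivAt ξ (ξ' t) t) → Continuous ξ' →
      (∀ t ∈ Set.Icc 0 P, ξ t ≠ 0) → ∫ t in (0 : ℝ)..P, -V t (ξ t) ≤ M → l2NormSq P ξ' ≤ M →
      ∀ t ∈ Set.Icc 0 P, δ ≤ ‖ξ t‖ := by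
  obtain ⟨r₀, hr₀, U, hU, hUlim, hUV⟩ := hV.exists_gordon
  obtain ⟨δ₀, hδ₀, hδV⟩ := hV.exists_lt (-(M / P))
  obtain ⟨r, hr, hrmin⟩ := exists_between (lt_min hδ₀ hr₀)
  obtain ⟨hrδ, hrr⟩ := lt_min_iff.1 hrmin
  have hsphere : Metric.sphere (0 : F) r ⊆ {ξ | 0 < ‖ξ‖ ∧ ‖ξ‖ < r₀} := fun ξ hξ => by
    rw [mem_sphere_zero_iff_norm] at hξ
    exact ⟨hr.trans_eq hξ.symm, hξ.trans_lt hrr⟩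
  obtain ⟨ε, hε, hdrop⟩ := exists_lt_sub_of_tendsto_atBot M (hU.continuousOn.mono hsphere) hUlim
  refine ⟨min ε r, by positivity, fun ξ ξ' hξ hξ' hξ0 hVM hξM t ht => ?_⟩
  by_contra! hclose
  obtain ⟨hclose_ε, hclose_r⟩ := lt_min_iff.1 hclose
  have hξc : Continuous ξ := continuous_iff_continuousAt.2 fun t => (hξ t).continuousAt
  have hcont := (hV.continuousOn_comp hξc hξ0).neg
  obtain ⟨t₀, ht₀, hVt₀⟩ := exists_mem_Icc_le_div_of_integral_le hP hcont hVM
  have hfar : r ≤ ‖ξ t₀‖ := le_of_not_gt fun hlt =>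
    (neg_le.1 hVt₀).not_gt (hδV t₀ _ (hξ0 t₀ ht₀) (hlt.trans hrδ))
  obtain ⟨c, hc, hcr, hle⟩ := exists_mem_uIcc_eq_forall_le hξc.norm hclose_r hfar
  have hcP : c ∈ Set.Icc 0 P := Set.uIcc_subset_Icc ht ht₀ hc
  have hregion : ∀ q ∈ Set.uIcc t c, 0 < ‖ξ q‖ ∧ ‖ξ q‖ < r₀ := fun q hq =>
    ⟨norm_pos_iff.2 (hξ0 q (Set.uIcc_subset_Icc ht hcP hq)), (hle q hq).trans_lt hrr⟩
  have hopen : IsOpen {ξ : F | 0 < ‖ξ‖ ∧ ‖ξ‖ < r₀} :=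
    (isOpen_lt continuous_const continuous_norm).inter (isOpen_lt continuous_norm continuous_const)
  have hvariation := abs_sub_le_of_sq_norm_gradient_le hopen hU hξ hξ' ht hcP hregion hcont
    (fun q hq => neg_nonneg.2 (hV.nonpos q _ (hξ0 q hq)))
    (fun q hq => hUV q _ (hregion q hq).1 (hregion q hq).2) hVM hξM
  linarith [hdrop _ _ (hξ0 t ht) hclose_ε hcr, le_of_abs_le hvariation]

end StrongForce

/-! ### The N-body system -/

lemma exists_apply_eq_add {E : Type*} [NormedAddCommGroup E] [InnerProductSpace ℝ E]
    [FiniteDimensional ℝ E] {A : E ≃ₗᵢ[ℝ] E} (hA : ∀ v, v ≠ 0 → A v ≠ v) :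
    ∃ B : E →L[ℝ] E, ∀ v, A (B v) = B v + v := by
  set D : E →ₗ[ℝ] E := (A.toLinearEquiv : E →ₗ[ℝ] E) - LinearMap.id
  have hinj : Function.Injective D := (injective_iff_map_eq_zero D).2 fun v hv =>
    by_contra fun hv0 => hA v hv0 (sub_eq_zero.1 hv)
  set e := LinearEquiv.ofInjectiveEndo D hinj
  refine ⟨(e.symm : E →ₗ[ℝ] E).toContinuousLinearMap, fun v => ?_⟩
  have hsub : A (e.symm v) - e.symm v = v := e.apply_symm_apply v
  exact (sub_eq_iff_eq_add'.1 hsub)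

/-- A smooth nonpositive potential on an open set, symmetric under a fixed-point-free isometry. -/
noncomputable def TwistedPotential.ofContDiffOn {E : Type*} [NormedAddCommGroup E]
    [InnerProductSpace ℝ E] [FiniteDimensional ℝ E] {P : ℝ} {A : E ≃ₗᵢ[ℝ] E} {W : ℝ → E → ℝ}
    {s : Set E} (hP : 0 < P) (hA : ∀ v, v ≠ 0 → A v ≠ v) (hs : IsOpen s)
    (hW : ContDiffOn ℝ 2 (fun p : ℝ × E => W p.1 p.2) (Set.univ ×ˢ s))
    (hnonpos : ∀ t, ∀ x ∈ s, W t x ≤ 0) (hmem : ∀ x, A x ∈ s ↔ x ∈ s)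
    (htwist : ∀ t, ∀ x ∈ s, W (t + P) (A x) = W t x) : TwistedPotential E P A where
  W := W
  gradW t := _root_.gradient (W t)
  domain := s
  B := (exists_apply_eq_add hA).choose
  period_pos := hP
  twist_B := (exists_apply_eq_add hA).choose_spec
  continuousOn_W := hW.continuousOn
  continuousOn_gradW := continuousOn_gradient_slice hs hW
  nonpos := hnonpos
  taylor _ hKs hK := exists_abs_sub_sub_inner_gradient_le hs hW P hKs hK
  map_mem_iff := hmem
  gradW_twist t _ hx := gradient_map_of_eventuallyEq_comp <|
    Filter.eventually_of_mem (hs.mem_nhds hx) fun y hy => htwist t y hy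

lemma l2NormSq_clm_apply_le {E F : Type*} [NormedAddCommGroup E] [NormedSpace ℝ E]
    [NormedAddCommGroup F] [NormedSpace ℝ F] {P : ℝ} (hP : 0 ≤ P) (L : E →L[ℝ] F) {u : ℝ → E}
    (hu : Continuous u) : l2NormSq P (fun t => L (u t)) ≤ ‖L‖ ^ 2 * l2NormSq P u := by
  rw [l2NormSq, l2NormSq, ← intervalIntegral.integral_const_mul]
  refine intervalIntegral.integral_mono_on hP
    (Continuous.intervalIntegrable (by fun_prop) _ _)
    (Continuous.intervalIntegrable (by fun_prop) _ _) fun t _ => ?_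
  rw [← mul_pow]
  exact pow_le_pow_left₀ (norm_nonneg _) (L.le_opNorm _) 2

lemma TwistedPotential.integral_neg_W_le_action {E : Type*} [NormedAddCommGroup E]
    [InnerProductSpace ℝ E] {P : ℝ} {A : E ≃ₗᵢ[ℝ] E} (S : TwistedPotential E P A) (u : ℝ → E) :
    ∫ t in (0)..P, -S.W t (S.path u t) ≤ S.action u := by
  rw [intervalIntegral.integral_neg, TwistedPotential.action]
  linarith [l2NormSq_nonneg S.period_pos.le u]

section Configuration

variable {ι F : Type*} [NormedAddCommGroup F]

lemma isOpen_setOf_injective [Finite ι] : IsOpen {x : ι → F | Function.Injective x} := by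
  have heq : {x : ι → F | Function.Injective x} = ⋂ i, ⋂ j, {x | x i = x j → i = j} := by
    ext x
    simp [Function.Injective]
  rw [heq]
  refine isOpen_iInter_of_finite fun i => isOpen_iInter_of_finite fun j => ?_
  by_cases hij : i = j
  · simp [hij]
  · simpa [hij] using isOpen_ne_fun (continuous_apply i) (continuous_apply (A := fun _ => F) j)

variable [Fintype ι] [DecidableEq ι]

/-- The total potential `V(t, x)` of the paper. -/
noncomputable def nbodyPotential (V : ι → ι → ℝ → F → ℝ) (t : ℝ) (x : ι → F) : ℝ :=
  (1 / 2) * ∑ i, ∑ j ∈ univ.filter (fun j => j ≠ i), V i j t (x i - x j)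

variable [InnerProductSpace ℝ F] [CompleteSpace F] {V : ι → ι → ℝ → F → ℝ} {t : ℝ} {x : ι → F}

lemma contDiffOn_nbodyPotential (hV : ∀ i j, i ≠ j → IsStrongForce (V i j)) :
    ContDiffOn ℝ 2 (fun p : ℝ × (ι → F) => nbodyPotential V p.1 p.2)
      (Set.univ ×ˢ {x | Function.Injective x}) := by
  refine contDiffOn_const.mul (ContDiffOn.sum fun i _ => ContDiffOn.sum fun j hj => ?_)
  have hij : i ≠ j := (mem_filter.1 hj).2.symm
  exact (hV i j hij).contDiffOn.comp (f := fun p : ℝ × (ι → F) => (p.1, p.2 i - p.2 j))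
    (by fun_prop) fun p hp => sub_ne_zero.2 (hp.2.ne hij)

lemma nbodyPotential_nonpos (hV : ∀ i j, i ≠ j → IsStrongForce (V i j))
    (hx : Function.Injective x) : nbodyPotential V t x ≤ 0 :=
  mul_nonpos_of_nonneg_of_nonpos (by norm_num) <| sum_nonpos fun i _ => sum_nonpos fun j hj =>
    have hij : i ≠ j := (mem_filter.1 hj).2.symm
    (hV i j hij).nonpos t _ (sub_ne_zero.2 (hx.ne hij))

lemma two_mul_nbodyPotential_le (hV : ∀ i j, i ≠ j → IsStrongForce (V i j))
    (hx : Function.Injective x) {i j : ι} (hij : i ≠ j) :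
    2 * nbodyPotential V t x ≤ V i j t (x i - x j) := by
  have hpair : ∀ i, ∀ j ∈ univ.filter (fun j => j ≠ i), 0 ≤ -V i j t (x i - x j) := fun i j hj =>
    have hij : i ≠ j := (mem_filter.1 hj).2.symm
    neg_nonneg.2 ((hV i j hij).nonpos t _ (sub_ne_zero.2 (hx.ne hij)))
  have houter := single_le_sum
    (f := fun i => ∑ j ∈ univ.filter (fun j => j ≠ i), -V i j t (x i - x j))
    (fun i _ => sum_nonneg (hpair i)) (mem_univ i)
  have hinner := single_le_sum (hpair i) (mem_filter.2 ⟨mem_univ j, hij.symm⟩)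
  simp only [sum_neg_distrib] at houter hinner
  unfold nbodyPotential
  linarith

end Configuration

section Rescaling

variable {ι F : Type*} [NormedAddCommGroup F] [InnerProductSpace ℝ F]

/-- The passage from mass-weighted coordinates to positions: with `w i = (m i)^(-1/2)` the kinetic
energy becomes half the square of the Euclidean norm of the velocity. -/
noncomputable def rescale (w : ι → ℝ) : PiLp 2 (fun _ : ι => F) →L[ℝ] (ι → F) :=
  ContinuousLinearMap.pi fun i => w i • PiLp.proj 2 (fun _ : ι => F) i

@[simp] lemma rescale_apply (w : ι → ℝ) (Y : PiLp 2 (fun _ : ι => F)) (i : ι) :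
    rescale w Y i = w i • Y i := rfl

lemma isOpen_rescale_preimage [Finite ι] (w : ι → ℝ) :
    IsOpen (rescale w ⁻¹' {x : ι → F | Function.Injective x}) :=
  isOpen_setOf_injective.preimage (rescale w).continuous

/-- The position of particle `i` relative to particle `j`. -/
noncomputable def relativePosition (w : ι → ℝ) (i j : ι) : PiLp 2 (fun _ : ι => F) →L[ℝ] F :=
  w i • PiLp.proj 2 (fun _ : ι => F) i - w j • PiLp.proj 2 (fun _ : ι => F) j

@[simp] lemma relativePosition_apply (w : ι → ℝ) (i j : ι) (Y : PiLp 2 (fun _ : ι => F)) :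
    relativePosition w i j Y = w i • Y i - w j • Y j := rfl

variable [Fintype ι]

variable (ι) in
/-- The isometry `g` acting on each of the particles. -/
noncomputable def diagonalIsometry (g : F ≃ₗᵢ[ℝ] F) :
    PiLp 2 (fun _ : ι => F) ≃ₗᵢ[ℝ] PiLp 2 (fun _ : ι => F) :=
  LinearIsometryEquiv.piLpCongrRight 2 fun _ => g

@[simp] lemma diagonalIsometry_apply (g : F ≃ₗᵢ[ℝ] F) (Y : PiLp 2 (fun _ : ι => F)) (i : ι) :
    diagonalIsometry ι g Y i = g (Y i) := rfl

lemma diagonalIsometry_ne {g : F ≃ₗᵢ[ℝ] F} (hg : ∀ v, v ≠ 0 → g v ≠ v)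
    (Y : PiLp 2 (fun _ : ι => F)) (hY : Y ≠ 0) : diagonalIsometry ι g Y ≠ Y := fun heq =>
  hY <| PiLp.ext fun i => by_contra fun hi => hg (Y i) hi (congrArg (fun Z => Z i) heq)

lemma rescale_diagonalIsometry (w : ι → ℝ) (g : F ≃ₗᵢ[ℝ] F) (Y : PiLp 2 (fun _ : ι => F)) :
    rescale w (diagonalIsometry ι g Y) = g ∘ rescale w Y :=
  funext fun i => by simp

variable (w : ι → ℝ) [FiniteDimensional ℝ F] [DecidableEq ι] {V : ι → ι → ℝ → F → ℝ} {P : ℝ}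
  {g : F ≃ₗᵢ[ℝ] F}

lemma contDiffOn_nbodyPotential_rescale (hV : ∀ i j, i ≠ j → IsStrongForce (V i j)) :
    ContDiffOn ℝ 2
      (fun p : ℝ × PiLp 2 (fun _ : ι => F) => nbodyPotential V p.1 (rescale w p.2))
      (Set.univ ×ˢ (rescale w ⁻¹' {x : ι → F | Function.Injective x})) :=
  (contDiffOn_nbodyPotential hV).comp (g := fun p : ℝ × (ι → F) => nbodyPotential V p.1 p.2)
    (f := fun p : ℝ × PiLp 2 (fun _ : ι => F) => (p.1, rescale w p.2))
    (by fun_prop) fun _ hp => hp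

/-- The `N`-body problem in mass-weighted coordinates. -/
noncomputable def nbodySystem (hP : 0 < P)
    (hV : ∀ i j, i ≠ j → IsStrongForce (V i j)) (hg : ∀ v, v ≠ 0 → g v ≠ v)
    (hsymm : ∀ t x, Function.Injective x →
      nbodyPotential V (t + P) (g ∘ x) = nbodyPotential V t x) :
    TwistedPotential (PiLp 2 fun _ : ι => F) P (diagonalIsometry ι g) :=
  TwistedPotential.ofContDiffOn (W := fun t Y => nbodyPotential V t (rescale w Y)) hP
    (diagonalIsometry_ne hg) (isOpen_rescale_preimage w) (contDiffOn_nbodyPotential_rescale w hV)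
    (fun _ _ hY => nbodyPotential_nonpos hV hY)
    (fun Y => by
      rw [Set.mem_preimage, rescale_diagonalIsometry]
      exact g.injective.of_comp_iff _)
    (fun t Y hY => by rw [rescale_diagonalIsometry, hsymm t _ hY])

variable {w} {hP : 0 < P} {hV : ∀ i j, i ≠ j → IsStrongForce (V i j)}
  {hg : ∀ v, v ≠ 0 → g v ≠ v} {hsymm : ∀ t x, Function.Injective x →
    nbodyPotential V (t + P) (g ∘ x) = nbodyPotential V t x}

lemma relativePosition_ne_zero {i j : ι} (hij : i ≠ j) {Y : PiLp 2 fun _ : ι => F}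
    (hY : Y ∈ (nbodySystem w hP hV hg hsymm).domain) : relativePosition w i j Y ≠ 0 :=
  sub_ne_zero.2 (hY.ne hij)

lemma exists_le_norm_relativePosition {i j : ι} (hij : i ≠ j) (b : ℝ) :
    ∃ δ > 0, ∀ u, (nbodySystem w hP hV hg hsymm).IsAdmissible u →
      (nbodySystem w hP hV hg hsymm).action u ≤ b → ∀ t ∈ Set.Icc 0 P,
        δ ≤ ‖relativePosition w i j ((nbodySystem w hP hV hg hsymm).path u t)‖ := by
  set S := nbodySystem w hP hV hg hsymm
  set L : PiLp 2 (fun _ : ι => F) →L[ℝ] F := relativePosition w i j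
  obtain ⟨δ, hδ, hle⟩ := (hV i j hij).exists_le_norm hP (max (2 * b) (‖L‖ ^ 2 * (2 * b)))
  refine ⟨δ, hδ, fun u hu hub => hle (fun t => L (S.path u t)) (fun t => L (u t))
    (fun t => L.hasFDerivAt.comp_hasDerivAt t (hasDerivAt_twistedPrimitive hu.1 t))
    (L.continuous.comp hu.1) (fun t ht => relativePosition_ne_zero hij (hu.2 t ht))
    (le_max_of_le_left ?_) (le_max_of_le_right ?_)⟩
  · calc ∫ t in (0)..P, -V i j t (L (S.path u t))
        ≤ ∫ t in (0)..P, 2 * -S.W t (S.path u t) := by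
          refine intervalIntegral.integral_mono_on hP.le ?_ ?_ fun t ht => ?_
          · refine ContinuousOn.intervalIntegrable ?_
            rw [Set.uIcc_of_le hP.le]
            exact ((hV i j hij).continuousOn_comp
              (L.continuous.comp hu.continuous_path)
              fun t ht => relativePosition_ne_zero hij (hu.2 t ht)).neg
          · exact (TwistedPotential.intervalIntegrable_W hu.continuous_path hu.2).neg.const_mul 2
          · have hpair := two_mul_nbodyPotential_le (t := t) hV (hu.2 t ht) hij
            change -V i j t _ ≤ 2 * -nbodyPotential V t _
            linarith!
      _ = 2 * ∫ t in (0)..P, -S.W t (S.path u t) := intervalIntegral.integral_const_mul _ _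
      _ ≤ 2 * b := by linarith [S.integral_neg_W_le_action u]
  · calc l2NormSq P (fun t => L (u t)) ≤ ‖L‖ ^ 2 * l2NormSq P u :=
          l2NormSq_clm_apply_le hP.le L hu.1
      _ ≤ ‖L‖ ^ 2 * (2 * b) := by gcongr; linarith [hu.l2NormSq_le]

theorem hasCompactSublevels_nbodySystem :
    (nbodySystem w hP hV hg hsymm).HasCompactSublevels := by
  intro b
  set S := nbodySystem w hP hV hg hsymm
  have hδ : ∀ i j, ∃ δ > 0, i ≠ j → ∀ u, S.IsAdmissible u → S.action u ≤ b →
      ∀ t ∈ Set.Icc 0 P, δ ≤ ‖relativePosition w i j (S.path u t)‖ := fun i j => by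
    rcases eq_or_ne i j with rfl | hij
    · exact ⟨1, one_pos, fun h => absurd rfl h⟩
    · obtain ⟨δ, hδ, hle⟩ := exists_le_norm_relativePosition (hP := hP) (hV := hV) (hg := hg)
        (hsymm := hsymm) (w := w) hij b
      exact ⟨δ, hδ, fun _ => hle⟩
  choose δ hδ hle using hδ
  refine ⟨Metric.closedBall 0 √((‖S.B‖ + 1) ^ 2 * P * (2 * b)) ∩
    {Y | ∀ i j, i ≠ j → δ i j ≤ ‖relativePosition w i j Y‖}, fun Y hY i j hij => ?_,
    (isCompact_closedBall _ _).inter_right ?_, fun u hu hub t ht =>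
      ⟨?_, fun i j hij => hle i j hij u hu hub t ht⟩⟩
  · by_contra hne
    have hzero : relativePosition w i j Y = 0 := sub_eq_zero.2 hij
    have hpos := (hδ i j).trans_le (hY.2 i j hne)
    rw [hzero, norm_zero] at hpos
    exact hpos.false
  · simp only [Set.ofPred_forall]
    exact isClosed_iInter fun i => isClosed_iInter fun j => isClosed_iInter fun _ =>
      isClosed_le continuous_const (relativePosition w i j).continuous.norm
  · rw [mem_closedBall_zero_iff]
    refine Real.le_sqrt_of_sq_le ((sq_norm_twistedPrimitive_le hP hu.1 ht).trans ?_)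
    gcongr
    linarith [hu.l2NormSq_le]

end Rescaling

/-! ### Critical points of large action -/

section Alternation

variable {F : Type*} [NormedAddCommGroup F] [NormedSpace ℝ F] {a b z : F}

lemma norm_sub_of_sameRay_of_sameRay_neg (hz : z ≠ 0) (ha : SameRay ℝ z a)
    (hb : SameRay ℝ (-z) b) : ‖b - a‖ = ‖b‖ + ‖a‖ := by
  have hray : SameRay ℝ b (-a) :=
    hb.symm.trans ha.neg fun h => absurd (neg_eq_zero.1 h) hz
  rw [sub_eq_add_neg, hray.norm_add, norm_neg]

variable [CompleteSpace F] {ζ ζ' : ℝ → F} {P δ : ℝ}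

lemma two_mul_mul_le_integral_norm_of_alternating (hζ : ∀ t, HasDerivAt ζ (ζ' t) t)
    (hζ' : Continuous ζ') {k : ℕ} {s : Fin k → ℝ} (hs : StrictMono s)
    (hsP : ∀ i, s i ∈ Set.Icc 0 P) (hδ : ∀ i, δ ≤ ‖ζ (s i)‖) (hz : z ≠ 0)
    (halt : ∀ i : Fin k, SameRay ℝ (altSign i • z) (ζ (s i))) (i : Fin k) :
    2 * δ * (i : ℕ) ≤ ∫ t in (0)..P, ‖ζ' t‖ := by
  have hint : ∀ a b, IntervalIntegrable (fun t => ‖ζ' t‖) MeasureTheory.volume a b :=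
    fun a b => hζ'.norm.intervalIntegrable a b
  have hpartial : ∀ j : ℕ, ∀ hj : j < k, 2 * δ * j ≤ ∫ t in (0)..s ⟨j, hj⟩, ‖ζ' t‖ := by
    intro j
    induction j with
    | zero =>
      intro hj
      simpa using intervalIntegral.integral_nonneg (hsP _).1 fun t _ => norm_nonneg (ζ' t)
    | succ j ih =>
      intro hj
      set a := s ⟨j, by omega⟩
      set b := s ⟨j + 1, hj⟩
      have hab : a ≤ b := hs.monotone (Fin.mk_le_mk.2 j.le_succ)
      have hray : SameRay ℝ (-(altSign j • z)) (ζ b) := by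
        simpa [altSign_succ] using halt ⟨j + 1, hj⟩
      have hstep : 2 * δ ≤ ∫ t in a..b, ‖ζ' t‖ :=
        calc 2 * δ ≤ ‖ζ b‖ + ‖ζ a‖ := by linarith [hδ ⟨j, by omega⟩, hδ ⟨j + 1, hj⟩]
          _ = ‖ζ b - ζ a‖ := (norm_sub_of_sameRay_of_sameRay_neg
              (smul_ne_zero (altSign_ne_zero j) hz) (halt ⟨j, by omega⟩) hray).symm
          _ = ‖∫ t in a..b, ζ' t‖ := by
              rw [intervalIntegral.integral_eq_sub_of_hasDerivAt (fun t _ => hζ t)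
                (hζ'.intervalIntegrable _ _)]
          _ ≤ ∫ t in a..b, ‖ζ' t‖ := intervalIntegral.norm_integral_le_integral_norm hab
      rw [← intervalIntegral.integral_add_adjacent_intervals (hint 0 a) (hint a b)]
      push_cast
      linarith [ih (by omega)]
  exact (hpartial i i.2).trans <| intervalIntegral.integral_mono_interval le_rfl (hsP i).1 (hsP i).2
    (Filter.Eventually.of_forall fun _ => norm_nonneg _) (hint _ _)

end Alternation

section TwistedPath

variable {E : Type*} [NormedAddCommGroup E] [InnerProductSpace ℝ E] {P : ℝ} {A : E ≃ₗᵢ[ℝ] E}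
  {B : E →L[ℝ] E}

lemma eq_zero_of_map_eq_self (hB : ∀ v, A (B v) = B v + v) {v : E} (hv : A v = v) : v = 0 := by
  have hinner : inner ℝ v (B v + v) = inner ℝ v (B v) := by
    rw [← hB, ← A.inner_map_map v (B v), hv]
  rwa [inner_add_right, add_eq_left, inner_self_eq_zero] at hinner

lemma twistedPrimitive_deriv [CompleteSpace E] (hB : ∀ v, A (B v) = B v + v) {x : ℝ → E}
    (hx : Differentiable ℝ x) (hx' : Continuous (deriv x)) (hxP : x P = A (x 0)) :
    twistedPrimitive P B (deriv x) = x := by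
  have hint : ∀ t, ∫ s in (0)..t, deriv x s = x t - x 0 := fun t =>
    intervalIntegral.integral_deriv_eq_sub (fun s _ => hx s) (hx'.intervalIntegrable _ _)
  have hzero : B (x P - x 0) - x 0 = 0 := eq_zero_of_map_eq_self hB <| by
    rw [map_sub, hB, hxP]
    abel
  funext t
  rw [twistedPrimitive, hint, hint, sub_eq_zero.1 hzero]
  abel

end TwistedPath

namespace TwistedPotential

variable {E F : Type*} [NormedAddCommGroup E] [InnerProductSpace ℝ E] [NormedAddCommGroup F]
  [InnerProductSpace ℝ F] {P : ℝ} {A : E ≃ₗᵢ[ℝ] E} {S : TwistedPotential E P A} [CompleteSpace E]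

lemma IsAdmissible.integral_norm_clm_apply_le {u : ℝ → E} (hu : S.IsAdmissible u) (L : E →L[ℝ] F) :
    ∫ t in (0)..P, ‖L (u t)‖ ≤ ‖L‖ * √(P * (2 * S.action u)) := by
  have hP := S.period_pos
  have hcont := hu.1
  calc ∫ t in (0)..P, ‖L (u t)‖ ≤ ∫ t in (0)..P, ‖L‖ * ‖u t‖ :=
        intervalIntegral.integral_mono_on hP.le (Continuous.intervalIntegrable (by fun_prop) _ _)
          (Continuous.intervalIntegrable (by fun_prop) _ _) fun t _ => L.le_opNorm _
    _ = ‖L‖ * ∫ t in (0)..P, ‖u t‖ := intervalIntegral.integral_const_mul _ _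
    _ ≤ ‖L‖ * √(P * (2 * S.action u)) := by
        gcongr
        refine Real.le_sqrt_of_sq_le ((sq_integral_norm_le hP hcont).trans ?_)
        gcongr
        exact hu.l2NormSq_le

lemma exists_isAdmissible_path_eq {Z : Type*} [TopologicalSpace Z] {g : F → F}
    {R : F →L[ℝ] E} (hRg : ∀ v, R (g v) = A (R v)) (hR : ∀ v, v ≠ 0 → R v ∈ S.domain)
    {y : Z → ℝ → F} (hy : ∀ z, Differentiable ℝ (y z))
    (hy' : Continuous fun p : Z × ℝ => deriv (y p.1) p.2)
    (hy0 : ∀ z, ∀ t ∈ Set.Icc (0 : ℝ) 1, y z t ≠ 0) (hyg : ∀ z, y z 1 = g (y z 0)) :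
    ∃ U : Z → ℝ → E, Continuous (Function.uncurry U) ∧ (∀ z, S.IsAdmissible (U z)) ∧
      ∀ z t, S.path (U z) t = R (y z (t / P)) := by
  have hP := S.period_pos
  set x : Z → ℝ → E := fun z t => R (y z (t / P))
  have hderiv : ∀ z t, HasDerivAt (x z) (R (P⁻¹ • deriv (y z) (t / P))) t := fun z t =>
    R.hasFDerivAt.comp_hasDerivAt t <| (hy z (t / P)).hasDerivAt.scomp t <| by
      simpa using (hasDerivAt_id t).div_const P
  have hU : Continuous (Function.uncurry fun z => deriv (x z)) := by
    have hscaled : Continuous fun p : Z × ℝ => deriv (y p.1) (p.2 / P) :=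
      hy'.comp (f := fun p : Z × ℝ => (p.1, p.2 / P)) (by fun_prop)
    exact (R.continuous.comp (hscaled.const_smul P⁻¹)).congr fun p => (hderiv p.1 p.2).deriv.symm
  have hUz : ∀ z, Continuous (deriv (x z)) := fun z => hU.comp (Continuous.prodMk_right z)
  have hpath : ∀ z, S.path (deriv (x z)) = x z := fun z =>
    twistedPrimitive_deriv S.twist_B (fun t => (hderiv z t).differentiableAt) (hUz z) <| by
      simp only [x, div_self hP.ne', zero_div, hyg, hRg]
  refine ⟨fun z => deriv (x z), hU, fun z => ⟨hUz z, fun t ht => ?_⟩,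
    fun z t => congrFun (hpath z) t⟩
  rw [hpath]
  exact hR _ (hy0 z _ ⟨div_nonneg ht.1 hP.le, (div_le_one hP).2 ht.2⟩)

section HighCritical

variable {E : Type*} [NormedAddCommGroup E] [InnerProductSpace ℝ E] [ProperSpace E] {P : ℝ}
  {A : E ≃ₗᵢ[ℝ] E} {S : TwistedPotential E P A} {q : ℕ}
  {g : EuclideanSpace ℝ (Fin (q + 2)) → EuclideanSpace ℝ (Fin (q + 2))}
  {L : E →L[ℝ] EuclideanSpace ℝ (Fin (q + 2))} {R : EuclideanSpace ℝ (Fin (q + 2)) →L[ℝ] E}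

lemma HasCompactSublevels.exists_alternating_action_le (hS : S.HasCompactSublevels)
    (hg : ∀ v, v ≠ 0 → ¬ SameRay ℝ v (g v)) (hLg : ∀ x, L (A x) = g (L x))
    (hL : ∀ x ∈ S.domain, L x ≠ 0) (hRg : ∀ v, R (g v) = A (R v))
    (hR : ∀ v, v ≠ 0 → R v ∈ S.domain) (hLR : ∀ v, L (R v) = v) {c : ℝ}
    (hc : ∀ u, S.IsCritical u → S.action u < c) {k : ℕ} (hk : Even k) :
    ∃ u, S.IsAdmissible u ∧ S.action u ≤ c ∧ ∃ s : Fin k → ℝ, StrictMono s ∧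
      (∀ i, s i ∈ Set.Icc 0 P) ∧
      ∀ i : Fin k, SameRay ℝ (altSign i • L (S.path u 0)) (L (S.path u (s i))) := by
  have hP := S.period_pos
  obtain ⟨y, hy, hy', hy0, hyg, hyH⟩ := exists_alternating_family hk hg
  obtain ⟨U, hU, hUadm, hUy⟩ := exists_isAdmissible_path_eq hRg hR hy hy' hy0 hyg
  obtain ⟨V, hV, hVadm, hVc, ⟨H⟩⟩ := hS.exists_homotopicWith_action_le hc hU hUadm
  have hscale : ∀ t ∈ Set.Icc (0 : ℝ) 1, P * t ∈ Set.Icc 0 P := fun t ht =>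
    ⟨mul_nonneg hP.le ht.1, mul_le_of_le_one_right hP.le ht.2⟩
  have hH0 : ∀ w t, H (Set.projIcc 0 1 zero_le_one 0, (w, t)) = R (y w (t / P)) := fun w t => by
    rw [Set.projIcc_left]
    exact (H.apply_zero (w, t)).trans (hUy w t)
  have hH1 : ∀ w t, H (Set.projIcc 0 1 zero_le_one 1, (w, t)) = S.path (V w) t := fun w t => by
    rw [Set.projIcc_right]
    exact H.apply_one (w, t)
  obtain ⟨w, s, hs, hs01, halt⟩ := hyH
    (fun τ w t => L (H (Set.projIcc 0 1 zero_le_one τ, (w, P * t))))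
    (by fun_prop)
    (fun w t _ => by rw [hH0, hLR, mul_div_cancel_left₀ _ hP.ne'])
    (fun τ _ w t ht => hL _ ((H.prop _ w).1 _ (hscale t ht)))
    (fun τ _ w => by
      rw [mul_one, mul_zero, ← hLg]
      exact congrArg L (H.prop _ w).2)
  simp only [hH1, mul_zero] at halt
  exact ⟨V w, hVadm w, hVc w, fun i => P * s i, fun i j hij => mul_lt_mul_of_pos_left (hs hij) hP,
    fun i => hscale _ (hs01 i), halt⟩

/-- Otherwise there would be paths of bounded action with arbitrarily many alternations of `L`,
whose number is bounded by the length of the image under `L`. -/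
theorem HasCompactSublevels.exists_isCritical_lt_action (hS : S.HasCompactSublevels)
    (hg : ∀ v, v ≠ 0 → ¬ SameRay ℝ v (g v)) (hLg : ∀ x, L (A x) = g (L x))
    (hL : ∀ x ∈ S.domain, L x ≠ 0) (hRg : ∀ v, R (g v) = A (R v))
    (hR : ∀ v, v ≠ 0 → R v ∈ S.domain) (hLR : ∀ v, L (R v) = v) (c : ℝ) :
    ∃ u, S.IsCritical u ∧ c < S.action u := by
  by_contra! hcrit
  obtain ⟨K, hKS, hK, hpathK⟩ := hS (c + 1)
  obtain ⟨δ, hδ, hδK⟩ : ∃ δ > 0, ∀ x ∈ K, δ ≤ ‖L x‖ :=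
    hK.exists_forall_le' (a := 0) L.continuous.norm.continuousOn
      fun x hx => norm_pos_iff.2 (hL x (hKS hx))
  obtain ⟨M, hM⟩ := exists_nat_gt (‖L‖ * √(P * (2 * (c + 1))) / (2 * δ))
  obtain ⟨u, hu, huc, s, hs, hsP, halt⟩ := hS.exists_alternating_action_le hg hLg hL hRg hR hLR
    (fun u hu => (hcrit u hu).trans_lt (lt_add_one c)) (even_two_mul (M + 1))
  have hpath : ∀ t ∈ Set.Icc 0 P, S.path u t ∈ K := hpathK u hu huc
  have hlength : 2 * δ * M ≤ ∫ t in (0)..P, ‖L (u t)‖ :=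
    two_mul_mul_le_integral_norm_of_alternating (ζ := fun t => L (S.path u t))
      (fun t => L.hasFDerivAt.comp_hasDerivAt t (hasDerivAt_twistedPrimitive hu.1 t))
      (L.continuous.comp hu.1) hs hsP (fun i => hδK _ (hpath _ (hsP i)))
      (hL _ (hu.2 0 ⟨le_rfl, S.period_pos.le⟩)) halt ⟨M, by omega⟩
  have hbound : ‖L‖ * √(P * (2 * S.action u)) ≤ ‖L‖ * √(P * (2 * (c + 1))) := by
    have := S.period_pos
    gcongr
  rw [div_lt_iff₀ (by positivity)] at hM
  linarith [hu.integral_norm_clm_apply_le L]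

end HighCritical

end TwistedPotential

/-! ### Infinitely many solutions -/

lemma not_sameRay_map_of_ne {F : Type*} [NormedAddCommGroup F] [NormedSpace ℝ F]
    {g : F ≃ₗᵢ[ℝ] F} (hg : ∀ v, v ≠ 0 → g v ≠ v) {v : F} (hv : v ≠ 0) :
    ¬ SameRay ℝ v (g v) := fun h =>
  hg v hv ((sameRay_iff_of_norm_eq (g.norm_map v).symm).1 h).symm

section Rescaling

variable {ι F : Type*} [NormedAddCommGroup F] [InnerProductSpace ℝ F] {w : ι → ℝ}

/-- The configuration with the particles at the multiples `c i • v` of `v`, in the coordinates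
of `rescale`. -/
noncomputable def collinearConfiguration (w c : ι → ℝ) : F →L[ℝ] PiLp 2 (fun _ : ι => F) :=
  (PiLp.continuousLinearEquiv 2 ℝ fun _ : ι => F).symm.toContinuousLinearMap.comp
    (ContinuousLinearMap.pi fun i => (c i / w i) • ContinuousLinearMap.id ℝ F)

@[simp] lemma collinearConfiguration_apply (w c : ι → ℝ) (v : F) (i : ι) :
    collinearConfiguration w c v i = (c i / w i) • v := rfl

lemma rescale_collinearConfiguration (hw : ∀ i, w i ≠ 0) (c : ι → ℝ) (v : F) :
    rescale w (collinearConfiguration w c v) = fun i => c i • v :=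
  funext fun i => by simp [smul_smul, mul_div_cancel₀ _ (hw i)]

lemma injective_rescale_collinearConfiguration (hw : ∀ i, w i ≠ 0) {c : ι → ℝ}
    (hc : Function.Injective c) {v : F} (hv : v ≠ 0) :
    Function.Injective (rescale w (collinearConfiguration w c v)) := by
  rw [rescale_collinearConfiguration hw]
  exact fun i j hij => hc (smul_left_injective ℝ hv hij)

variable [Fintype ι] [FiniteDimensional ℝ F] [DecidableEq ι] {V : ι → ι → ℝ → F → ℝ} {P : ℝ}
  {g : F ≃ₗᵢ[ℝ] F}

theorem infinite_isSolution_nbodySystem [Nontrivial ι] (hw : ∀ i, w i ≠ 0)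
    (hF : 2 ≤ Module.finrank ℝ F) (hP : 0 < P) (hV : ∀ i j, i ≠ j → IsStrongForce (V i j))
    (hg : ∀ v, v ≠ 0 → g v ≠ v) (hsymm : ∀ t x, Function.Injective x →
      nbodyPotential V (t + P) (g ∘ x) = nbodyPotential V t x) :
    {Y | (nbodySystem w hP hV hg hsymm).IsSolution Y}.Infinite := by
  obtain ⟨i, j, hij⟩ := exists_pair_ne ι
  obtain ⟨c, hc⟩ : ∃ c : ι → ℝ, Function.Injective c :=
    let ⟨f, hf⟩ := exists_injective_nat ι
    ⟨_, Nat.cast_injective.comp hf⟩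
  obtain ⟨q, hq⟩ := Nat.exists_eq_add_of_le' hF
  let e : F ≃ₗᵢ[ℝ] EuclideanSpace ℝ (Fin (q + 2)) :=
    ((stdOrthonormalBasis ℝ F).reindex (finCongr hq)).repr
  let L : PiLp 2 (fun _ : ι => F) →L[ℝ] EuclideanSpace ℝ (Fin (q + 2)) :=
    (c i - c j)⁻¹ • e.toContinuousLinearEquiv.toContinuousLinearMap.comp (relativePosition w i j)
  let R : EuclideanSpace ℝ (Fin (q + 2)) →L[ℝ] PiLp 2 (fun _ : ι => F) :=
    (collinearConfiguration w c).comp e.symm.toContinuousLinearEquiv.toContinuousLinearMap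
  have hcij : c i - c j ≠ 0 := sub_ne_zero.2 (hc.ne hij)
  have hL : ∀ Y, L Y = (c i - c j)⁻¹ • e (relativePosition w i j Y) := fun _ => rfl
  have hR : ∀ v, R v = collinearConfiguration w c (e.symm v) := fun _ => rfl
  refine TwistedPotential.infinite_isSolution
    (hasCompactSublevels_nbodySystem.exists_isCritical_lt_action (g := (e.symm.trans g).trans e)
      (L := L) (R := R) (fun v hv => not_sameRay_map_of_ne (fun v hv hfix => ?_) hv) (fun Y => ?_)
      (fun Y hY => ?_) (fun v => ?_) (fun v hv => ?_) fun v => ?_)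
  · exact hg (e.symm v) (by simpa using hv) (e.eq_symm_apply.2 hfix)
  · simp [hL, smul_sub]
  · rw [hL]
    exact smul_ne_zero (inv_ne_zero hcij)
      ((map_ne_zero_iff e e.injective).2 (relativePosition_ne_zero hij hY))
  · ext1 k
    simp [hR]
  · exact injective_rescale_collinearConfiguration hw hc (by simpa using hv)
  · simp [hL, hR, smul_smul, mul_div_cancel₀ _ (hw _), ← sub_smul,
      inv_mul_cancel₀ hcij]

lemma gradient_comp_rescale_apply {f : (ι → F) → ℝ} {Y : PiLp 2 (fun _ : ι => F)}
    (hf : DifferentiableAt ℝ f (rescale w Y)) (i : ι) :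
    gradient (fun Z => f (rescale w Z)) Y i =
      w i • gradient (fun y => f (Function.update (rescale w Y) i y)) (rescale w Y i) := by
  refine ext_inner_right ℝ fun z => ?_
  have hcomp : HasFDerivAt (fun Z => f (rescale w Z))
      ((fderiv ℝ f (rescale w Y)).comp (rescale w)) Y :=
    hf.hasFDerivAt.comp (f := rescale w) Y (by fun_prop)
  have hupdate : HasFDerivAt (fun y => f (Function.update (rescale w Y) i y))
      ((fderiv ℝ f (rescale w Y)).comp (.pi (Pi.single i (.id ℝ F)))) (rescale w Y i) := by
    refine HasFDerivAt.comp (g := f) _ ?_ (hasFDerivAt_update (rescale w Y) (rescale w Y i))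
    rw [Function.update_eq_self]
    exact hf.hasFDerivAt
  have hsingle : rescale w (PiLp.single 2 i z) =
      w i • ContinuousLinearMap.pi (Pi.single i (.id ℝ F)) z := by
    ext1 j
    rcases eq_or_ne j i with rfl | hj <;> simp [*]
  calc inner ℝ (gradient (fun Z => f (rescale w Z)) Y i) z
      = inner ℝ (gradient (fun Z => f (rescale w Z)) Y) (PiLp.single 2 i z) := by
        simp [PiLp.inner_apply, PiLp.single_apply, apply_ite, -inner_gradient_left]
    _ = fderiv ℝ f (rescale w Y) (rescale w (PiLp.single 2 i z)) := by
        rw [inner_gradient_left, hcomp.fderiv]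
        rfl
    _ = _ := by
        rw [hsingle, map_smul, inner_smul_left, inner_gradient_left, hupdate.fderiv]
        rfl

lemma smul_deriv_deriv_add_gradient_of_isSolution {hP : 0 < P}
    {hV : ∀ i j, i ≠ j → IsStrongForce (V i j)} {hg : ∀ v, v ≠ 0 → g v ≠ v}
    {hsymm : ∀ t x, Function.Injective x →
      nbodyPotential V (t + P) (g ∘ x) = nbodyPotential V t x} {Y : ℝ → PiLp 2 fun _ : ι => F}
    (hY : (nbodySystem w hP hV hg hsymm).IsSolution Y) {m : ι → ℝ}
    (hm : ∀ i, m i * w i ^ 2 = 1) (t : ℝ) (i : ι) :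
    m i • deriv (deriv fun τ => rescale w (Y τ) i) t +
      gradient (fun y => nbodyPotential V t (Function.update (rescale w (Y t)) i y))
        (rescale w (Y t) i) = 0 := by
  obtain ⟨hY2, hYmem, -, hYeq⟩ := hY
  set p : PiLp 2 (fun _ : ι => F) →L[ℝ] F := w i • PiLp.proj 2 (fun _ : ι => F) i
  have hderiv : ∀ {Z : ℝ → PiLp 2 fun _ : ι => F}, Differentiable ℝ Z →
      deriv (fun τ => p (Z τ)) = fun τ => p (deriv Z τ) := fun hZ =>
    funext fun τ => (p.hasFDerivAt.comp_hasDerivAt τ (hZ τ).hasDerivAt).deriv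
  have hY1 : ContDiff ℝ 1 (deriv Y) := (contDiff_succ_iff_deriv (n := 1).1 hY2).2.2
  have hdiff : DifferentiableAt ℝ (nbodyPotential V t) (rescale w (Y t)) :=
    (hasFDerivAt_slice isOpen_setOf_injective (contDiffOn_nbodyPotential hV) t
      (hYmem t)).differentiableAt
  have hgrad : (nbodySystem w hP hV hg hsymm).gradW t (Y t) i = w i • gradient
      (fun y => nbodyPotential V t (Function.update (rescale w (Y t)) i y)) (rescale w (Y t) i) :=
    gradient_comp_rescale_apply hdiff i
  have haccel : deriv (deriv fun τ => rescale w (Y τ) i) t =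
      w i • -(nbodySystem w hP hV hg hsymm).gradW t (Y t) i := by
    change deriv (deriv fun τ => p (Y τ)) t = _
    rw [hderiv (hY2.differentiable two_ne_zero), hderiv (hY1.differentiable one_ne_zero)]
    exact congrArg p (hYeq t)
  rw [haccel, hgrad, smul_neg, smul_neg, smul_smul, smul_smul, mul_assoc, ← pow_two, hm,
    one_smul, neg_add_cancel]

end Rescaling

end ZhangZhou

open ZhangZhou in
theorem zhang_zhou_infinitely_many_symmetric_solutions_general {ι F : Type*} [Fintype ι]
    [DecidableEq ι] [Nontrivial ι] [NormedAddCommGroup F] [InnerProductSpace ℝ F]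
    [FiniteDimensional ℝ F] (hF : 2 ≤ Module.finrank ℝ F) {m : ι → ℝ} (hm : ∀ i, 0 < m i)
    {V : ι → ι → ℝ → F → ℝ} (hV : ∀ i j, i ≠ j → IsStrongForce (V i j)) {P : ℝ} (hP : 0 < P)
    {g : F ≃ₗᵢ[ℝ] F} (hg : ∀ v, v ≠ 0 → g v ≠ v)
    (hsymm : ∀ t x, Function.Injective x →
      nbodyPotential V (t + P) (g ∘ x) = nbodyPotential V t x) :
    {x : ℝ → ι → F | ContDiff ℝ 2 x ∧ (∀ t, Function.Injective (x t)) ∧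
      (∀ t, x (t + P) = g ∘ x t) ∧
      ∀ t i, m i • deriv (deriv fun τ => x τ i) t +
        gradient (fun y => nbodyPotential V t (Function.update (x t) i y)) (x t i) =
          0}.Infinite := by
  set w : ι → ℝ := fun i => (√(m i))⁻¹
  have hw : ∀ i, w i ≠ 0 := fun i => inv_ne_zero (Real.sqrt_pos.2 (hm i)).ne'
  have hmw : ∀ i, m i * w i ^ 2 = 1 := fun i => by
    rw [inv_pow, Real.sq_sqrt (hm i).le, mul_inv_cancel₀ (hm i).ne']
  have hinj : Function.Injective fun (Y : ℝ → PiLp 2 fun _ : ι => F) t => rescale w (Y t) :=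
    fun Y Z hYZ => funext fun t => PiLp.ext fun i =>
      smul_right_injective F (hw i) (congrFun (congrFun hYZ t) i)
  refine ((infinite_isSolution_nbodySystem hw hF hP hV hg hsymm).image hinj.injOn).mono ?_
  rintro _ ⟨Y, hY, rfl⟩
  refine ⟨ContDiff.comp (g := rescale w) (by fun_prop) hY.1, hY.2.1, fun t => ?_,
    smul_deriv_deriv_add_gradient_of_isSolution hY hmw⟩
  rw [← rescale_diagonalIsometry, ← hY.2.2.1]

/-- **Theorem (Zhang–Zhou)**. Under (V1)–(V6), for any `T > 0` the time-dependent
N-body type system has infinitely many `(g,T)`-symmetric T-periodic non-collision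
solutions. -/
theorem zhang_zhou_infinitely_many_symmetric_solutions
    (n N : ℕ) (hn : 2 ≤ n) (hN : 2 ≤ N)
    (T : ℝ) (hT : 0 < T)
    (m : Fin N → ℝ) (hm : ∀ i, 0 < m i)
    (V : Fin N → Fin N → ℝ → EuclideanSpace ℝ (Fin n) → ℝ)
    -- (V2): each `V i j` is C² in `(t, ξ)` away from the collision set `ξ = 0`
    (hV_C2 : ∀ i j, i ≠ j →
      ContDiffOn ℝ 2 (fun p : ℝ × EuclideanSpace ℝ (Fin n) => V i j p.1 p.2)
        {p : ℝ × EuclideanSpace ℝ (Fin n) | p.2 ≠ 0})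
    -- the total potential `V(t, x₁, …, x_N) = (1/2) ∑_{i ≠ j} V_{ij}(t, x_i - x_j)`
    (Vtot : ℝ → (Fin N → EuclideanSpace ℝ (Fin n)) → ℝ)
    (hVtot : ∀ t X, Vtot t X =
      (1/2) * ∑ i, ∑ j ∈ univ.filter (fun j => j ≠ i), V i j t (X i - X j))
    -- (V3): `V i j t ξ → -∞` uniformly in `t` as `‖ξ‖ → 0`
    (hV3 : ∀ i j, i ≠ j → ∀ M : ℝ, ∃ δ > (0:ℝ),
      ∀ t : ℝ, ∀ ξ : EuclideanSpace ℝ (Fin n), ξ ≠ 0 → ‖ξ‖ < δ → V i j t ξ < M)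
    -- (V4)
    (hV4 : ∀ i j, i ≠ j → ∀ t : ℝ, ∀ ξ : EuclideanSpace ℝ (Fin n), ξ ≠ 0 →
      V i j t ξ ≤ 0)
    -- (V5): Gordon's strong force condition, uniformly in `t`
    (hV5 : ∀ i j, i ≠ j → ∃ r₀ > (0:ℝ), ∃ U : EuclideanSpace ℝ (Fin n) → ℝ,
      ContDiffOn ℝ 1 U {ξ | 0 < ‖ξ‖ ∧ ‖ξ‖ < r₀} ∧
      Filter.Tendsto U (nhdsWithin 0 {ξ | ξ ≠ 0}) Filter.atBot ∧
      ∀ t : ℝ, ∀ ξ : EuclideanSpace ℝ (Fin n), 0 < ‖ξ‖ → ‖ξ‖ < r₀ →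
        -V i j t ξ ≥ ‖gradient U ξ‖ ^ 2)
    -- (V6): the symmetry by a fixed-point-free isometry of finite order `s`
    (g : EuclideanSpace ℝ (Fin n) ≃ₗᵢ[ℝ] EuclideanSpace ℝ (Fin n))
    (s : ℕ) (hs : 1 ≤ s)
    (hgs : ∀ v : EuclideanSpace ℝ (Fin n), (⇑g)^[s] v = v)
    (hg_fix : ∀ v : EuclideanSpace ℝ (Fin n), v ≠ 0 → g v ≠ v)
    (hV6 : ∀ t : ℝ, ∀ X : Fin N → EuclideanSpace ℝ (Fin n),
      (∀ i j, i ≠ j → X i ≠ X j) →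
      Vtot (t + T / s) (fun i => g (X i)) = Vtot t X) :
    {x : ℝ → Fin N → EuclideanSpace ℝ (Fin n) |
      ContDiff ℝ 2 x ∧
      (∀ t : ℝ, x (t + T) = x t) ∧
      (∀ t : ℝ, ∀ i j, i ≠ j → x t i ≠ x t j) ∧
      (∀ t : ℝ, ∀ i, x (t + T / s) i = g (x t i)) ∧
      (∀ t : ℝ, ∀ i,
        m i • deriv (deriv (fun τ => x τ i)) t
          + gradient (fun y => Vtot t (Function.update (x t) i y)) (x t i)
          = 0)}.Infinite := by
  obtain rfl : Vtot = ZhangZhou.nbodyPotential V := funext₂ hVtot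
  have : Nontrivial (Fin N) := Fin.nontrivial_iff_two_le.2 hN
  have hs0 : (0 : ℝ) < s := by exact_mod_cast hs
  refine (zhang_zhou_infinitely_many_symmetric_solutions_general (by simpa using hn) hm
    (fun i j hij => ⟨hV_C2 i j hij, hV3 i j hij, hV4 i j hij, hV5 i j hij⟩) (div_pos hT hs0)
    hg_fix fun t x hx => hV6 t x fun i j => hx.ne).mono ?_
  rintro x ⟨hx2, hinj, hxg, hxeq⟩
  refine ⟨hx2, fun t => ?_, fun t i j => (hinj t).ne, fun t i => congrFun (hxg t) i, hxeq⟩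
  funext i
  have hiter := (show Function.Semiconj (fun t => x t i) (· + T / s) g from
    fun t => congrFun (hxg t) i).iterate_right s t
  rwa [hgs, add_right_iterate, nsmul_eq_mul, mul_div_cancel₀ _ hs0.ne'] at hiter
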